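/- Every finite simple graph with at least 13 vertices and at most 20 edges is 2-apex. -/

import Mathlib

/-- `H` is a minor of `G`: there are pairwise disjoint nonempty connected branch sets
in `G`, one for each vertex of `H`, with an edge of `G` between the branch sets of
any two vertices adjacent in `H`. -/
def SimpleGraph.IsMinor {W V : Type*} (H : SimpleGraph W) (G : SimpleGraph V) : Prop :=
  ∃ f : W → Set V,
    (∀ w, (f w).Nonempty) ∧
    (∀ w, (G.induce (f w)).Connected) ∧
    (Pairwise fun w₁ w₂ => Disjoint (f w₁) (f w₂)) ∧
    ∀ ⦃w₁ w₂⦄, H.Adj w₁ w₂ → ∃ v₁ ∈ f w₁, ∃ v₂ ∈ f w₂, G.Adj v₁ v₂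

/-- A graph is planar iff it has no `K₅` minor and no `K₃,₃` minor (Kuratowski–Wagner). -/
def SimpleGraph.IsPlanar {V : Type*} (G : SimpleGraph V) : Prop :=
  ¬ (⊤ : SimpleGraph (Fin 5)).IsMinor G ∧
  ¬ (completeBipartiteGraph (Fin 3) (Fin 3)).IsMinor G

/-- A graph is 2-apex if it becomes planar after deleting at most two vertices. -/
def SimpleGraph.TwoApex {V : Type*} (G : SimpleGraph V) : Prop :=
  ∃ s : Set V, s.ncard ≤ 2 ∧ (G.induce sᶜ).IsPlanar


namespace TA

/-- Features of the two forbidden graphs that the arguments use. -/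
structure Pat {W : Type} (H : SimpleGraph W) : Prop where
  three : ∀ w, ∃ a b c, H.Adj w a ∧ H.Adj w b ∧ H.Adj w c ∧ a ≠ b ∧ a ≠ c ∧ b ≠ c
  conn : ∀ w w', w = w' ∨ H.Adj w w' ∨ ∃ z, H.Adj w z ∧ H.Adj z w'
  five : ∃ g : Fin 5 → W, Function.Injective g

theorem pat5 : Pat (⊤ : SimpleGraph (Fin 5)) where
  three := by
    intro w
    fin_cases w
    · exact ⟨1, 2, 3, by decide⟩
    · exact ⟨0, 2, 3, by decide⟩
    · exact ⟨0, 1, 3, by decide⟩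
    · exact ⟨0, 1, 2, by decide⟩
    · exact ⟨0, 1, 2, by decide⟩
  conn := by
    intro w w'
    by_cases h : w = w'
    · exact Or.inl h
    · exact Or.inr (Or.inl h)
  five := ⟨id, fun _ _ h => h⟩

theorem pat33 : Pat (completeBipartiteGraph (Fin 3) (Fin 3)) where
  three := by
    rintro (w | w)
    · exact ⟨Sum.inr 0, Sum.inr 1, Sum.inr 2, by simp⟩
    · exact ⟨Sum.inl 0, Sum.inl 1, Sum.inl 2, by simp⟩
  conn := by
    rintro (w | w) (w' | w')
    · exact Or.inr (Or.inr ⟨Sum.inr 0, by simp⟩)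
    · exact Or.inr (Or.inl (by simp))
    · exact Or.inr (Or.inl (by simp))
    · exact Or.inr (Or.inr ⟨Sum.inl 0, by simp⟩)
  five := ⟨![Sum.inl 0, Sum.inl 1, Sum.inl 2, Sum.inr 0, Sum.inr 1], by decide⟩

/-- Transport of minors along injective homomorphisms. -/
theorem minor_map {W V V' : Type*} {H : SimpleGraph W} {G : SimpleGraph V} {G' : SimpleGraph V'}
    (g : V → V') (hg : Function.Injective g) (h : ∀ u v, G.Adj u v → G'.Adj (g u) (g v))
    (hm : H.IsMinor G) : H.IsMinor G' := by
  obtain ⟨f, h1, h2, h3, h4⟩ := hm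
  refine ⟨fun w => Set.image g (f w), fun w => (h1 w).image g, fun w => ?_, ?_, ?_⟩
  · let φ : (G.induce (f w)) →g (G'.induce (Set.image g (f w))) :=
      { toFun := fun u => ⟨g u.1, u.1, u.2, rfl⟩
        map_rel' := fun {a b} hab => h _ _ hab }
    exact (h2 w).map φ (by rintro ⟨_, u, hu, rfl⟩; exact ⟨⟨u, hu⟩, rfl⟩)
  · intro w w' hw
    exact (Set.disjoint_image_iff hg).2 (h3 hw)
  · intro w w' hw
    obtain ⟨a, ha, b, hb, hab⟩ := h4 hw
    exact ⟨g a, ⟨a, ha, rfl⟩, g b, ⟨b, hb, rfl⟩, h _ _ hab⟩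

/-- A model that avoids `C` survives in any graph that agrees off `C`. -/
theorem minor_avoid {W V : Type*} {H : SimpleGraph W} {G G' : SimpleGraph V} (C : Set V)
    (h : ∀ u v, u ∉ C → v ∉ C → G.Adj u v → G'.Adj u v) (f : W → Set V)
    (h1 : ∀ w, (f w).Nonempty) (h2 : ∀ w, (G.induce (f w)).Connected)
    (h3 : Pairwise fun w₁ w₂ => Disjoint (f w₁) (f w₂))
    (h4 : ∀ ⦃w₁ w₂⦄, H.Adj w₁ w₂ → ∃ v₁ ∈ f w₁, ∃ v₂ ∈ f w₂, G.Adj v₁ v₂)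
    (hC : ∀ w, ∀ u ∈ f w, u ∉ C) : H.IsMinor G' := by
  refine ⟨f, h1, fun w => ?_, h3, ?_⟩
  · refine (h2 w).mono ?_
    rintro ⟨a, ha⟩ ⟨b, hb⟩ hab
    exact h a b (hC w a ha) (hC w b hb) hab
  · intro w w' hw
    obtain ⟨a, ha, b, hb, hab⟩ := h4 hw
    exact ⟨a, ha, b, hb, h _ _ (hC _ _ ha) (hC _ _ hb) hab⟩

theorem minor_contract {W V : Type*} {H : SimpleGraph W} {G G' : SimpleGraph V} (v x : V)
    (h : ∀ a b, a ≠ v → b ≠ v → G.Adj a b → G'.Adj a b)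
    (hx : ∀ b, b ≠ v → b ≠ x → G.Adj v b → G'.Adj x b)
    (f : W → Set V)
    (h2 : ∀ w, (G.induce (f w)).Connected)
    (h1 : ∀ w, (f w).Nonempty)
    (h3 : Pairwise fun w₁ w₂ => Disjoint (f w₁) (f w₂))
    (h4 : ∀ ⦃w₁ w₂⦄, H.Adj w₁ w₂ → ∃ v₁ ∈ f w₁, ∃ v₂ ∈ f w₂, G.Adj v₁ v₂)
    (w0 : W) (hv : v ∈ f w0) (hxw : x ∈ f w0) (hvx : v ≠ x) : H.IsMinor G' := by
  classical
  have hout : ∀ w, w ≠ w0 → v ∉ f w := fun w hw hvw =>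
    Set.disjoint_left.1 (h3 hw) hvw hv
  have hmem : ∀ w u, u ∈ f w → (if u = v then x else u) ∈ f w \ {v} := by
    intro w u hu
    split_ifs with huv
    · subst huv
      have : w = w0 := by
        by_contra hne
        exact hout w hne hu
      subst this
      exact ⟨hxw, fun h => hvx h.symm⟩
    · exact ⟨hu, huv⟩
  refine ⟨fun w => f w \ {v}, ?_, ?_, ?_, ?_⟩
  · intro w
    obtain ⟨u, hu⟩ := h1 w
    exact ⟨_, hmem w u hu⟩
  · intro w
    have key : ∀ a b : f w, (G.induce (f w)).Reachable a b →
        (G'.induce (f w \ {v})).Reachable ⟨_, hmem w a.1 a.2⟩ ⟨_, hmem w b.1 b.2⟩ := by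
      intro a b hab
      rw [SimpleGraph.reachable_iff_reflTransGen] at hab
      induction hab with
      | refl => exact SimpleGraph.Reachable.refl _
      | tail hab hbc ih =>
        rename_i b c
        refine ih.trans ?_
        have hbc' : G.Adj b.1 c.1 := hbc
        by_cases hb : b.1 = v
        · have hc : c.1 ≠ v := fun hc => hbc'.ne (hb.trans hc.symm)
          by_cases hcx : c.1 = x
          · have : (⟨_, hmem w b.1 b.2⟩ : (f w \ {v} : Set V)) = ⟨_, hmem w c.1 c.2⟩ := by
              apply Subtype.ext
              simp [hb, hcx, hvx.symm]
            rw [this]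
          · apply SimpleGraph.Adj.reachable
            show G'.Adj (if b.1 = v then x else b.1) (if c.1 = v then x else c.1)
            rw [if_pos hb, if_neg hc]
            exact hx _ hc hcx (hb ▸ hbc')
        · by_cases hc : c.1 = v
          · by_cases hbx : b.1 = x
            · have : (⟨_, hmem w b.1 b.2⟩ : (f w \ {v} : Set V)) = ⟨_, hmem w c.1 c.2⟩ := by
                apply Subtype.ext
                simp [hc, hbx, hvx.symm]
              rw [this]
            · apply SimpleGraph.Adj.reachable
              show G'.Adj (if b.1 = v then x else b.1) (if c.1 = v then x else c.1)
              rw [if_pos hc, if_neg hb]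
              exact (hx _ hb hbx (hc ▸ hbc'.symm)).symm
          · apply SimpleGraph.Adj.reachable
            show G'.Adj (if b.1 = v then x else b.1) (if c.1 = v then x else c.1)
            rw [if_neg hc, if_neg hb]
            exact h _ _ hb hc hbc'
    obtain ⟨u, hu⟩ := h1 w
    haveI : Nonempty (f w \ {v} : Set V) := ⟨⟨_, hmem w u hu⟩⟩
    refine SimpleGraph.Connected.mk ?_
    rintro ⟨a, ha⟩ ⟨b, hb⟩
    have := key ⟨a, ha.1⟩ ⟨b, hb.1⟩ ((h2 w).preconnected _ _)
    have ha' : a ≠ v := ha.2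
    have hb' : b ≠ v := hb.2
    simpa [ha', hb'] using this
  · intro w w' hw
    exact (h3 hw).mono Set.diff_subset Set.diff_subset
  · intro w w' hw
    obtain ⟨a, ha, b, hb, hab⟩ := h4 hw
    have hww : w ≠ w' := hw.ne
    refine ⟨_, hmem w a ha, _, hmem w' b hb, ?_⟩
    by_cases hav : a = v
    · have hb' : b ≠ v := fun hbv => hab.ne (hav.trans hbv.symm)
      rw [if_pos hav, if_neg hb']
      have hw0 : w = w0 := by
        by_contra hne
        exact hout w hne (hav ▸ ha)
      refine hx b hb' ?_ (hav ▸ hab)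
      rintro rfl
      exact Set.disjoint_left.1 (h3 hww) (hw0 ▸ hxw) hb
    · by_cases hbv : b = v
      · rw [if_neg hav, if_pos hbv]
        have hw0 : w' = w0 := by
          by_contra hne
          exact hout w' hne (hbv ▸ hb)
        refine (hx a hav ?_ (hbv ▸ hab.symm)).symm
        rintro rfl
        exact Set.disjoint_left.1 (h3 hww) ha (hw0 ▸ hxw)
      · rw [if_neg hav, if_neg hbv]
        exact h _ _ hav hbv hab

/-- A vertex of a connected set with another element has a neighbour in it. -/
theorem exists_nbr {V : Type*} {G : SimpleGraph V} {s : Set V} (hc : (G.induce s).Connected)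
    {v u : V} (hv : v ∈ s) (hu : u ∈ s) (hne : v ≠ u) : ∃ x ∈ s, G.Adj v x := by
  have := hc.preconnected ⟨v, hv⟩ ⟨u, hu⟩
  rw [SimpleGraph.reachable_iff_reflTransGen] at this
  rcases Relation.ReflTransGen.cases_head this with h | ⟨c, hvc, -⟩
  · exact absurd (congrArg Subtype.val h) hne
  · exact ⟨c.1, c.2, hvc⟩

/-- `G'` contains the graph obtained from `G` by suppressing `v`, whose neighbours are among
`x` and `y`. -/
structure Sup {V : Type*} (G G' : SimpleGraph V) (v x y : V) : Prop where
  nb : ∀ u, G.Adj v u → u = x ∨ u = y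
  off : ∀ a b, a ≠ v → b ≠ v → G.Adj a b → G'.Adj a b
  xy : x = y ∨ G'.Adj x y

theorem minor_sup {W : Type} {V : Type*} {H : SimpleGraph W} (hH : Pat H) {G G' : SimpleGraph V}
    {v x y : V} (hs : Sup G G' v x y) (hm : H.IsMinor G) : H.IsMinor G' := by
  obtain ⟨f, h1, h2, h3, h4⟩ := hm
  by_cases hv : ∃ w, v ∈ f w
  · obtain ⟨w, hw⟩ := hv
    by_cases hu : ∃ u ∈ f w, v ≠ u
    · obtain ⟨u, hu, hne⟩ := hu
      obtain ⟨z, hz, hvz⟩ := exists_nbr (h2 w) hw hu hne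
      refine minor_contract v z hs.off ?_ f h2 h1 h3 h4 w hw hz hvz.ne
      intro b hbv hbz hvb
      rcases hs.xy with hxy | hxy
      · rcases hs.nb z hvz with r | r <;> rcases hs.nb b hvb with r' | r' <;>
          exact absurd (by rw [r, r']; try rw [hxy]) hbz
      · rcases hs.nb z hvz with r | r <;> rcases hs.nb b hvb with r' | r'
        · exact absurd (r'.trans r.symm) hbz
        · rw [r, r']; exact hxy
        · rw [r, r']; exact hxy.symm
        · exact absurd (r'.trans r.symm) hbz
    · push Not at hu
      exfalso
      obtain ⟨a, b, c, ha, hb, hc, hab, hac, hbc⟩ := hH.three w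
      have key : ∀ z, H.Adj w z → ∃ q ∈ f z, G.Adj v q := by
        intro z hz
        obtain ⟨p, hp, q, hq, hpq⟩ := h4 hz
        exact ⟨q, hq, (hu p hp) ▸ hpq⟩
      obtain ⟨p, hp, hp'⟩ := key a ha
      obtain ⟨q, hq, hq'⟩ := key b hb
      obtain ⟨r, hr, hr'⟩ := key c hc
      have d1 : p ≠ q := fun e => Set.disjoint_left.1 (h3 hab) hp (e ▸ hq)
      have d2 : p ≠ r := fun e => Set.disjoint_left.1 (h3 hac) hp (e ▸ hr)
      have d3 : q ≠ r := fun e => Set.disjoint_left.1 (h3 hbc) hq (e ▸ hr)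
      rcases hs.nb p hp' with rfl | rfl <;> rcases hs.nb q hq' with rfl | rfl <;>
        rcases hs.nb r hr' with rfl | rfl <;> simp_all
  · push Not at hv
    refine minor_avoid {v} ?_ f h1 h2 h3 h4 ?_
    · intro a b ha hb hab
      exact hs.off a b ha hb hab
    · intro w u hu huv
      exact hv w ((Set.mem_singleton_iff.1 huv) ▸ hu)

/-- A union of components with at most four vertices is irrelevant. -/
theorem minor_closed {W : Type} {V : Type*} {H : SimpleGraph W} (hH : Pat H)
    {G G' : SimpleGraph V} (C : Finset V) (hC4 : C.card ≤ 4)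
    (hcl : ∀ u ∈ C, ∀ v, G.Adj u v → v ∈ C)
    (h : ∀ u v, u ∉ C → v ∉ C → G.Adj u v → G'.Adj u v) (hm : H.IsMinor G) : H.IsMinor G' := by
  obtain ⟨f, h1, h2, h3, h4⟩ := hm
  have hin : ∀ w u, u ∈ f w → u ∈ C → ∀ z ∈ f w, z ∈ C := by
    intro w u hu huC z hz
    have := (h2 w).preconnected ⟨u, hu⟩ ⟨z, hz⟩
    rw [SimpleGraph.reachable_iff_reflTransGen] at this
    have key : ∀ b : f w, Relation.ReflTransGen (G.induce (f w)).Adj ⟨u, hu⟩ b → b.1 ∈ C := by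
      intro b hb
      induction hb with
      | refl => exact huC
      | tail _ hbc ih => exact hcl _ ih _ hbc
    exact key _ this
  by_cases hmeet : ∃ w u, u ∈ f w ∧ u ∈ C
  · exfalso
    obtain ⟨w, u, hu, huC⟩ := hmeet
    have hstep : ∀ a b, H.Adj a b → (∀ z ∈ f a, z ∈ C) → ∀ z ∈ f b, z ∈ C := by
      intro a b hab ha
      obtain ⟨p, hp, q, hq, hpq⟩ := h4 hab
      exact hin b q hq (hcl p (ha p hp) q hpq)
    have hw := hin w u hu huC
    have hall : ∀ w', ∀ z ∈ f w', z ∈ C := by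
      intro w'
      rcases hH.conn w w' with rfl | h' | ⟨z, hz, hz'⟩
      · exact hw
      · exact hstep _ _ h' hw
      · exact hstep _ _ hz' (hstep _ _ hz hw)
    choose p hp using h1
    obtain ⟨g, hg⟩ := hH.five
    have hinj : Function.Injective (fun i => p (g i)) := by
      intro i j hij
      by_contra hne
      have := h3 (fun e => hne (hg e) : g i ≠ g j)
      have hij' : p (g i) = p (g j) := hij
      exact Set.disjoint_left.1 this (hp (g i)) (hij' ▸ hp (g j))
    have := Finset.card_le_card_of_injOn (s := (Finset.univ : Finset (Fin 5))) (t := C)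
      (fun i => p (g i)) (fun i _ => hall _ _ (hp _)) hinj.injOn
    simp at this
    omega
  · push Not at hmeet
    exact minor_avoid (C : Set V) (fun u v hu hv => h u v hu hv) f h1 h2 h3 h4
      (fun w u hu => hmeet w u hu)


end TA

namespace TA

set_option linter.unusedSimpArgs false
set_option linter.unusedVariables false

/-- Delete a vertex (it becomes isolated). -/
def del (G : SimpleGraph ℕ) (a : ℕ) : SimpleGraph ℕ where
  Adj u v := G.Adj u v ∧ u ≠ a ∧ v ≠ a
  symm := ⟨fun _ _ h => ⟨h.1.symm, h.2.2, h.2.1⟩⟩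
  loopless := ⟨fun _ h => h.1.ne rfl⟩

/-- Delete `t` and join `x` and `y`. -/
def sup (G : SimpleGraph ℕ) (t x y : ℕ) : SimpleGraph ℕ where
  Adj u v := (G.Adj u v ∧ u ≠ t ∧ v ≠ t) ∨ (x ≠ y ∧ (u = x ∧ v = y ∨ u = y ∧ v = x))
  symm := ⟨fun _ _ h => by
    rcases h with h | ⟨h, h' | h'⟩
    · exact Or.inl ⟨h.1.symm, h.2.2, h.2.1⟩
    · exact Or.inr ⟨h, Or.inr ⟨h'.2, h'.1⟩⟩
    · exact Or.inr ⟨h, Or.inl ⟨h'.2, h'.1⟩⟩⟩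
  loopless := ⟨fun _ h => by
    rcases h with h | ⟨h, h' | h'⟩
    · exact h.1.ne rfl
    · exact h (h'.1.symm.trans h'.2)
    · exact h (h'.2.symm.trans h'.1)⟩

theorem del_adj {G : SimpleGraph ℕ} {a u v : ℕ} :
    (del G a).Adj u v ↔ G.Adj u v ∧ u ≠ a ∧ v ≠ a := Iff.rfl

theorem sup_adj {G : SimpleGraph ℕ} {t x y u v : ℕ} :
    (sup G t x y).Adj u v ↔
    (G.Adj u v ∧ u ≠ t ∧ v ≠ t) ∨ (x ≠ y ∧ (u = x ∧ v = y ∨ u = y ∧ v = x)) := Iff.rfl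

def Good : ℕ → SimpleGraph ℕ → Prop
  | 0, G => G.IsPlanar
  | k + 1, G => ∃ a, Good k (del G a)

theorem planar_mono {G G' : SimpleGraph ℕ} (e : ℕ → ℕ) (he : Function.Injective e)
    (h : ∀ u v, G.Adj u v → G'.Adj (e u) (e v))
    (hp : G'.IsPlanar) : G.IsPlanar :=
  ⟨fun hm => hp.1 (minor_map e he h hm), fun hm => hp.2 (minor_map e he h hm)⟩

theorem good_perm {k : ℕ} {G G' : SimpleGraph ℕ} (e : Equiv.Perm ℕ)
    (h : ∀ u v, G.Adj u v → G'.Adj (e u) (e v)) (hp : Good k G') : Good k G := by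
  induction k generalizing G G' with
  | zero => exact planar_mono e e.injective h hp
  | succ k ih =>
    obtain ⟨a, ha⟩ := hp
    refine ⟨e.symm a, ih ?_ ha⟩
    rintro u v ⟨huv, hu, hv⟩
    refine ⟨h _ _ huv, fun hh => hu ?_, fun hh => hv ?_⟩
    · rw [← hh]; simp
    · rw [← hh]; simp

theorem good_mono {k : ℕ} {G G' : SimpleGraph ℕ}
    (h : ∀ u v, G.Adj u v → G'.Adj u v) (hp : Good k G') : Good k G :=
  good_perm (Equiv.refl ℕ) h hp

theorem good_sup {k : ℕ} {G G' : SimpleGraph ℕ} {v x y : ℕ} (hs : Sup G G' v x y)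
    (hp : Good k G') : Good k G := by
  induction k generalizing G G' x y with
  | zero => exact ⟨fun hm => hp.1 (minor_sup pat5 hs hm), fun hm => hp.2 (minor_sup pat33 hs hm)⟩
  | succ k ih =>
    obtain ⟨a, ha⟩ := hp
    refine ⟨a, ?_⟩
    have hoff : ∀ c b, c ≠ v → b ≠ v → (del G a).Adj c b → (del G' a).Adj c b :=
      fun c b hc hb h => ⟨hs.off c b hc hb h.1, h.2⟩
    by_cases hav : a = v
    · subst hav
      exact good_mono (G' := del G' a) (fun u w h => ⟨hs.off _ _ h.2.1 h.2.2 h.1, h.2⟩) ha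
    by_cases hax : a = x
    · subst hax
      refine ih (x := y) (y := y) ⟨fun u hu => ?_, hoff, Or.inl rfl⟩ ha
      exact Or.inl ((hs.nb u hu.1).resolve_left hu.2.2)
    by_cases hay : a = y
    · subst hay
      refine ih (x := x) (y := x) ⟨fun u hu => ?_, hoff, Or.inl rfl⟩ ha
      exact Or.inl ((hs.nb u hu.1).resolve_right hu.2.2)
    · refine ih (x := x) (y := y) ⟨fun u hu => hs.nb u hu.1, hoff, ?_⟩ ha
      exact hs.xy.imp id (fun h => ⟨h, Ne.symm hax, Ne.symm hay⟩)

theorem good_closed {k : ℕ} {G G' : SimpleGraph ℕ} (C : Finset ℕ) (hC4 : C.card ≤ 4)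
    (hcl : ∀ u ∈ C, ∀ v, G.Adj u v → v ∈ C)
    (h : ∀ u v, u ∉ C → v ∉ C → G.Adj u v → G'.Adj u v)
    (hp : Good k G') : Good k G := by
  induction k generalizing G G' with
  | zero => exact ⟨fun hm => hp.1 (minor_closed pat5 C hC4 hcl h hm),
      fun hm => hp.2 (minor_closed pat33 C hC4 hcl h hm)⟩
  | succ k ih =>
    obtain ⟨a, ha⟩ := hp
    exact ⟨a, ih (G' := del G' a) (fun u hu v huv => hcl u hu v huv.1)
      (fun u v hu hv huv => ⟨h u v hu hv huv.1, huv.2⟩) ha⟩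

theorem good_sup' {k : ℕ} {G : SimpleGraph ℕ} {t x y : ℕ}
    (nb : ∀ u, G.Adj t u → u = x ∨ u = y) (hp : Good k (sup G t x y)) : Good k G := by
  refine good_sup (v := t) (x := x) (y := y) ⟨nb, fun a b ha hb h => Or.inl ⟨h, ha, hb⟩, ?_⟩ hp
  by_cases hxy : x = y
  · exact Or.inl hxy
  · exact Or.inr (Or.inr ⟨hxy, Or.inl ⟨rfl, rfl⟩⟩)

theorem good_pend {k : ℕ} {G : SimpleGraph ℕ} {t x : ℕ}
    (nb : ∀ u, G.Adj t u → u = x) (hp : Good k (del G t)) : Good k G :=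
  good_sup (G' := del G t) (v := t) (x := x) (y := x)
    ⟨fun u hu => Or.inl (nb u hu), fun a b ha hb h => ⟨h, ha, hb⟩, Or.inl rfl⟩ hp

/-! Edge bounds. -/

def EB (G : SimpleGraph ℕ) (k : ℕ) : Prop := G.edgeSet.Finite ∧ G.edgeSet.ncard ≤ k

theorem EB.mono {G : SimpleGraph ℕ} {k l : ℕ} (h : EB G k) (hl : k ≤ l) : EB G l :=
  ⟨h.1, h.2.trans hl⟩

/-- Removing the edges `D` and adding at most the edges `E`. -/
theorem eb_change {G G' : SimpleGraph ℕ} {k : ℕ} (h : EB G k) (D E : Finset (Sym2 ℕ))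
    (hD : ∀ e ∈ D, e ∈ G.edgeSet)
    (hE : ∀ e ∈ G'.edgeSet, e ∈ E ∨ e ∈ G.edgeSet ∧ e ∉ D) :
    D.card ≤ k ∧ EB G' (k - D.card + E.card) := by
  classical
  obtain ⟨hf, hk⟩ := h
  rw [Set.ncard_eq_toFinset_card _ hf] at hk
  have h1 : D ⊆ hf.toFinset := fun e he => hf.mem_toFinset.2 (hD e he)
  have h2 : G'.edgeSet ⊆ ((E ∪ (hf.toFinset \ D) : Finset (Sym2 ℕ)) : Set (Sym2 ℕ)) := by
    intro e he
    rcases hE e he with h | ⟨h, h'⟩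
    · exact Finset.mem_coe.2 (Finset.mem_union_left _ h)
    · exact Finset.mem_coe.2 (Finset.mem_union_right _
        (Finset.mem_sdiff.2 ⟨hf.mem_toFinset.2 h, h'⟩))
  have h3 := Finset.card_le_card h1
  refine ⟨h3.trans hk, (Finset.finite_toSet _).subset h2, ?_⟩
  refine (Set.ncard_le_ncard h2 (Finset.finite_toSet _)).trans ?_
  rw [Set.ncard_coe_finset]
  refine (Finset.card_union_le _ _).trans ?_
  rw [Finset.card_sdiff_of_subset h1]
  omega

theorem eb_sub {G G' : SimpleGraph ℕ} {k : ℕ} (h : EB G k)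
    (hs : ∀ u v, G'.Adj u v → G.Adj u v) : EB G' k := by
  have := (eb_change (G' := G') h ∅ ∅ (by simp) (fun e he => Or.inr ⟨?_, by simp⟩)).2
  · simpa using this
  · induction e with
    | _ u v => exact hs u v he

open Classical in
noncomputable def N (G : SimpleGraph ℕ) (v : ℕ) : Finset ℕ :=
  if h : (G.neighborSet v).Finite then h.toFinset else ∅

noncomputable def deg (G : SimpleGraph ℕ) (v : ℕ) : ℕ := (N G v).card

theorem EB.fin {G : SimpleGraph ℕ} {k : ℕ} (h : EB G k) (v : ℕ) : (G.neighborSet v).Finite := by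
  refine Set.Finite.of_injOn (f := fun u => s(v, u)) (t := G.edgeSet) ?_ ?_ h.1
  · intro u hu
    exact hu
  · intro a _ b _ hab
    exact Sym2.congr_right.1 hab

theorem EB.mem {G : SimpleGraph ℕ} {k : ℕ} (h : EB G k) {v u : ℕ} : u ∈ N G v ↔ G.Adj v u := by
  unfold N
  rw [dif_pos (h.fin v), Set.Finite.mem_toFinset]
  rfl

theorem N_congr {G G' : SimpleGraph ℕ} {v w : ℕ} (h : ∀ u, G.Adj v u ↔ G'.Adj w u) :
    N G v = N G' w := by
  have : G.neighborSet v = G'.neighborSet w := by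
    ext u; exact h u
  unfold N
  split_ifs with h1 h2 h2
  · ext u
    rw [Set.Finite.mem_toFinset, Set.Finite.mem_toFinset, this]
  · exact absurd (this ▸ h1) h2
  · exact absurd (this ▸ h2) h1
  · rfl

/-- removing a finite star of known neighbours -/
theorem eb_del {G : SimpleGraph ℕ} {k : ℕ} (h : EB G k) (a : ℕ) :
    deg G a ≤ k ∧ EB (del G a) (k - deg G a) := by
  classical
  have hc : ((N G a).image (fun u => s(a, u))).card = deg G a := by
    rw [Finset.card_image_of_injOn]; rfl
    intro x _ y _ hxy
    exact Sym2.congr_right.1 hxy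
  have := eb_change (G' := del G a) h ((N G a).image (fun u => s(a, u))) ∅ ?_ ?_
  · simpa [hc] using this
  · intro e he
    obtain ⟨u, hu, rfl⟩ := Finset.mem_image.1 he
    exact h.mem.1 hu
  · intro e he
    right
    induction e with
    | _ u v =>
      obtain ⟨h1, h2, h3⟩ := he
      refine ⟨h1, fun hh => ?_⟩
      obtain ⟨w, _, hw⟩ := Finset.mem_image.1 hh
      rcases Sym2.eq_iff.1 hw with ⟨r, _⟩ | ⟨r, _⟩
      · exact h2 r.symm
      · exact h3 r.symm

theorem eb_sup {G : SimpleGraph ℕ} {k : ℕ} (h : EB G k) {t x y : ℕ} (hxy : x ≠ y)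
    (hx : G.Adj t x) (hy : G.Adj t y) : 2 ≤ k ∧ EB (sup G t x y) (k - 1) := by
  classical
  have hc : ({s(t, x), s(t, y)} : Finset (Sym2 ℕ)).card = 2 := by
    rw [Finset.card_pair]
    intro hh
    exact hxy (Sym2.congr_right.1 hh)
  have := eb_change (G' := sup G t x y) h {s(t, x), s(t, y)} {s(x, y)} ?_ ?_
  · rw [hc, Finset.card_singleton] at this
    have e : k - 2 + 1 = k - 1 := by omega
    rw [e] at this
    exact this
  · intro e he
    simp only [Finset.mem_insert, Finset.mem_singleton] at he
    rcases he with rfl | rfl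
    · exact hx
    · exact hy
  · intro e he
    induction e with
    | _ u v =>
      rw [SimpleGraph.mem_edgeSet, sup_adj] at he
      rcases he with ⟨h1, h2, h3⟩ | ⟨_, h' | h'⟩
      · right
        refine ⟨h1, fun hh => ?_⟩
        simp only [Finset.mem_insert, Finset.mem_singleton] at hh
        rcases hh with hh | hh <;> rcases Sym2.eq_iff.1 hh with ⟨r, r'⟩ | ⟨r, r'⟩
        · exact h2 r
        · exact h3 r'
        · exact h2 r
        · exact h3 r'
      · left
        rw [h'.1, h'.2]; simp
      · left
        rw [h'.1, h'.2, Sym2.eq_swap]; simp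

theorem eb_dup {G : SimpleGraph ℕ} {k : ℕ} (h : EB G k) {t x y : ℕ} (hxy : G.Adj x y)
    (hx : G.Adj t x) (hy : G.Adj t y) : 2 ≤ k ∧ EB (sup G t x y) (k - 2) := by
  classical
  have hc : ({s(t, x), s(t, y)} : Finset (Sym2 ℕ)).card = 2 := by
    rw [Finset.card_pair]
    intro hh
    exact hxy.ne (Sym2.congr_right.1 hh)
  have := eb_change (G' := sup G t x y) h {s(t, x), s(t, y)} ∅ ?_ ?_
  · rw [hc] at this
    simpa using this
  · intro e he
    simp only [Finset.mem_insert, Finset.mem_singleton] at he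
    rcases he with rfl | rfl
    · exact hx
    · exact hy
  · intro e he
    right
    induction e with
    | _ u v =>
      simp only [Finset.mem_insert, Finset.mem_singleton]
      rw [SimpleGraph.mem_edgeSet, sup_adj] at he
      rcases he with ⟨h1, h2, h3⟩ | ⟨_, h' | h'⟩
      · refine ⟨h1, fun hh => ?_⟩
        rcases hh with hh | hh <;> rcases Sym2.eq_iff.1 hh with ⟨r, r'⟩ | ⟨r, r'⟩
        · exact h2 r
        · exact h3 r'
        · exact h2 r
        · exact h3 r'
      · rw [h'.1, h'.2]
        refine ⟨hxy, fun hh => ?_⟩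
        rcases hh with hh | hh <;> rcases Sym2.eq_iff.1 hh with ⟨r, r'⟩ | ⟨r, r'⟩
        · exact hx.ne r.symm
        · exact hy.ne r'.symm
        · exact hx.ne r.symm
        · exact hy.ne r'.symm
      · rw [h'.1, h'.2]
        refine ⟨hxy.symm, fun hh => ?_⟩
        rcases hh with hh | hh <;> rcases Sym2.eq_iff.1 hh with ⟨r, r'⟩ | ⟨r, r'⟩
        · exact hy.ne r.symm
        · exact hx.ne r'.symm
        · exact hy.ne r.symm
        · exact hx.ne r'.symm

theorem handshake_sum {G : SimpleGraph ℕ} {k : ℕ} (h : EB G k) (S : Finset ℕ) :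
    ∑ v ∈ S, deg G v ≤ 2 * k := by
  classical
  have h1 : ∑ v ∈ S, deg G v ≤ (S.sigma (fun v => N G v)).card := by
    rw [Finset.card_sigma]
    exact le_rfl
  have h2 := Finset.card_le_mul_card_image_of_maps_to
    (s := S.sigma (fun v => N G v)) (t := h.1.toFinset) (f := fun p => s(p.1, p.2)) (n := 2) ?_ ?_
  · have h3 := h.2
    rw [Set.ncard_eq_toFinset_card _ h.1] at h3
    refine h1.trans (h2.trans ?_)
    omega
  · rintro ⟨a, b⟩ hab
    rw [Set.Finite.mem_toFinset]
    exact h.mem.1 (Finset.mem_sigma.1 hab).2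
  · intro e _
    induction e with
    | _ u v =>
      refine (Finset.card_le_card (t := {⟨u, v⟩, ⟨v, u⟩}) ?_).trans Finset.card_le_two
      rintro ⟨a, b⟩ hab
      rcases Sym2.eq_iff.1 (Finset.mem_filter.1 hab).2 with ⟨r, r'⟩ | ⟨r, r'⟩
      · simp at r r'; subst r; subst r'; simp
      · simp at r r'; subst r; subst r'; simp

theorem handshake {G : SimpleGraph ℕ} {k : ℕ} (h : EB G k) (S : Finset ℕ) (d : ℕ)
    (hS : ∀ v ∈ S, d ≤ deg G v) : d * S.card ≤ 2 * k := by
  refine le_trans ?_ (handshake_sum h S)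
  rw [mul_comm, ← smul_eq_mul]
  exact Finset.card_nsmul_le_sum _ _ _ hS

theorem eb_sum {G : SimpleGraph ℕ} {k : ℕ} (h : EB G k) (S : Finset ℕ)
    (hsup : ∀ u v, G.Adj u v → u ∈ S) : EB G ((∑ v ∈ S, deg G v) / 2) := by
  classical
  have h1 : (S.sigma (fun v => N G v)).card ≤ ∑ v ∈ S, deg G v := by
    rw [Finset.card_sigma]
    exact le_rfl
  have h2 : h.1.toFinset.card * 2 ≤ (S.sigma (fun v => N G v)).card := by
    rw [Finset.card_eq_sum_card_fiberwise (f := fun p : (_ : ℕ) × ℕ => s(p.1, p.2)) (t := h.1.toFinset),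
      ← smul_eq_mul]
    · refine Finset.card_nsmul_le_sum _ _ _ ?_
      intro e he
      rw [Set.Finite.mem_toFinset] at he
      induction e with
      | _ u v =>
        have huv : G.Adj u v := he
        have : ({⟨u, v⟩, ⟨v, u⟩} : Finset ((_ : ℕ) × ℕ)).card = 2 := by
          rw [Finset.card_pair]
          intro hh
          exact huv.ne (by simpa using congrArg Sigma.fst hh)
        rw [← this]
        apply Finset.card_le_card
        intro p hp
        simp only [Finset.mem_insert, Finset.mem_singleton] at hp
        rcases hp with rfl | rfl
        · simp [Finset.mem_sigma, h.mem, huv, hsup u v huv]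
        · simp [Finset.mem_sigma, h.mem, huv.symm, hsup v u huv.symm, Sym2.eq_swap]
    · rintro ⟨a, b⟩ hab
      simp only [Set.Finite.coe_toFinset]
      exact h.mem.1 (Finset.mem_sigma.1 hab).2
  refine ⟨h.1, ?_⟩
  rw [Set.ncard_eq_toFinset_card _ h.1]
  omega

/-- Few vertices of bounded degree give few edges. -/
theorem eb_of_deg {G : SimpleGraph ℕ} {k : ℕ} (h : EB G k) (S : Finset ℕ) (d : ℕ)
    (hsup : ∀ u v, G.Adj u v → u ∈ S) (hS : ∀ v ∈ S, deg G v ≤ d) : EB G (d * S.card / 2) := by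
  refine (eb_sum h S hsup).mono (Nat.div_le_div_right ?_)
  rw [mul_comm, ← smul_eq_mul]
  exact Finset.sum_le_card_nsmul _ _ _ hS

theorem eb_del_le {G : SimpleGraph ℕ} {k : ℕ} (h : EB G k) (a : ℕ) : EB (del G a) k :=
  (eb_del h a).2.mono (Nat.sub_le _ _)

theorem eb_sup_le {G : SimpleGraph ℕ} {k : ℕ} (h : EB G k) {t x y : ℕ} :
    EB (sup G t x y) (k + 1) := by
  have := (eb_change (G' := sup G t x y) h ∅ {s(x, y)} (by simp) ?_).2
  · simpa using this
  · intro e he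
    induction e with
    | _ u v =>
      rw [SimpleGraph.mem_edgeSet, sup_adj] at he
      rcases he with ⟨h1, h2, h3⟩ | ⟨_, h' | h'⟩
      · exact Or.inr ⟨h1, by simp⟩
      · left
        rw [h'.1, h'.2]; simp
      · left
        rw [h'.1, h'.2, Sym2.eq_swap]; simp

theorem N_del {G : SimpleGraph ℕ} {k : ℕ} (h : EB G k) {a v : ℕ} (hv : v ≠ a) :
    N (del G a) v = (N G v).erase a := by
  ext u
  rw [(eb_del_le h a).mem, Finset.mem_erase, h.mem, del_adj]
  tauto

theorem deg_del_of_not {G : SimpleGraph ℕ} {k : ℕ} (h : EB G k) {a v : ℕ} (hv : v ≠ a)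
    (ha : ¬ G.Adj v a) : deg (del G a) v = deg G v := by
  unfold deg
  rw [N_del h hv, Finset.erase_eq_of_notMem]
  rwa [h.mem]

theorem deg_del_of_adj {G : SimpleGraph ℕ} {k : ℕ} (h : EB G k) {a v : ℕ}
    (ha : G.Adj v a) : deg (del G a) v + 1 = deg G v := by
  unfold deg
  rw [N_del h ha.ne, Finset.card_erase_add_one]
  rwa [h.mem]

theorem deg_pos {G : SimpleGraph ℕ} {k : ℕ} (h : EB G k) {a v : ℕ}
    (ha : G.Adj v a) : 0 < deg G v := Finset.card_pos.2 ⟨a, h.mem.2 ha⟩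

theorem deg_zero {G : SimpleGraph ℕ} {k : ℕ} (h : EB G k) {v : ℕ} (hd : deg G v = 0) (u : ℕ) :
    ¬ G.Adj v u := fun hu => by
  have := deg_pos h hu
  omega

/-- nonisolated vertices have at least three neighbours -/
def R3 (G : SimpleGraph ℕ) : Prop := ∀ v u, G.Adj v u → 3 ≤ deg G v

theorem nb_of_two {G : SimpleGraph ℕ} {k : ℕ} (h : EB G k) {t : ℕ} (hd : deg G t = 2) :
    ∃ x y, x ≠ y ∧ G.Adj t x ∧ G.Adj t y ∧ ∀ u, G.Adj t u → u = x ∨ u = y := by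
  obtain ⟨x, y, hxy, hN⟩ := Finset.card_eq_two.1 hd
  have hm : ∀ u, G.Adj t u ↔ u = x ∨ u = y := by
    intro u
    rw [← h.mem, hN]; simp
  exact ⟨x, y, hxy, (hm x).2 (Or.inl rfl), (hm y).2 (Or.inr rfl), fun u => (hm u).1⟩

theorem reduced {k m : ℕ} (hall : ∀ G, EB G m → Good k G) {G : SimpleGraph ℕ}
    (h : EB G (m + 1)) (hG : ¬ Good k G) : R3 G := by
  intro v u hvu
  by_contra hlt
  have hp := deg_pos h hvu
  have : deg G v = 1 ∨ deg G v = 2 := by omega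
  rcases this with h1 | h2
  · apply hG
    obtain ⟨x, hx⟩ := Finset.card_eq_one.1 h1
    refine good_pend (t := v) (x := x) ?_ (hall _ ?_)
    · intro w hw
      have := h.mem.2 hw
      rw [hx] at this
      simpa using this
    · have := (eb_del h v).2
      rw [h1] at this
      exact this
  · apply hG
    obtain ⟨x, y, hxy, hx, hy, hm⟩ := nb_of_two h h2
    exact good_sup' hm (hall _ (eb_sup h hxy hx hy).2)

theorem deg_sup {G : SimpleGraph ℕ} {k : ℕ} (h : EB G k) {t x y : ℕ} (hxy : x ≠ y)
    (hx : G.Adj t x) (hy : G.Adj t y) (hm : ∀ u, G.Adj t u → u = x ∨ u = y)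
    (hn : ¬ G.Adj x y) {v : ℕ} (hv : v ≠ t) : deg (sup G t x y) v = deg G v := by
  have hs := eb_sup_le h (t := t) (x := x) (y := y)
  by_cases hvx : v = x
  · subst hvx
    have : N (sup G t v y) v = insert y ((N G v).erase t) := by
      ext u
      rw [hs.mem, sup_adj, Finset.mem_insert, Finset.mem_erase, h.mem]
      constructor
      · rintro (r | ⟨r, r' | r'⟩)
        · exact Or.inr ⟨r.2.2, r.1⟩
        · exact Or.inl r'.2
        · exact absurd r'.1 r
      · rintro (r | r)
        · exact Or.inr ⟨hxy, Or.inl ⟨rfl, r⟩⟩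
        · exact Or.inl ⟨r.2, hv, r.1⟩
    unfold deg
    rw [this, Finset.card_insert_of_notMem, Finset.card_erase_add_one]
    · rw [h.mem]; exact hx.symm
    · intro hh
      exact hn (h.mem.1 (Finset.mem_of_mem_erase hh))
  by_cases hvy : v = y
  · subst hvy
    have : N (sup G t x v) v = insert x ((N G v).erase t) := by
      ext u
      rw [hs.mem, sup_adj, Finset.mem_insert, Finset.mem_erase, h.mem]
      constructor
      · rintro (r | ⟨r, r' | r'⟩)
        · exact Or.inr ⟨r.2.2, r.1⟩
        · exact absurd r'.1.symm r
        · exact Or.inl r'.2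
      · rintro (r | r)
        · exact Or.inr ⟨hxy, Or.inr ⟨rfl, r⟩⟩
        · exact Or.inl ⟨r.2, hv, r.1⟩
    unfold deg
    rw [this, Finset.card_insert_of_notMem, Finset.card_erase_add_one]
    · rw [h.mem]; exact hy.symm
    · intro hh
      exact hn (h.mem.1 (Finset.mem_of_mem_erase hh)).symm
  · unfold deg
    congr 1
    apply N_congr
    intro u
    rw [sup_adj]
    constructor
    · rintro (r | ⟨r, r' | r'⟩)
      · exact r.1
      · exact absurd r'.1 hvx
      · exact absurd r'.1 hvy
    · intro hu
      refine Or.inl ⟨hu, hv, ?_⟩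
      rintro rfl
      exact (hm v hu.symm).elim hvx hvy

theorem deg_sup_dup {G : SimpleGraph ℕ} {t x y : ℕ}
    (hn : G.Adj x y) (hx : x ≠ t) (hy : y ≠ t) (v : ℕ) :
    deg (sup G t x y) v = deg (del G t) v := by
  unfold deg
  congr 1
  apply N_congr
  intro u
  rw [sup_adj, del_adj]
  constructor
  · rintro (r | ⟨r, r' | r'⟩)
    · exact r
    · rw [r'.1, r'.2]; exact ⟨hn, hx, hy⟩
    · rw [r'.1, r'.2]; exact ⟨hn.symm, hy, hx⟩
  · exact Or.inl

end TA

namespace TA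

abbrev K5 : SimpleGraph (Fin 5) := ⊤

abbrev K33 : SimpleGraph (Fin 3 ⊕ Fin 3) := completeBipartiteGraph (Fin 3) (Fin 3)

abbrev K33e : SimpleGraph (Fin 3 ⊕ Fin 3) where
  Adj a b := K33.Adj a b ∨ (a = Sum.inl 0 ∧ b = Sum.inl 1) ∨ (a = Sum.inl 1 ∧ b = Sum.inl 0)
  symm := ⟨by
    rintro a b (h | h | h)
    · exact Or.inl h.symm
    · exact Or.inr (Or.inr ⟨h.2, h.1⟩)
    · exact Or.inr (Or.inl ⟨h.2, h.1⟩)⟩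
  loopless := ⟨by
    rintro a (h | h | h)
    · exact h.ne rfl
    · exact absurd (h.1.symm.trans h.2) (by decide)
    · exact absurd (h.1.symm.trans h.2) (by decide)⟩

instance : DecidableRel K33.Adj := fun a b => by
  unfold K33 completeBipartiteGraph
  infer_instance

instance : DecidableRel K33e.Adj := fun a b => by
  unfold K33e
  infer_instance

theorem card5 : K5.edgeFinset.card = 10 := by decide +kernel
theorem card33 : K33.edgeFinset.card = 9 := by decide +kernel
theorem card33e : K33e.edgeFinset.card = 10 := by decide +kernel

theorem all_edges {G : SimpleGraph ℕ} {k : ℕ} (h : EB G k) (D : Finset (Sym2 ℕ))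
    (hD : ∀ e ∈ D, e ∈ G.edgeSet) (hc : k ≤ D.card) (e : Sym2 ℕ) (he : e ∈ G.edgeSet) : e ∈ D := by
  classical
  by_contra hne
  have := (eb_change (G' := G) h (insert e D) h.1.toFinset
    (by
      intro x hx
      rcases Finset.mem_insert.1 hx with rfl | hx
      · exact he
      · exact hD x hx) ?_).1
  · rw [Finset.card_insert_of_notMem hne] at this
    omega
  · intro x hx
    left
    simpa using hx

/-- `G` is a copy of `H` plus isolated vertices. -/
def Ex {W : Type} (H : SimpleGraph W) (G : SimpleGraph ℕ) (p : W → ℕ) : Prop :=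
  Function.Injective p ∧ ∀ u v, G.Adj u v ↔ ∃ w w', H.Adj w w' ∧ u = p w ∧ v = p w'

theorem ex_of_card {W : Type} [Fintype W] [DecidableEq W] {H : SimpleGraph W}
    [DecidableRel H.Adj] {G : SimpleGraph ℕ} {k : ℕ}
    (h : EB G k) (hk : k ≤ H.edgeFinset.card) (p : W → ℕ) (hp : Function.Injective p)
    (hh : ∀ w w', H.Adj w w' → G.Adj (p w) (p w')) : Ex H G p := by
  refine ⟨hp, fun u v => ⟨fun huv => ?_, ?_⟩⟩
  · have hD : ∀ e ∈ H.edgeFinset.image (Sym2.map p), e ∈ G.edgeSet := by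
      intro e he
      obtain ⟨d, hd, rfl⟩ := Finset.mem_image.1 he
      rw [SimpleGraph.mem_edgeFinset] at hd
      induction d with
      | _ a b => exact hh a b hd
    have hc : k ≤ (H.edgeFinset.image (Sym2.map p)).card := by
      rwa [Finset.card_image_of_injective _ (Sym2.map.injective hp)]
    have := all_edges h _ hD hc s(u, v) huv
    obtain ⟨d, hd, hde⟩ := Finset.mem_image.1 this
    rw [SimpleGraph.mem_edgeFinset] at hd
    induction d with
    | _ a b =>
      rw [Sym2.map_mk] at hde
      rcases Sym2.eq_iff.1 hde with ⟨r, r'⟩ | ⟨r, r'⟩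
      · exact ⟨a, b, hd, r.symm, r'.symm⟩
      · exact ⟨b, a, hd.symm, r'.symm, r.symm⟩
  · rintro ⟨w, w', hw, rfl, rfl⟩
    exact hh w w' hw

theorem cross {W : Type} [Fintype W] [DecidableEq W] {H : SimpleGraph W}
    [DecidableRel H.Adj] {G : SimpleGraph ℕ} (f : W → Set ℕ)
    (h3 : Pairwise fun w₁ w₂ => Disjoint (f w₁) (f w₂))
    (h4 : ∀ ⦃w₁ w₂⦄, H.Adj w₁ w₂ → ∃ v₁ ∈ f w₁, ∃ v₂ ∈ f w₂, G.Adj v₁ v₂) :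
    ∃ D : Finset (Sym2 ℕ), D.card = H.edgeFinset.card ∧ ∀ d ∈ D, d ∈ G.edgeSet ∧
      ∃ w w' a b, w ≠ w' ∧ a ∈ f w ∧ b ∈ f w' ∧ d = s(a, b) := by
  classical
  have key : ∀ e : Sym2 W, e ∈ H.edgeSet → ∃ d : Sym2 ℕ, d ∈ G.edgeSet ∧
      ∃ w w' a b, w ≠ w' ∧ a ∈ f w ∧ b ∈ f w' ∧ d = s(a, b) ∧ e = s(w, w') := by
    intro e he
    induction e with
    | _ w w' =>
      have hw : H.Adj w w' := he
      obtain ⟨a, ha, b, hb, hab⟩ := h4 hw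
      exact ⟨s(a, b), hab, w, w', a, b, hw.ne, ha, hb, rfl, rfl⟩
  choose! g hg1 hg2 using key
  have huniq : ∀ {w w' a}, a ∈ f w → a ∈ f w' → w = w' := by
    intro w w' a ha ha'
    by_contra hne
    exact Set.disjoint_left.1 (h3 hne) ha ha'
  refine ⟨H.edgeFinset.image g, ?_, ?_⟩
  · apply Finset.card_image_of_injOn
    intro e he e' he' hee
    rw [Finset.mem_coe, SimpleGraph.mem_edgeFinset] at he he'
    obtain ⟨w, w', a, b, hw, ha, hb, hd, rfl⟩ := hg2 e he
    obtain ⟨z, z', c, d, hz, hc, hd', hdd, rfl⟩ := hg2 e' he'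
    rw [hd, hdd] at hee
    rcases Sym2.eq_iff.1 hee with ⟨r, r'⟩ | ⟨r, r'⟩
    · subst r; subst r'
      rw [huniq ha hc, huniq hb hd']
    · subst r; subst r'
      rw [huniq ha hd', huniq hb hc, Sym2.eq_swap]
  · intro d hd
    obtain ⟨e, he, rfl⟩ := Finset.mem_image.1 hd
    rw [SimpleGraph.mem_edgeFinset] at he
    obtain ⟨w, w', a, b, hw, ha, hb, hd, -⟩ := hg2 e he
    exact ⟨hg1 e he, w, w', a, b, hw, ha, hb, hd⟩

theorem card_of_minor {W : Type} [Fintype W] [DecidableEq W] {H : SimpleGraph W}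
    [DecidableRel H.Adj] {G : SimpleGraph ℕ} {k : ℕ} (h : EB G k) (hm : H.IsMinor G) :
    H.edgeFinset.card ≤ k := by
  obtain ⟨f, h1, h2, h3, h4⟩ := hm
  obtain ⟨D, hc, hD⟩ := cross (G := G) f h3 h4
  rw [← hc]
  refine (eb_change (G' := G) h D h.1.toFinset (fun e he => (hD e he).1) ?_).1
  intro e he
  left
  simpa using he

theorem planar8 {G : SimpleGraph ℕ} (h : EB G 8) : G.IsPlanar := by
  constructor
  · intro hm
    have := card_of_minor h hm
    rw [card5] at this
    omega
  · intro hm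
    have := card_of_minor h hm
    rw [card33] at this
    omega

theorem noK5 {G : SimpleGraph ℕ} (h : EB G 9) : ¬ K5.IsMinor G := by
  intro hm
  have := card_of_minor h hm
  rw [card5] at this
  omega

theorem exK5 {G : SimpleGraph ℕ} (h : EB G 10) (hm : K5.IsMinor G) : ∃ p, Ex K5 G p := by
  obtain ⟨f, h1, h2, h3, h4⟩ := hm
  obtain ⟨D, hc, hD⟩ := cross (G := G) f h3 h4
  rw [card5] at hc
  have huniq : ∀ {w w' a}, a ∈ f w → a ∈ f w' → w = w' := by
    intro w w' a ha ha'
    by_contra hne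
    exact Set.disjoint_left.1 (h3 hne) ha ha'
  choose p hp using h1
  have hs : ∀ w, ∀ u ∈ f w, p w = u := by
    intro w u hu
    by_contra hne
    obtain ⟨x, hx, hpx⟩ := exists_nbr (h2 w) (hp w) hu hne
    have := all_edges h D (fun e he => (hD e he).1) hc.ge s(p w, x) hpx
    obtain ⟨-, z, z', a, b, hz, ha, hb, hd⟩ := hD _ this
    rcases Sym2.eq_iff.1 hd with ⟨r, r'⟩ | ⟨r, r'⟩
    · subst r; subst r'
      exact hz ((huniq ha (hp w)).trans (huniq hx hb))
    · subst r; subst r'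
      exact hz ((huniq ha hx).trans (huniq (hp w) hb))
  refine ⟨p, ex_of_card h card5.ge p ?_ ?_⟩
  · intro a b hab
    exact huniq (hp a) (hab ▸ hp b)
  · intro w w' hw
    obtain ⟨a, ha, b, hb, hab⟩ := h4 hw
    rw [hs w a ha, hs w' b hb]
    exact hab

theorem homK33 {G : SimpleGraph ℕ} (S : Finset ℕ) (hS : S.card ≤ 6)
    (hsup : ∀ u v, G.Adj u v → u ∈ S) (hm : K33.IsMinor G) :
    ∃ p : Fin 3 ⊕ Fin 3 → ℕ, Function.Injective p ∧ (∀ w w', K33.Adj w w' → G.Adj (p w) (p w')) ∧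
      (∀ u ∈ S, ∃ w, p w = u) := by
  classical
  obtain ⟨f, h1, h2, h3, h4⟩ := hm
  have huniq : ∀ {w w' a}, a ∈ f w → a ∈ f w' → w = w' := by
    intro w w' a ha ha'
    by_contra hne
    exact Set.disjoint_left.1 (h3 hne) ha ha'
  have hfS : ∀ w, ∀ u ∈ f w, u ∈ S := by
    intro w u hu
    obtain ⟨a, b, c, ha, -⟩ := pat33.three w
    obtain ⟨q, hq, r, hr, hqr⟩ := h4 ha
    by_cases huq : u = q
    · exact huq ▸ hsup q r hqr
    · obtain ⟨x, hx, hux⟩ := exists_nbr (h2 w) hu hq huq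
      exact hsup u x hux
  choose p hp using h1
  have hinj : Function.Injective p := fun a b hab => huniq (hp a) (hab ▸ hp b)
  have himg : Finset.univ.image p = S := by
    apply Finset.eq_of_subset_of_card_le
    · intro x hx
      obtain ⟨w, -, rfl⟩ := Finset.mem_image.1 hx
      exact hfS w _ (hp w)
    · rw [Finset.card_image_of_injective _ hinj]
      simpa using hS
  have hall : ∀ u ∈ S, ∃ w, p w = u := by
    intro u hu
    rw [← himg] at hu
    obtain ⟨w, -, hw⟩ := Finset.mem_image.1 hu
    exact ⟨w, hw⟩
  have hs : ∀ w, ∀ u ∈ f w, p w = u := by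
    intro w u hu
    obtain ⟨w', hw'⟩ := hall u (hfS w u hu)
    have : w' = w := huniq (hw' ▸ hp w') hu
    rw [← this, hw']
  refine ⟨p, hinj, ?_, hall⟩
  intro w w' hw
  obtain ⟨a, ha, b, hb, hab⟩ := h4 hw
  rw [hs w a ha, hs w' b hb]
  exact hab

/-- the finite support of a graph with boundedly many edges -/
theorem support {G : SimpleGraph ℕ} {k : ℕ} (h : EB G k) :
    ∃ S : Finset ℕ, ∀ u, u ∈ S ↔ ∃ v, G.Adj u v := by
  classical
  refine ⟨h.1.toFinset.biUnion (fun e => e.toFinset), fun u => ?_⟩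
  rw [Finset.mem_biUnion]
  constructor
  · rintro ⟨e, he, hu⟩
    rw [Set.Finite.mem_toFinset] at he
    rw [Sym2.mem_toFinset] at hu
    obtain ⟨v, rfl⟩ := Sym2.mem_iff_exists.1 hu
    exact ⟨v, he⟩
  · rintro ⟨v, hv⟩
    exact ⟨s(u, v), h.1.mem_toFinset.2 hv, by simp⟩

theorem support_card {G : SimpleGraph ℕ} {k d : ℕ} (h : EB G k) (h3 : ∀ v u, G.Adj v u → d ≤ deg G v)
    {S : Finset ℕ} (hS : ∀ u, u ∈ S ↔ ∃ v, G.Adj u v) : d * S.card ≤ 2 * k := by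
  apply handshake h
  intro v hv
  obtain ⟨u, hu⟩ := (hS v).1 hv
  exact h3 v u hu

theorem core10 {G : SimpleGraph ℕ} (h : EB G 10) (h3 : R3 G) (hn : ¬ G.IsPlanar) :
    (∃ p, Ex K33 G p) ∨ (∃ p, Ex K5 G p) ∨ (∃ p, Ex K33e G p) := by
  by_cases h5 : K5.IsMinor G
  · exact Or.inr (Or.inl (exK5 h h5))
  have hm : K33.IsMinor G := by
    by_contra hm
    exact hn ⟨h5, hm⟩
  obtain ⟨S, hS⟩ := support h
  have hc := support_card h h3 hS
  obtain ⟨p, hp, hhom, hcov⟩ := homK33 S (by omega) (fun u v huv => (hS u).2 ⟨v, huv⟩) hm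
  by_cases hex : ∀ u v, G.Adj u v → ∃ w w', K33.Adj w w' ∧ u = p w ∧ v = p w'
  · refine Or.inl ⟨p, hp, fun u v => ⟨hex u v, ?_⟩⟩
    rintro ⟨w, w', hw, rfl, rfl⟩
    exact hhom w w' hw
  · push Not at hex
    obtain ⟨u, v, huv, hno⟩ := hex
    obtain ⟨w, rfl⟩ := hcov u ((hS u).2 ⟨v, huv⟩)
    obtain ⟨w', rfl⟩ := hcov v ((hS v).2 ⟨_, huv.symm⟩)
    have hnw : ¬ K33.Adj w w' := fun hw => hno w w' hw rfl rfl
    have hww : w ≠ w' := fun hh => huv.ne (congrArg p hh)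
    right; right
    have hperm : ∀ i j : Fin 3, i ≠ j → ∃ σ : Equiv.Perm (Fin 3), σ 0 = i ∧ σ 1 = j := by decide
    rcases w with i | i <;> rcases w' with j | j
    · obtain ⟨σ, h0, h1⟩ := hperm i j (fun hh => hww (congrArg _ hh))
      refine ⟨p ∘ Sum.map σ id, ex_of_card h card33e.ge _ ?_ ?_⟩
      · exact hp.comp (Function.Injective.sumMap σ.injective (fun _ _ h => h))
      · rintro w w' (hw | ⟨rfl, rfl⟩ | ⟨rfl, rfl⟩)
        · apply hhom
          rcases w with w | w <;> rcases w' with w' | w' <;> simp at hw ⊢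
        · simpa [h0, h1] using huv
        · simpa [h0, h1] using huv.symm
    · simp at hnw
    · simp at hnw
    · obtain ⟨σ, h0, h1⟩ := hperm i j (fun hh => hww (congrArg _ hh))
      refine ⟨p ∘ Sum.swap ∘ Sum.map σ id, ex_of_card h card33e.ge _ ?_ ?_⟩
      · exact hp.comp ((Equiv.sumComm _ _).injective.comp
          (Function.Injective.sumMap σ.injective (fun _ _ h => h)))
      · rintro w w' (hw | ⟨rfl, rfl⟩ | ⟨rfl, rfl⟩)
        · apply hhom
          rcases w with w | w <;> rcases w' with w' | w' <;> simp at hw ⊢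
        · simpa [h0, h1] using huv
        · simpa [h0, h1] using huv.symm

theorem core9 {G : SimpleGraph ℕ} (h : EB G 9) (hn : ¬ G.IsPlanar) : ∃ p, Ex K33 G p := by
  have h3 : R3 G := reduced (k := 0) (m := 8) (fun G hG => planar8 hG) h hn
  have hm : K33.IsMinor G := by
    by_contra hm
    exact hn ⟨noK5 h, hm⟩
  obtain ⟨S, hS⟩ := support h
  have hc := support_card h h3 hS
  obtain ⟨p, hp, hhom, hcov⟩ := homK33 S (by omega) (fun u v huv => (hS u).2 ⟨v, huv⟩) hm
  exact ⟨p, ex_of_card h card33.ge p hp hhom⟩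

end TA

namespace TA

set_option linter.unusedSimpArgs false
set_option linter.unusedVariables false

def b (m i j : ℕ) : Bool := Nat.testBit m (16 * i + j)

/-- The graph coded by `m`. -/
def toG (m : ℕ) : SimpleGraph ℕ where
  Adj i j := i < 16 ∧ j < 16 ∧ i ≠ j ∧ b m i j = true ∧ b m j i = true
  symm := ⟨fun _ _ h => ⟨h.2.1, h.1, h.2.2.1.symm, h.2.2.2.2, h.2.2.2.1⟩⟩
  loopless := ⟨fun _ h => h.2.2.1 rfl⟩

def WF (m : ℕ) : Prop := ∀ i j, i < 16 → j < 16 → b m i j = true → b m j i = true ∧ i ≠ j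

theorem WF.adj {m : ℕ} (h : WF m) {i j : ℕ} :
    (toG m).Adj i j ↔ i < 16 ∧ j < 16 ∧ b m i j = true :=
  ⟨fun r => ⟨r.1, r.2.1, r.2.2.2.1⟩,
   fun r => ⟨r.1, r.2.1, (h i j r.1 r.2.1 r.2.2).2, r.2.2, (h i j r.1 r.2.1 r.2.2).1⟩⟩

def row (m i : ℕ) : ℕ := Nat.land (Nat.shiftRight m (Nat.mul 16 i)) 65535
def bt (i j : ℕ) : ℕ := Nat.shiftLeft 1 (Nat.add (Nat.mul 16 i) j)
def addE (m x y : ℕ) : ℕ := Nat.lor m (Nat.lor (bt x y) (bt y x))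
def remE (m x y : ℕ) : ℕ := Nat.xor m (Nat.land m (Nat.lor (bt x y) (bt y x)))
def mask (v : ℕ) : ℕ := Nat.lor (Nat.shiftLeft 65535 (Nat.mul 16 v))
  (Nat.shiftLeft 1766874025136433896750911497805568136923323180981774075523881651146915841 v)
def delV (m v : ℕ) : ℕ := Nat.xor m (Nat.land m (mask v))
def frc (x : ℕ) (k : ℕ → Bool) : Bool := Nat.rec (k 0) (fun n _ => k (Nat.succ n)) x
def cnd (c : Bool) (x y : Bool) : Bool := Bool.rec y x c

theorem frc_eq (x : ℕ) (k : ℕ → Bool) : frc x k = k x := by cases x <;> rfl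
theorem cnd_eq (c x y : Bool) : cnd c x y = bif c then x else y := by cases c <;> rfl
theorem cnd_true {c x y : Bool} (h : cnd c x y = true) :
    (c = true ∧ x = true) ∨ (c = false ∧ y = true) := by
  cases c
  · exact Or.inr ⟨rfl, h⟩
  · exact Or.inl ⟨rfl, h⟩

theorem testBit_row (m i j : ℕ) : Nat.testBit (row m i) j = (b m i j && decide (j < 16)) := by
  have : row m i = (m >>> (16 * i)) &&& (2 ^ 16 - 1) := rfl
  rw [this, Nat.testBit_and, Nat.testBit_shiftRight, Nat.testBit_two_pow_sub_one]
  rfl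

theorem b_bt {x y i j : ℕ} (hy : y < 16) (hj : j < 16) :
    b (bt x y) i j = (decide (i = x) && decide (j = y)) := by
  have : bt x y = 2 ^ (16 * x + y) := Nat.one_shiftLeft _
  unfold b
  rw [this, Nat.testBit_two_pow, ← Bool.decide_and]
  apply decide_eq_decide.2
  omega

theorem b_addE {m x y i j : ℕ} (hx : x < 16) (hy : y < 16) (hj : j < 16) :
    b (addE m x y) i j = (b m i j ||
      ((decide (i = x) && decide (j = y)) || (decide (i = y) && decide (j = x)))) := by
  rw [← b_bt hy hj, ← b_bt hx hj]
  have : addE m x y = m ||| (bt x y ||| bt y x) := rfl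
  unfold b
  rw [this, Nat.testBit_or, Nat.testBit_or]

theorem b_remE {m x y i j : ℕ} (hx : x < 16) (hy : y < 16) (hj : j < 16) :
    b (remE m x y) i j = (b m i j &&
      !((decide (i = x) && decide (j = y)) || (decide (i = y) && decide (j = x)))) := by
  rw [← b_bt hy hj, ← b_bt hx hj]
  have : remE m x y = m ^^^ (m &&& (bt x y ||| bt y x)) := rfl
  unfold b
  rw [this, Nat.testBit_xor, Nat.testBit_and, Nat.testBit_or]
  cases Nat.testBit m (16 * i + j) <;> cases Nat.testBit (bt x y) (16 * i + j) <;>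
    cases Nat.testBit (bt y x) (16 * i + j) <;> rfl

theorem b_mask : ∀ v < 16, ∀ i < 16, ∀ j < 16,
    b (mask v) i j = (decide (i = v) || decide (j = v)) := by
  decide +kernel

theorem b_delV {m v i j : ℕ} (hv : v < 16) (hi : i < 16) (hj : j < 16) :
    b (delV m v) i j = (b m i j && !(decide (i = v) || decide (j = v))) := by
  rw [← b_mask v hv i hi j hj]
  have : delV m v = m ^^^ (m &&& mask v) := rfl
  unfold b
  rw [this, Nat.testBit_xor, Nat.testBit_and]
  cases Nat.testBit m (16 * i + j) <;> cases Nat.testBit (mask v) (16 * i + j) <;> rfl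

theorem WF.addE {m x y : ℕ} (h : WF m) (hx : x < 16) (hy : y < 16) (hxy : x ≠ y) :
    WF (addE m x y) := by
  intro i j hi hj hb
  rw [b_addE hx hy hj] at hb
  rw [b_addE hx hy hi]
  simp only [Bool.or_eq_true, Bool.and_eq_true, decide_eq_true_eq] at hb ⊢
  have := h i j hi hj
  rcases hb with hb | hb | hb
  · exact ⟨Or.inl (this hb).1, (this hb).2⟩
  · exact ⟨Or.inr (Or.inr ⟨hb.2, hb.1⟩), by omega⟩
  · exact ⟨Or.inr (Or.inl ⟨hb.2, hb.1⟩), by omega⟩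

theorem WF.remE {m x y : ℕ} (h : WF m) (hx : x < 16) (hy : y < 16) :
    WF (remE m x y) := by
  intro i j hi hj hb
  rw [b_remE hx hy hj] at hb
  rw [b_remE hx hy hi]
  simp only [Bool.or_eq_true, Bool.and_eq_true, decide_eq_true_eq, Bool.not_eq_true',
    Bool.or_eq_false_iff, Bool.and_eq_false_iff, decide_eq_false_iff_not] at hb ⊢
  have := h i j hi hj hb.1
  exact ⟨⟨this.1, by tauto⟩, this.2⟩

theorem WF.delV {m v : ℕ} (h : WF m) (hv : v < 16) : WF (delV m v) := by
  intro i j hi hj hb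
  rw [b_delV hv hi hj] at hb
  rw [b_delV hv hj hi]
  simp only [Bool.and_eq_true, Bool.not_eq_true', Bool.or_eq_false_iff,
    decide_eq_false_iff_not] at hb ⊢
  have := h i j hi hj hb.1
  exact ⟨⟨this.1, hb.2.2, hb.2.1⟩, this.2⟩

theorem toG_delV {m v : ℕ} (h : WF m) (hv : v < 16) : toG (delV m v) = del (toG m) v := by
  ext i j
  rw [(h.delV hv).adj, del_adj, h.adj]
  constructor
  · rintro ⟨hi, hj, hb⟩
    rw [b_delV hv hi hj] at hb
    simp only [Bool.and_eq_true, Bool.not_eq_true', Bool.or_eq_false_iff,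
      decide_eq_false_iff_not] at hb
    exact ⟨⟨hi, hj, hb.1⟩, hb.2⟩
  · rintro ⟨⟨hi, hj, hb⟩, hv'⟩
    refine ⟨hi, hj, ?_⟩
    rw [b_delV hv hi hj]
    simp only [Bool.and_eq_true, Bool.not_eq_true', Bool.or_eq_false_iff,
      decide_eq_false_iff_not]
    exact ⟨hb, hv'⟩

theorem toG_addE {m x y : ℕ} (h : WF m) (hx : x < 16) (hy : y < 16) (hxy : x ≠ y) (i j : ℕ) :
    (toG (addE m x y)).Adj i j ↔ (toG m).Adj i j ∨ (i = x ∧ j = y ∨ i = y ∧ j = x) := by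
  rw [(h.addE hx hy hxy).adj, h.adj]
  constructor
  · rintro ⟨hi, hj, hb⟩
    rw [b_addE hx hy hj] at hb
    simp only [Bool.or_eq_true, Bool.and_eq_true, decide_eq_true_eq] at hb
    exact hb.imp (fun hb => ⟨hi, hj, hb⟩) id
  · intro hh
    have hij : i < 16 ∧ j < 16 := by
      rcases hh with hh | hh | hh
      · exact ⟨hh.1, hh.2.1⟩
      · omega
      · omega
    refine ⟨hij.1, hij.2, ?_⟩
    rw [b_addE hx hy hij.2]
    simp only [Bool.or_eq_true, Bool.and_eq_true, decide_eq_true_eq]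
    exact hh.imp (fun hb => hb.2.2) id

theorem toG_remE {m x y : ℕ} (h : WF m) (hx : x < 16) (hy : y < 16) (i j : ℕ) :
    (toG (remE m x y)).Adj i j ↔ (toG m).Adj i j ∧ ¬ (i = x ∧ j = y ∨ i = y ∧ j = x) := by
  rw [(h.remE hx hy).adj, h.adj]
  constructor
  · rintro ⟨hi, hj, hb⟩
    rw [b_remE hx hy hj] at hb
    simp only [Bool.or_eq_true, Bool.and_eq_true, decide_eq_true_eq, Bool.not_eq_true',
      Bool.or_eq_false_iff, Bool.and_eq_false_iff, decide_eq_false_iff_not] at hb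
    exact ⟨⟨hi, hj, hb.1⟩, by tauto⟩
  · rintro ⟨⟨hi, hj, hb⟩, hh⟩
    refine ⟨hi, hj, ?_⟩
    rw [b_remE hx hy hj]
    simp only [Bool.or_eq_true, Bool.and_eq_true, decide_eq_true_eq, Bool.not_eq_true',
      Bool.or_eq_false_iff, Bool.and_eq_false_iff, decide_eq_false_iff_not]
    exact ⟨hb, by tauto⟩

theorem toG_sup {m v x y : ℕ} (h : WF m) (hv : v < 16) (hx : x < 16) (hy : y < 16) (hxy : x ≠ y) :
    toG (addE (delV m v) x y) = sup (toG m) v x y := by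
  ext i j
  rw [toG_addE (h.delV hv) hx hy hxy, toG_delV h hv, del_adj, sup_adj]
  tauto

theorem adj_row {m v : ℕ} (h : WF m) (hv : v < 16) (j : ℕ) :
    (toG m).Adj v j ↔ Nat.testBit (row m v) j = true := by
  rw [h.adj, testBit_row]
  simp only [Bool.and_eq_true, decide_eq_true_eq]
  tauto

/-- suppress vertices in the list -/
def red (fin : ℕ → ℕ → Bool) (l : List ℕ) : ℕ → ℕ → Bool :=
  List.rec fin (fun v _ ih m e =>
    cnd (Nat.ble e 8) true <|
    frc (row m v) fun r =>
    cnd (Nat.beq r 0) (ih m e) <|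
    frc (Nat.log2 r) fun x =>
    frc (Nat.xor r (Nat.shiftLeft 1 x)) fun r1 =>
    cnd (Nat.beq r1 0) (frc (delV m v) fun m' => frc (Nat.sub e 1) fun e' => ih m' e') <|
    frc (Nat.log2 r1) fun y =>
    cnd (Nat.beq r1 (Nat.shiftLeft 1 y))
      (frc (addE (delV m v) x y) fun m' =>
        frc (Nat.sub (Nat.sub e 1) (Nat.land (Nat.shiftRight m (Nat.add (Nat.mul 16 x) y)) 1))
          fun e' => ih m' e')
      (ih m e)) l

def Snd (fin : ℕ → ℕ → Bool) : Prop :=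
  ∀ m e, WF m → EB (toG m) e → fin m e = true → (toG m).IsPlanar

theorem bit_eq (m k : ℕ) : Nat.land (Nat.shiftRight m k) 1 = (Nat.testBit m k).toNat := by
  have : Nat.land (Nat.shiftRight m k) 1 = (m >>> k) &&& 1 := rfl
  rw [this, Nat.and_one_is_mod, Nat.toNat_testBit, Nat.shiftRight_eq_div_pow]

theorem red_sound {fin : ℕ → ℕ → Bool} (hfin : Snd fin) (l : List ℕ) (hl : ∀ v ∈ l, v < 16) :
    Snd (red fin l) := by
  induction l with
  | nil => exact hfin
  | cons v l ih =>
    have ih := ih (fun v hv => hl v (List.mem_cons_of_mem _ hv))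
    have hv : v < 16 := hl v List.mem_cons_self
    intro m e hm he hr
    change cnd (Nat.ble e 8) true _ = true at hr
    rcases cnd_true hr with ⟨h1, -⟩ | ⟨-, hr⟩
    · exact planar8 (he.mono (Nat.le_of_ble_eq_true h1))
    rw [frc_eq] at hr
    rcases cnd_true hr with ⟨-, hr⟩ | ⟨hr0, hr⟩
    · exact ih m e hm he hr
    rw [frc_eq, frc_eq] at hr
    generalize hx : Nat.log2 (row m v) = x at hr
    have e1 : Nat.xor (row m v) (Nat.shiftLeft 1 x) = row m v ^^^ 2 ^ x := by
      have : Nat.xor (row m v) (Nat.shiftLeft 1 x) = row m v ^^^ (1 <<< x) := rfl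
      rw [this, Nat.one_shiftLeft]
    rw [e1] at hr
    rcases cnd_true hr with ⟨h1, hr⟩ | ⟨h1, hr⟩
    · have hrow : row m v = 2 ^ x := by
        have := Nat.eq_of_beq_eq_true h1
        exact Nat.xor_eq_zero_iff.1 this
      rw [frc_eq, frc_eq] at hr
      have hadj : ∀ j, (toG m).Adj v j ↔ j = x := by
        intro j
        rw [adj_row hm hv, hrow, Nat.testBit_two_pow]
        simp [eq_comm]
      have hd : deg (toG m) v = 1 := by
        apply Finset.card_eq_one.2
        refine ⟨x, ?_⟩
        ext j
        rw [he.mem, hadj]; simp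
      have h2 := (eb_del he v).2
      rw [hd, ← toG_delV hm hv] at h2
      have h3 := ih _ _ (hm.delV hv) h2 hr
      rw [toG_delV hm hv] at h3
      exact good_pend (k := 0) (fun u hu => (hadj u).1 hu) h3
    · rw [frc_eq] at hr
      generalize hy : Nat.log2 (row m v ^^^ 2 ^ x) = y at hr
      rcases cnd_true hr with ⟨h2, hr⟩ | ⟨-, hr⟩
      · rw [frc_eq, frc_eq, bit_eq] at hr
        have hrow : row m v = 2 ^ y ^^^ 2 ^ x := by
          have := Nat.eq_of_beq_eq_true h2
          have h' : Nat.shiftLeft 1 y = 2 ^ y := Nat.one_shiftLeft y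
          rw [h'] at this
          rw [← this, Nat.xor_assoc, Nat.xor_self, Nat.xor_zero]
        have hxy : x ≠ y := by
          rintro rfl
          rw [Nat.xor_self] at hrow
          rw [hrow] at hr0
          exact absurd hr0 (by decide)
        have hadj : ∀ j, (toG m).Adj v j ↔ j = x ∨ j = y := by
          intro j
          rw [adj_row hm hv, hrow, Nat.testBit_xor, Nat.testBit_two_pow, Nat.testBit_two_pow]
          simp only [bne_iff_ne, ne_eq, decide_eq_decide]
          omega
        have ax := (hadj x).2 (Or.inl rfl)
        have ay := (hadj y).2 (Or.inr rfl)
        have hx16 := ax.2.1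
        have hy16 := ay.2.1
        have hE : EB (toG (addE (delV m v) x y))
            (Nat.sub (Nat.sub e 1) (Nat.testBit m (Nat.add (Nat.mul 16 x) y)).toNat) := by
          rw [toG_sup hm hv hx16 hy16 hxy]
          by_cases hb : b m x y = true
          · have hb' : Nat.testBit m (Nat.add (Nat.mul 16 x) y) = true := hb
            rw [hb']
            exact (eb_dup he (hm.adj.2 ⟨hx16, hy16, hb⟩) ax ay).2
          · have hb' : Nat.testBit m (Nat.add (Nat.mul 16 x) y) = false := by
              simpa [b] using hb
            rw [hb']
            exact (eb_sup he hxy ax ay).2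
        have h3 := ih _ _ ((hm.delV hv).addE hx16 hy16 hxy) hE hr
        rw [toG_sup hm hv hx16 hy16 hxy] at h3
        exact good_sup' (k := 0) (fun u hu => (hadj u).1 hu) h3
      · exact ih m e hm he hr

def pc (k : ℕ) : ℕ → ℕ :=
  Nat.rec (fun _ => 0) (fun _ ih r => Nat.add (Nat.land r 1) (ih (Nat.shiftRight r 1))) k

theorem pc_eq (k r : ℕ) : pc k r = ((Finset.range k).filter (fun j => Nat.testBit r j = true)).card := by
  induction k generalizing r with
  | zero => rfl
  | succ k ih =>
    have h0 : pc (k + 1) r = Nat.land r 1 + pc k (r >>> 1) := rfl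
    have h1 : Nat.land r 1 = (Nat.testBit r 0).toNat := bit_eq r 0
    rw [h0, h1, ih, Finset.card_filter, Finset.card_filter, Finset.sum_range_succ', add_comm]
    congr 1
    · apply Finset.sum_congr rfl
      intro i _
      rw [Nat.testBit_shiftRight, add_comm 1 i]
    · cases Nat.testBit r 0 <;> rfl

theorem deg_eq {m v e : ℕ} (h : WF m) (he : EB (toG m) e) (hv : v < 16) :
    deg (toG m) v = pc 16 (row m v) := by
  rw [pc_eq]
  unfold deg
  congr 1
  ext j
  rw [he.mem, Finset.mem_filter, Finset.mem_range, adj_row h hv]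
  constructor
  · intro hj
    refine ⟨?_, hj⟩
    rw [testBit_row] at hj
    simpa using (Bool.and_eq_true_iff.1 hj).2
  · exact fun hj => hj.2

def test1 (k : ℕ → ℕ → Bool) (m e v : ℕ) : Bool :=
  frc (delV m v) fun m' => frc (Nat.sub e (pc 16 (row m v))) fun e' => k m' e'
def anyL (f : ℕ → Bool) (l : List ℕ) : Bool :=
  List.rec false (fun v _ ih => cnd (f v) true ih) l

theorem anyL_true {f : ℕ → Bool} {l : List ℕ} (h : anyL f l = true) : ∃ v ∈ l, f v = true := by
  induction l with
  | nil => exact absurd h (by simp [anyL])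
  | cons v l ih =>
    change cnd (f v) true (anyL f l) = true at h
    rcases cnd_true h with ⟨h1, -⟩ | ⟨-, h1⟩
    · exact ⟨v, List.mem_cons_self, h1⟩
    · obtain ⟨w, hw, hf⟩ := ih h1
      exact ⟨w, List.mem_cons_of_mem _ hw, hf⟩

def SndG (n : ℕ) (k : ℕ → ℕ → Bool) : Prop :=
  ∀ m e, WF m → EB (toG m) e → k m e = true → Good n (toG m)

theorem test1_sound {n : ℕ} {k : ℕ → ℕ → Bool} (hk : SndG n k) {m e v : ℕ} (hv : v < 16)
    (hm : WF m) (he : EB (toG m) e) (h : test1 k m e v = true) : Good (n + 1) (toG m) := by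
  unfold test1 at h
  rw [frc_eq, frc_eq] at h
  refine ⟨v, ?_⟩
  rw [← toG_delV hm hv]
  refine hk _ _ (hm.delV hv) ?_ h
  rw [toG_delV hm hv, ← deg_eq hm he hv]
  exact (eb_del he v).2

def allL (f : ℕ → Bool) (l : List ℕ) : Bool :=
  List.rec true (fun v _ ih => cnd (f v) ih false) l

theorem allL_true {f : ℕ → Bool} {l : List ℕ} (h : allL f l = true) : ∀ v ∈ l, f v = true := by
  induction l with
  | nil => intro v hv; exact absurd hv (by simp)
  | cons v l ih =>
    change cnd (f v) (allL f l) false = true at h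
    rcases cnd_true h with ⟨h1, h2⟩ | ⟨-, h1⟩
    · intro w hw
      rcases List.mem_cons.1 hw with rfl | hw
      · exact h1
      · exact ih h2 w hw
    · exact absurd h1 (by decide)

def lab16 : List ℕ := [0,1,2,3,4,5,6,7,8,9,10,11,12,13,14,15]

def supL (m : ℕ) (l : List ℕ) : List ℕ :=
  List.rec [] (fun v _ ih => Nat.rec ih (fun _ _ => v :: ih) (row m v)) l

theorem supL_eq (m : ℕ) (l : List ℕ) : supL m l = l.filter (fun v => decide (row m v ≠ 0)) := by
  induction l with
  | nil => rfl
  | cons v l ih =>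
    have : supL m (v :: l) = Nat.rec (supL m l) (fun _ _ => v :: supL m l) (row m v) := rfl
    rw [this, List.filter_cons, ih]
    cases row m v <;> simp

def triple (m : ℕ) (l : List ℕ) : Bool :=
  allL (fun x => allL (fun y => cnd (Nat.blt x y)
    (frc (Nat.land (row m x) (row m y)) fun c =>
      cnd (Nat.ble (pc 16 c) 2) true
        (allL (fun z => cnd (Nat.beq z x) true (cnd (Nat.beq z y) true
          (Nat.ble (pc 16 (Nat.land c (row m z))) 2))) l)) true) l) l

def fin (m e : ℕ) : Bool :=
  cnd (Nat.ble e 10)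
    (cnd (Nat.ble (supL m lab16).length 6)
      (cnd (cnd (Nat.ble e 9) true (Nat.beq (supL m lab16).length 6))
        (triple m (supL m lab16)) false) false) false

theorem three_le_pc {r x y z : ℕ} (hx : x < 16) (hy : y < 16) (hz : z < 16) (hxy : x ≠ y)
    (hxz : x ≠ z) (hyz : y ≠ z) (bx : Nat.testBit r x = true) (bY : Nat.testBit r y = true)
    (bz : Nat.testBit r z = true) : 3 ≤ pc 16 r := by
  rw [pc_eq]
  have : ({x, y, z} : Finset ℕ).card = 3 := by
    rw [Finset.card_eq_three]
    exact ⟨x, y, z, hxy, hxz, hyz, rfl⟩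
  rw [← this]
  apply Finset.card_le_card
  intro w hw
  simp only [Finset.mem_insert, Finset.mem_singleton] at hw
  rw [Finset.mem_filter, Finset.mem_range]
  rcases hw with rfl | rfl | rfl
  · exact ⟨hx, bx⟩
  · exact ⟨hy, bY⟩
  · exact ⟨hz, bz⟩

theorem triple_sound {m : ℕ} {l : List ℕ} (hm : WF m) (h : triple m l = true) {x y z p q r : ℕ}
    (hxl : x ∈ l) (hyl : y ∈ l) (hzl : z ∈ l) (hxy : x ≠ y) (hxz : x ≠ z) (hyz : y ≠ z)
    (hpq : p ≠ q) (hpr : p ≠ r) (hqr : q ≠ r)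
    (hadj : ∀ u v, (u = x ∨ u = y ∨ u = z) → (v = p ∨ v = q ∨ v = r) → (toG m).Adj u v) :
    False := by
  wlog hlt : x < y generalizing x y
  · refine this hyl hxl hxy.symm hyz hxz (fun u v hu hv => hadj u v ?_ hv) (by omega)
    tauto
  have hx := (hadj x p (Or.inl rfl) (Or.inl rfl)).1
  have hy := (hadj y p (Or.inr (Or.inl rfl)) (Or.inl rfl)).1
  have hz := (hadj z p (Or.inr (Or.inr rfl)) (Or.inl rfl)).1
  have hp := (hadj x p (Or.inl rfl) (Or.inl rfl)).2.1
  have hq := (hadj x q (Or.inl rfl) (Or.inr (Or.inl rfl))).2.1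
  have hr := (hadj x r (Or.inl rfl) (Or.inr (Or.inr rfl))).2.1
  have hbx : ∀ v, (v = p ∨ v = q ∨ v = r) → Nat.testBit (row m x) v = true := fun v hv =>
    (adj_row hm hx v).1 (hadj x v (Or.inl rfl) hv)
  have hby : ∀ v, (v = p ∨ v = q ∨ v = r) → Nat.testBit (row m y) v = true := fun v hv =>
    (adj_row hm hy v).1 (hadj y v (Or.inr (Or.inl rfl)) hv)
  have hbz : ∀ v, (v = p ∨ v = q ∨ v = r) → Nat.testBit (row m z) v = true := fun v hv =>
    (adj_row hm hz v).1 (hadj z v (Or.inr (Or.inr rfl)) hv)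
  have hc1 : ∀ v, (v = p ∨ v = q ∨ v = r) →
      Nat.testBit (Nat.land (row m x) (row m y)) v = true := by
    intro v hv
    have : Nat.land (row m x) (row m y) = row m x &&& row m y := rfl
    rw [this, Nat.testBit_and, hbx v hv, hby v hv]; rfl
  have hc2 : ∀ v, (v = p ∨ v = q ∨ v = r) →
      Nat.testBit (Nat.land (Nat.land (row m x) (row m y)) (row m z)) v = true := by
    intro v hv
    have : Nat.land (Nat.land (row m x) (row m y)) (row m z) =
      (Nat.land (row m x) (row m y)) &&& row m z := rfl
    rw [this, Nat.testBit_and, hc1 v hv, hbz v hv]; rfl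
  have h1 := allL_true (allL_true h x hxl) y hyl
  rcases cnd_true h1 with ⟨-, h1⟩ | ⟨h1, -⟩
  · rw [frc_eq] at h1
    rcases cnd_true h1 with ⟨h1, -⟩ | ⟨-, h1⟩
    · have := three_le_pc hp hq hr hpq hpr hqr (hc1 p (by simp)) (hc1 q (by simp)) (hc1 r (by simp))
      have := Nat.le_of_ble_eq_true h1
      omega
    · have h2 := allL_true h1 z hzl
      rcases cnd_true h2 with ⟨h2, -⟩ | ⟨-, h2⟩
      · exact hxz (Nat.eq_of_beq_eq_true h2).symm
      rcases cnd_true h2 with ⟨h2, -⟩ | ⟨-, h2⟩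
      · exact hyz (Nat.eq_of_beq_eq_true h2).symm
      · have := three_le_pc hp hq hr hpq hpr hqr (hc2 p (by simp)) (hc2 q (by simp))
          (hc2 r (by simp))
        have := Nat.le_of_ble_eq_true h2
        omega
  · have : Nat.blt x y = true := by simpa using hlt
    rw [this] at h1
    exact absurd h1 (by decide)

theorem fin_sound : Snd fin := by
  intro m e hm he h
  unfold fin at h
  rcases cnd_true h with ⟨he10, h⟩ | ⟨-, h⟩
  swap
  · exact absurd h (by decide)
  rcases cnd_true h with ⟨hl6, h⟩ | ⟨-, h⟩
  swap
  · exact absurd h (by decide)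
  rcases cnd_true h with ⟨h5, h⟩ | ⟨-, h⟩
  swap
  · exact absurd h (by decide)
  have he10 := Nat.le_of_ble_eq_true he10
  have hl6 := Nat.le_of_ble_eq_true hl6
  have hsub : ∀ u v, (toG m).Adj u v → u ∈ supL m lab16 := by
    intro u v huv
    rw [supL_eq, List.mem_filter]
    refine ⟨?_, ?_⟩
    · have h16 := huv.1
      unfold lab16
      simp only [List.mem_cons]
      omega
    · have := (adj_row hm huv.1 v).1 huv
      simp only [ne_eq, decide_not, Bool.not_eq_eq_eq_not, Bool.not_true, decide_eq_false_iff_not]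
      intro h0
      rw [h0] at this
      simp at this
  have hnd : (supL m lab16).Nodup := by
    rw [supL_eq]
    exact List.Nodup.filter _ (by decide)
  constructor
  · intro hm5
    rcases cnd_true h5 with ⟨h9, -⟩ | ⟨-, h6⟩
    · exact noK5 (he.mono (Nat.le_of_ble_eq_true h9)) hm5
    · have h6 := Nat.eq_of_beq_eq_true h6
      obtain ⟨p, hp, hpa⟩ := exK5 (he.mono he10) hm5
      have : (supL m lab16).toFinset ⊆ Finset.univ.image p := by
        intro u hu
        rw [List.mem_toFinset, supL_eq, List.mem_filter] at hu
        have hu0 : row m u ≠ 0 := by simpa using hu.2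
        obtain ⟨j, hj⟩ := Nat.exists_testBit_of_ne_zero hu0
        have hu16 : u < 16 := by
          have := hu.1
          unfold lab16 at this
          simp only [List.mem_cons] at this
          simp at this
          omega
        have := (adj_row hm hu16 j).2 hj
        obtain ⟨w, w', -, rfl, -⟩ := (hpa u j).1 this
        exact Finset.mem_image_of_mem _ (Finset.mem_univ _)
      have := Finset.card_le_card this
      rw [List.toFinset_card_of_nodup hnd, h6, Finset.card_image_of_injective _ hp] at this
      simp at this
  · intro hm33
    obtain ⟨p, hp, hhom, -⟩ := homK33 (supL m lab16).toFinset
      ((List.toFinset_card_le _).trans hl6)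
      (fun u v huv => List.mem_toFinset.2 (hsub u v huv)) hm33
    have hmem : ∀ i, p (Sum.inl i) ∈ supL m lab16 := fun i =>
      hsub _ (p (Sum.inr 0)) (hhom _ _ (by simp))
    refine triple_sound hm h (hmem 0) (hmem 1) (hmem 2)
      (p := p (Sum.inr 0)) (q := p (Sum.inr 1)) (r := p (Sum.inr 2))
      (hp.ne (by decide)) (hp.ne (by decide)) (hp.ne (by decide))
      (hp.ne (by decide)) (hp.ne (by decide)) (hp.ne (by decide)) ?_
    rintro u v (rfl | rfl | rfl) (rfl | rfl | rfl) <;> exact hhom _ _ (by simp)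

end TA

namespace TA

structure RB (G : SimpleGraph ℕ) (m n : ℕ) (φ : Equiv.Perm ℕ) : Prop where
  wf : WF m
  adj : ∀ i j, G.Adj (φ i) (φ j) ↔ (toG m).Adj i j
  lab : ∀ i, i < n ↔ ∃ j, (toG m).Adj i j

theorem ext_perm (φ : Equiv.Perm ℕ) (n v : ℕ) (h : ∀ i < n, φ i ≠ v) :
    ∃ φ' : Equiv.Perm ℕ, (∀ i < n, φ' i = φ i) ∧ φ' n = v := by
  refine ⟨(Equiv.swap n (φ.symm v)).trans φ, fun i hi => ?_, ?_⟩
  · rw [Equiv.trans_apply, Equiv.swap_apply_of_ne_of_ne (by omega)]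
    intro hh
    exact h i hi (by rw [hh]; simp)
  · simp

theorem exists_perm (n : ℕ) (q : ℕ → ℕ) (h : ∀ i < n, ∀ j < n, q i = q j → i = j) :
    ∃ φ : Equiv.Perm ℕ, ∀ i < n, φ i = q i := by
  induction n with
  | zero => exact ⟨Equiv.refl _, fun i hi => absurd hi (by omega)⟩
  | succ n ih =>
    obtain ⟨φ, hφ⟩ := ih (fun i hi j hj => h i (by omega) j (by omega))
    obtain ⟨φ', h1, h2⟩ := ext_perm φ n (q n) (fun i hi hh => by
      rw [hφ i hi] at hh
      have := h i (by omega) n (by omega) hh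
      omega)
    refine ⟨φ', fun i hi => ?_⟩
    by_cases hin : i = n
    · rw [hin, h2]
    · rw [h1 i (by omega), hφ i (by omega)]

theorem RB.of {G : SimpleGraph ℕ} {m n : ℕ} {φ : Equiv.Perm ℕ} (wf : WF m)
    (hlab : ∀ i, i < n ↔ ∃ j, (toG m).Adj i j)
    (hadj : ∀ i < n, ∀ j < n, G.Adj (φ i) (φ j) ↔ (toG m).Adj i j)
    (hsup : ∀ u v, G.Adj u v → ∃ i < n, u = φ i) : RB G m n φ := by
  refine ⟨wf, fun i j => ?_, hlab⟩
  constructor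
  · intro h
    obtain ⟨i', hi, hh⟩ := hsup _ _ h
    obtain ⟨j', hj, hh'⟩ := hsup _ _ h.symm
    have e1 := φ.injective hh
    have e2 := φ.injective hh'
    subst e1; subst e2
    exact (hadj i hi j hj).1 h
  · intro h
    exact (hadj i ((hlab i).2 ⟨j, h⟩) j ((hlab j).2 ⟨i, h.symm⟩)).2 h

theorem RB.cov {G : SimpleGraph ℕ} {m n : ℕ} {φ : Equiv.Perm ℕ} (h : RB G m n φ) {u v : ℕ}
    (huv : G.Adj u v) : ∃ i < n, u = φ i := by
  refine ⟨φ.symm u, (h.lab _).2 ⟨φ.symm v, ?_⟩, by simp⟩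
  rw [← h.adj]
  simpa using huv

theorem RB.noniso {G : SimpleGraph ℕ} {m n : ℕ} {φ : Equiv.Perm ℕ} (h : RB G m n φ) {i : ℕ}
    (hi : i < n) : ∃ v, G.Adj (φ i) v := by
  obtain ⟨j, hj⟩ := (h.lab i).1 hi
  exact ⟨φ j, (h.adj i j).2 hj⟩

theorem RB.le16 {G : SimpleGraph ℕ} {m n : ℕ} {φ : Equiv.Perm ℕ} (h : RB G m n φ) {i : ℕ}
    (hi : i < n) : i < 16 := by
  obtain ⟨j, hj⟩ := (h.lab i).1 hi
  exact hj.1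

theorem RB.good {G : SimpleGraph ℕ} {m n k : ℕ} {φ : Equiv.Perm ℕ} (h : RB G m n φ)
    (hg : Good k (toG m)) : Good k G := by
  refine good_perm φ.symm (fun u v huv => ?_) hg
  rw [← h.adj]
  simpa using huv

theorem RB.eb {G : SimpleGraph ℕ} {m n k : ℕ} {φ : Equiv.Perm ℕ} (h : RB G m n φ)
    (he : EB G k) : EB (toG m) k := by
  have hsub : Set.image (Sym2.map φ) (toG m).edgeSet ⊆ G.edgeSet := by
    rintro _ ⟨e, hemem, rfl⟩
    induction e with
    | _ u v => exact (h.adj u v).2 hemem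
  have hinj : Set.InjOn (Sym2.map φ) (toG m).edgeSet := (Sym2.map.injective φ.injective).injOn
  refine ⟨Set.Finite.of_finite_image (he.1.subset hsub) hinj, ?_⟩
  rw [← hinj.ncard_image]
  exact (Set.ncard_le_ncard hsub he.1).trans he.2

theorem RB.deg {G : SimpleGraph ℕ} {m n k : ℕ} {φ : Equiv.Perm ℕ} (h : RB G m n φ)
    (he : EB G k) {i : ℕ} (hi : i < n) : deg G (φ i) = pc 16 (row m i) := by
  rw [← deg_eq h.wf (h.eb he) (h.le16 hi)]
  unfold TA.deg
  rw [← Finset.card_map φ.toEmbedding (s := N (toG m) i)]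
  congr 1
  ext u
  rw [he.mem, Finset.mem_map]
  constructor
  · intro hu
    refine ⟨φ.symm u, ?_, by simp⟩
    rw [(h.eb he).mem, ← h.adj]
    simpa using hu
  · rintro ⟨j, hj, rfl⟩
    rw [(h.eb he).mem] at hj
    exact (h.adj i j).2 hj

/-- Adding a vertex `a` to a represented graph. -/
theorem RB.star {G : SimpleGraph ℕ} {a m n : ℕ} {φ : Equiv.Perm ℕ} (h : RB (del G a) m n φ)
    (hcov : ∀ u, G.Adj a u → ∃ w, (del G a).Adj u w) (hne : ∃ u, G.Adj a u) :
    ∃ φ' : Equiv.Perm ℕ, (∀ i < n, φ' i = φ i) ∧ φ' n = a ∧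
      ∀ m', WF m' → (∀ i j, (toG m').Adj i j ↔ (toG m).Adj i j ∨
        (i = n ∧ j < n ∧ G.Adj a (φ j)) ∨ (j = n ∧ i < n ∧ G.Adj a (φ i))) →
        RB G m' (n + 1) φ' := by
  have hna : ∀ i < n, φ i ≠ a := by
    intro i hi hh
    obtain ⟨v, hv⟩ := h.noniso hi
    exact hv.2.1 hh
  obtain ⟨φ', h1, h2⟩ := ext_perm φ n a hna
  refine ⟨φ', h1, h2, fun m' wf hm' => RB.of wf ?_ ?_ ?_⟩
  · intro i
    constructor
    · intro hi
      by_cases hin : i = n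
      · obtain ⟨u, hu⟩ := hne
        obtain ⟨w, hw⟩ := hcov u hu
        obtain ⟨j, hj, rfl⟩ := h.cov hw
        exact ⟨j, (hm' i j).2 (Or.inr (Or.inl ⟨hin, hj, hu⟩))⟩
      · obtain ⟨j, hj⟩ := (h.lab i).1 (by omega)
        exact ⟨j, (hm' i j).2 (Or.inl hj)⟩
    · rintro ⟨j, hj⟩
      rcases (hm' i j).1 hj with h' | h' | h'
      · have := (h.lab i).2 ⟨j, h'⟩
        omega
      · omega
      · omega
  · intro i hi j hj
    rw [hm']
    have nn : ∀ j, ¬ (toG m).Adj n j := fun j hj => by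
      have := (h.lab n).2 ⟨j, hj⟩
      omega
    by_cases hin : i = n
    · by_cases hjn : j = n
      · subst hin; subst hjn
        constructor
        · intro hh
          exact absurd rfl hh.ne
        · rintro (h' | h' | h')
          · exact absurd h' (nn _)
          · omega
          · omega
      · subst hin
        rw [h2, h1 j (by omega)]
        constructor
        · intro hh
          exact Or.inr (Or.inl ⟨rfl, by omega, hh⟩)
        · rintro (h' | h' | h')
          · exact absurd h' (nn _)
          · exact h'.2.2
          · omega
    · by_cases hjn : j = n
      · subst hjn
        rw [h2, h1 i (by omega)]
        constructor
        · intro hh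
          exact Or.inr (Or.inr ⟨rfl, by omega, hh.symm⟩)
        · rintro (h' | h' | h')
          · exact absurd h'.symm (nn _)
          · omega
          · exact h'.2.2.symm
      · rw [h1 i (by omega), h1 j (by omega), ← h.adj, del_adj]
        have := hna i (by omega)
        have := hna j (by omega)
        constructor
        · intro hh
          exact Or.inl ⟨hh, hna i (by omega), hna j (by omega)⟩
        · rintro (h' | h' | h')
          · exact h'.1
          · omega
          · omega
  · intro u v huv
    by_cases hua : u = a
    · exact ⟨n, by omega, by rw [h2, hua]⟩
    · have : ∃ w, (del G a).Adj u w := by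
        by_cases hva : v = a
        · subst hva
          exact hcov u huv.symm
        · exact ⟨v, huv, hua, hva⟩
      obtain ⟨w, hw⟩ := this
      obtain ⟨i, hi, rfl⟩ := h.cov hw
      exact ⟨i, by omega, (h1 i hi).symm⟩

def un1 (m n i j : ℕ) : ℕ := addE (addE (remE m i j) n i) n j
def un2 (m n i j : ℕ) : ℕ := addE (addE m n i) n j

theorem toG_un1 {m n i0 j0 : ℕ} (h : WF m) (hn : n < 16) (hi : i0 < 16) (hj : j0 < 16)
    (hni : n ≠ i0) (hnj : n ≠ j0) (i j : ℕ) : (toG (un1 m n i0 j0)).Adj i j ↔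
      ((toG m).Adj i j ∧ ¬ (i = i0 ∧ j = j0 ∨ i = j0 ∧ j = i0)) ∨
        (i = n ∧ (j = i0 ∨ j = j0)) ∨ (j = n ∧ (i = i0 ∨ i = j0)) := by
  have w1 := h.remE (x := i0) (y := j0) hi hj
  have w2 := w1.addE hn hi hni
  rw [un1, toG_addE w2 hn hj hnj, toG_addE w1 hn hi hni, toG_remE h hi hj]
  grind

theorem toG_un2 {m n i0 j0 : ℕ} (h : WF m) (hn : n < 16) (hi : i0 < 16) (hj : j0 < 16)
    (hni : n ≠ i0) (hnj : n ≠ j0) (i j : ℕ) : (toG (un2 m n i0 j0)).Adj i j ↔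
      (toG m).Adj i j ∨
        (i = n ∧ (j = i0 ∨ j = j0)) ∨ (j = n ∧ (i = i0 ∨ i = j0)) := by
  have w2 := h.addE hn hi hni
  rw [un2, toG_addE w2 hn hj hnj, toG_addE h hn hi hni]
  grind

set_option maxHeartbeats 1000000 in
/-- Undo a suppression of `t`. -/
theorem RB.un {H : SimpleGraph ℕ} {t x y m n : ℕ} {φ : Equiv.Perm ℕ} (hxy : x ≠ y)
    (hx : H.Adj t x) (hy : H.Adj t y) (hm : ∀ u, H.Adj t u → u = x ∨ u = y)
    (h : RB (sup H t x y) m n φ) (hn : n < 16) :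
    ∃ φ' : Equiv.Perm ℕ, (∀ i < n, φ' i = φ i) ∧ φ' n = t ∧ ∃ i j, j < i ∧ i < n ∧
      b m i j = true ∧ (¬ H.Adj x y → RB H (un1 m n i j) (n + 1) φ') ∧
      (H.Adj x y → RB H (un2 m n i j) (n + 1) φ') := by
  have hedge : (sup H t x y).Adj x y := Or.inr ⟨hxy, Or.inl ⟨rfl, rfl⟩⟩
  obtain ⟨i0, hi0, hxi⟩ := h.cov hedge
  obtain ⟨j0, hj0, hyj⟩ := h.cov hedge.symm
  have hij0 : i0 ≠ j0 := by
    rintro rfl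
    exact hxy (hxi.trans hyj.symm)
  wlog hlt : j0 < i0 generalizing x y i0 j0
  · have hsw : sup H t x y = sup H t y x := by
      ext u v
      rw [sup_adj, sup_adj]
      constructor
      · rintro (h' | ⟨h', h''⟩)
        · exact Or.inl h'
        · exact Or.inr ⟨h'.symm, h''.symm⟩
      · rintro (h' | ⟨h', h''⟩)
        · exact Or.inl h'
        · exact Or.inr ⟨h'.symm, h''.symm⟩
    rw [hsw] at h hedge
    have := this hxy.symm hy hx (fun u hu => (hm u hu).symm) h hedge.symm j0 hj0 hyj i0 hi0 hxi
      hij0.symm (by omega)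
    simpa only [SimpleGraph.adj_comm H y x] using this
  have hnt : ∀ i < n, φ i ≠ t := by
    intro i hi hh
    obtain ⟨v, hv⟩ := h.noniso hi
    rw [hh] at hv
    rcases hv with hv | ⟨-, hv | hv⟩
    · exact hv.2.1 rfl
    · exact hx.ne hv.1
    · exact hy.ne hv.1
  obtain ⟨φ', h1, h2⟩ := ext_perm φ n t hnt
  have hij : (toG m).Adj i0 j0 := by
    rw [← h.adj, ← hxi, ← hyj]
    exact hedge
  have hi16 := hij.1
  have hj16 := hij.2.1
  have nn : ∀ j, ¬ (toG m).Adj n j := fun j hj => by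
    have := (h.lab n).2 ⟨j, hj⟩
    omega
  have hsupp : ∀ u v, H.Adj u v → ∃ i < n + 1, u = φ' i := by
    intro u v huv
    by_cases hut : u = t
    · exact ⟨n, by omega, by rw [h2, hut]⟩
    · have : ∃ w, (sup H t x y).Adj u w := by
        by_cases hvt : v = t
        · subst hvt
          rcases hm u huv.symm with rfl | rfl
          · exact ⟨_, hedge⟩
          · exact ⟨_, hedge.symm⟩
        · exact ⟨v, Or.inl ⟨huv, hut, hvt⟩⟩
      obtain ⟨w, hw⟩ := this
      obtain ⟨i, hi, rfl⟩ := h.cov hw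
      exact ⟨i, by omega, (h1 i hi).symm⟩
  have hti : ∀ i < n, H.Adj t (φ i) ↔ i = i0 ∨ i = j0 := by
    intro i hi
    constructor
    · intro hh
      rcases hm _ hh with hh | hh
      · exact Or.inl (φ.injective (hh.trans hxi))
      · exact Or.inr (φ.injective (hh.trans hyj))
    · rintro (rfl | rfl)
      · exact hxi ▸ hx
      · exact hyj ▸ hy
  -- a common finish
  have finish : ∀ m', WF m' →
      (∀ i j, (toG m').Adj i j ↔ ((toG m).Adj i j ∧ (H.Adj x y ∨ ¬ (i = i0 ∧ j = j0 ∨ i = j0 ∧ j = i0))) ∨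
        (i = n ∧ (j = i0 ∨ j = j0)) ∨ (j = n ∧ (i = i0 ∨ i = j0))) →
      RB H m' (n + 1) φ' := by
    intro m' wf hm'
    refine RB.of wf ?_ ?_ hsupp
    · intro i
      constructor
      · intro hi
        by_cases hin : i = n
        · exact ⟨i0, (hm' _ _).2 (Or.inr (Or.inl ⟨hin, Or.inl rfl⟩))⟩
        · by_cases hii : i = i0 ∨ i = j0
          · exact ⟨n, (hm' _ _).2 (Or.inr (Or.inr ⟨rfl, hii⟩))⟩
          · obtain ⟨j, hj⟩ := (h.lab i).1 (by omega)
            refine ⟨j, (hm' i j).2 (Or.inl ⟨hj, Or.inr ?_⟩)⟩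
            omega
      · rintro ⟨j, hj⟩
        rcases (hm' i j).1 hj with h' | h' | h'
        · have := (h.lab i).2 ⟨j, h'.1⟩
          omega
        · omega
        · omega
    · intro i hi j hj
      rw [hm']
      by_cases hin : i = n
      · subst hin
        by_cases hjn : j = i
        · subst hjn
          constructor
          · intro hh
            exact absurd rfl hh.ne
          · rintro (h' | h' | h')
            · exact absurd h'.1 (nn _)
            · omega
            · omega
        · rw [h2, h1 j (by omega), hti j (by omega)]
          constructor
          · intro hh
            exact Or.inr (Or.inl ⟨rfl, hh⟩)
          · rintro (h' | h' | h')
            · exact absurd h'.1 (nn _)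
            · exact h'.2
            · omega
      · by_cases hjn : j = n
        · subst hjn
          rw [h2, h1 i (by omega), SimpleGraph.adj_comm, hti i (by omega)]
          constructor
          · intro hh
            exact Or.inr (Or.inr ⟨rfl, hh⟩)
          · rintro (h' | h' | h')
            · exact absurd h'.1.symm (nn _)
            · omega
            · exact h'.2
        · rw [h1 i (by omega), h1 j (by omega), ← h.adj, sup_adj]
          have ni := hnt i (by omega)
          have nj := hnt j (by omega)
          constructor
          · intro hh
            refine Or.inl ⟨Or.inl ⟨hh, ni, nj⟩, ?_⟩
            by_cases hH : H.Adj x y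
            · exact Or.inl hH
            · right
              rintro (⟨rfl, rfl⟩ | ⟨rfl, rfl⟩)
              · rw [← hxi, ← hyj] at hh
                exact hH hh
              · rw [← hxi, ← hyj] at hh
                exact hH hh.symm
          · rintro (⟨h', h''⟩ | h' | h')
            · rcases h' with h' | ⟨-, h'⟩
              · exact h'.1
              · rcases h'' with h'' | h''
                · rcases h' with ⟨r, r'⟩ | ⟨r, r'⟩
                  · rw [r, r']; exact h''
                  · rw [r, r']; exact h''.symm
                · exfalso
                  apply h''
                  rcases h' with ⟨r, r'⟩ | ⟨r, r'⟩
                  · exact Or.inl ⟨φ.injective (r.trans hxi), φ.injective (r'.trans hyj)⟩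
                  · exact Or.inr ⟨φ.injective (r.trans hyj), φ.injective (r'.trans hxi)⟩
            · omega
            · omega
  refine ⟨φ', h1, h2, i0, j0, hlt, hi0, hij.2.2.2.1, fun hH => ?_, fun hH => ?_⟩
  · have w1 := h.wf.remE (x := i0) (y := j0) hi16 hj16
    have w2 := w1.addE hn hi16 (by omega : n ≠ i0)
    refine finish _ (w2.addE hn hj16 (by omega)) ?_
    intro i j
    have hn1 : n ≠ i0 := by omega
    have hn2 : n ≠ j0 := by omega
    rw [toG_un1 h.wf hn hi16 hj16 hn1 hn2]
    simp only [hH, false_or]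
  · have w2 := h.wf.addE hn hi16 (by omega : n ≠ i0)
    refine finish _ (w2.addE hn hj16 (by omega)) ?_
    intro i j
    have hn1 : n ≠ i0 := by omega
    have hn2 : n ≠ j0 := by omega
    rw [toG_un2 h.wf hn hi16 hj16 hn1 hn2]
    simp only [hH, true_or, and_true]

/-! Enumerators. -/

def allR (n : ℕ) (f : ℕ → Bool) : Bool := Nat.rec true (fun i ih => cnd (f i) ih false) n

theorem allR_true {n : ℕ} {f : ℕ → Bool} (h : allR n f = true) : ∀ i < n, f i = true := by
  induction n with
  | zero => intro i hi; omega
  | succ n ih =>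
    change cnd (f n) (allR n f) false = true at h
    rcases cnd_true h with ⟨h1, h2⟩ | ⟨-, h1⟩
    · intro i hi
      by_cases hin : i = n
      · rw [hin]; exact h1
      · exact ih h2 i (by omega)
    · exact absurd h1 (by decide)

def forE (m n : ℕ) (f : ℕ → ℕ → Bool) : Bool :=
  allR n fun i => allR i fun j =>
    cnd (Nat.beq (Nat.land (Nat.shiftRight m (Nat.add (Nat.mul 16 i) j)) 1) 1) (f i j) true

theorem forE_true {m n : ℕ} {f : ℕ → ℕ → Bool} (h : forE m n f = true) {i j : ℕ} (hj : j < i)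
    (hi : i < n) (hb : b m i j = true) : f i j = true := by
  have := allR_true (allR_true h i hi) j hj
  rw [bit_eq] at this
  have hb' : Nat.testBit m (Nat.add (Nat.mul 16 i) j) = true := hb
  rw [hb'] at this
  exact this

/-- Attach a vertex `a` to all sets of `k` labels subject to the filters. -/
def allS (mi mo : ℕ → Bool) (a : ℕ) (f : ℕ → Bool) (n : ℕ) : ℕ → ℕ → Bool :=
  Nat.rec (fun k m => cnd (Nat.beq k 0) (f m) true)
    (fun i ih k m =>
      cnd (Nat.ble k (Nat.succ i))
        (cnd (cnd (mi i) (cnd (Nat.beq k 0) true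
            (frc (Nat.sub k 1) fun k' => frc (addE m a i) fun m' => ih k' m')) true)
          (cnd (mo i) (ih k m) true) false) true) n

theorem allS_true {mi mo : ℕ → Bool} {a : ℕ} {f : ℕ → Bool} (ha : a < 16) (n : ℕ) (hn : n ≤ a)
    (S : Finset ℕ) (k m : ℕ) (hS : ∀ i ∈ S, i < n) (hk : S.card = k) (hmi : ∀ i ∈ S, mi i = true)
    (hmo : ∀ i < n, i ∉ S → mo i = true) (hm : WF m) (h : allS mi mo a f n k m = true) :
    ∃ m', f m' = true ∧ WF m' ∧ ∀ u v, (toG m').Adj u v ↔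
      (toG m).Adj u v ∨ (u = a ∧ v ∈ S) ∨ (v = a ∧ u ∈ S) := by
  induction n generalizing S k m with
  | zero =>
    have hS0 : S = ∅ := by
      apply Finset.eq_empty_of_forall_notMem
      intro i hi
      exact absurd (hS i hi) (by omega)
    subst hS0
    simp at hk
    subst hk
    exact ⟨m, h, hm, by simp⟩
  | succ n ih =>
    change cnd (Nat.ble k (Nat.succ n))
        (cnd (cnd (mi n) (cnd (Nat.beq k 0) true
            (frc (Nat.sub k 1) fun k' => frc (addE m a n) fun m' => allS mi mo a f n k' m')) true)
          (cnd (mo n) (allS mi mo a f n k m) true) false) true = true at h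
    have hkn : k ≤ n + 1 := by
      rw [← hk]
      have : S ⊆ Finset.range (n + 1) := fun i hi => Finset.mem_range.2 (hS i hi)
      simpa using Finset.card_le_card this
    rw [Nat.ble_eq_true_of_le (by exact hkn)] at h
    replace h : cnd (cnd (mi n) (cnd (Nat.beq k 0) true
            (frc (Nat.sub k 1) fun k' => frc (addE m a n) fun m' => allS mi mo a f n k' m')) true)
          (cnd (mo n) (allS mi mo a f n k m) true) false = true := h
    rcases cnd_true h with ⟨hA, hB⟩ | ⟨-, h⟩
    swap
    · exact absurd h (by decide)
    by_cases hin : n ∈ S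
    · rw [hmi n hin] at hA
      replace hA : cnd (Nat.beq k 0) true
            (frc (Nat.sub k 1) fun k' => frc (addE m a n) fun m' => allS mi mo a f n k' m') = true := hA
      rcases cnd_true hA with ⟨h0, -⟩ | ⟨-, hA⟩
      · have := Nat.eq_of_beq_eq_true h0
        rw [this] at hk
        rw [Finset.card_eq_zero] at hk
        rw [hk] at hin
        exact absurd hin (by simp)
      rw [frc_eq, frc_eq] at hA
      have hn16 : n < 16 := by omega
      have g1 : ∀ i ∈ S.erase n, i < n := by
        intro i hi
        have := hS i (Finset.mem_of_mem_erase hi)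
        have := Finset.ne_of_mem_erase hi
        omega
      have g2 : (S.erase n).card = k - 1 := by
        rw [Finset.card_erase_of_mem hin, hk]
      have g3 : ∀ i ∈ S.erase n, mi i = true := by
        intro i hi
        exact hmi i (Finset.mem_of_mem_erase hi)
      have g4 : ∀ i < n, i ∉ S.erase n → mo i = true := by
        intro i hi hiS
        refine hmo i (by omega) (fun hh => hiS (Finset.mem_erase.2 ⟨by omega, hh⟩))
      have hne : a ≠ n := by omega
      obtain ⟨m', hf, hw, hadj⟩ := ih (by omega) (S.erase n) (k - 1) (addE m a n) g1 g2 g3 g4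
        (hm.addE ha hn16 hne) hA
      refine ⟨m', hf, hw, fun u v => ?_⟩
      rw [hadj, toG_addE hm ha hn16 hne, Finset.mem_erase, Finset.mem_erase]
      have e1 : v = n → v ∈ S := fun e => e ▸ hin
      have e2 : u = n → u ∈ S := fun e => e ▸ hin
      grind
    · rw [hmo n (by omega) hin] at hB
      replace hB : allS mi mo a f n k m = true := hB
      refine ih (by omega) S k m ?_ hk hmi (fun i hi => hmo i (by omega)) hm hB
      intro i hi
      have := hS i hi
      have : i ≠ n := fun e => hin (e ▸ hi)
      omega

theorem RB.allS {G : SimpleGraph ℕ} {a m n k e : ℕ} {φ : Equiv.Perm ℕ} (h : RB (del G a) m n φ)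
    (he : EB G e) (hk : TA.deg G a = k) (hk0 : 0 < k)
    (hcov : ∀ u, G.Adj a u → ∃ w, (del G a).Adj u w) (hn : n < 16)
    {mi mo : ℕ → Bool} {f : ℕ → Bool}
    (hmi : ∀ i < n, G.Adj a (φ i) → mi i = true)
    (hmo : ∀ i < n, ¬ G.Adj a (φ i) → mo i = true)
    (hf : TA.allS mi mo n f n k m = true) :
    ∃ (m' : ℕ) (φ' : Equiv.Perm ℕ), f m' = true ∧ RB G m' (n + 1) φ' ∧
      (∀ i < n, φ' i = φ i) ∧ φ' n = a := by
  classical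
  obtain ⟨u, hu⟩ := Finset.card_pos.1 (by rw [← hk] at hk0; exact hk0 : 0 < (N G a).card)
  obtain ⟨φ', h1, h2, h3⟩ := h.star hcov ⟨u, he.mem.1 hu⟩
  have hc : ((Finset.range n).filter (fun i => G.Adj a (φ i))).card = k := by
    rw [← hk]
    unfold TA.deg
    rw [← Finset.card_map φ.toEmbedding]
    congr 1
    ext v
    rw [he.mem, Finset.mem_map]
    constructor
    · rintro ⟨i, hi, rfl⟩
      exact (Finset.mem_filter.1 hi).2
    · intro hv
      obtain ⟨w, hw⟩ := hcov v hv
      obtain ⟨i, hi, rfl⟩ := h.cov hw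
      exact ⟨i, Finset.mem_filter.2 ⟨Finset.mem_range.2 hi, hv⟩, rfl⟩
  obtain ⟨m', hfm, hw, hadj⟩ := allS_true hn n le_rfl
    ((Finset.range n).filter (fun i => G.Adj a (φ i))) k m
    (fun i hi => Finset.mem_range.1 (Finset.mem_filter.1 hi).1) hc
    (fun i hi => hmi i (Finset.mem_range.1 (Finset.mem_filter.1 hi).1) (Finset.mem_filter.1 hi).2)
    (fun i hi hno => hmo i hi (fun hh => hno (Finset.mem_filter.2 ⟨Finset.mem_range.2 hi, hh⟩)))
    h.wf hf
  refine ⟨m', φ', hfm, h3 m' hw ?_, h1, h2⟩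
  intro i j
  rw [hadj]
  simp only [Finset.mem_filter, Finset.mem_range]

end TA

namespace TA

def mK33 : ℕ := 8462609866481485548617784
def mK5 : ℕ := 276707635146073636894
def mK33e : ℕ := 8462609866481485548683322

def cores : List (ℕ × ℕ) := [(mK33, 6), (mK5, 5), (mK33e, 6)]

/-- The minor-minimal non-apex graphs with at most 15 edges, with their orders. -/
def reps : List (ℕ × ℕ) :=
  [(4991460073441584721536801570936, 7),
   (37477567420506345890971710, 6),
   (4674547423384527370887747928186, 7),
   (4833003748413056046349709541498, 7),
   (612701883728581590358977810399756400, 8),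
   (623086002076676160048308565520679032, 8),
   (602317290011511935101916817732993138, 8),
   (77585802368308989228643672626591233998960, 9),
   (9990920326430750454895222530989243065134743664, 10)]

/-- Labelled graphs met in the search, with isomorphisms to the list above. -/
def certs : List (ℕ × ℕ × ℕ × ℕ) :=
  [(4991460073441584721536801570936, 0, 18364758544493064720, 18364758544493064720),
   (37477567420506345890971710, 1, 18364758544493064720, 18364758544493064720),
   (4753770750343091706304216694844, 2, 18364758544460350770, 18364758544473264195),
   (4595316843166202260233746448442, 2, 18364758544460416305, 18364758544473265155),
   (4516089889577757537265079877726, 2, 18364758544460420400, 18364758544473265200),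
   (4278409028812414079843771940918, 2, 18364758544460481825, 18364758544473276675),
   (4199182075223969075404423364702, 2, 18364758544460485920, 18364758544473276720),
   (4040728168047079066353935384670, 2, 18364758544460490000, 18364758544473277200),
   (3644593399496123030370634235950, 2, 18364758544443770145, 18364758544473153795),
   (3565366445889231563332552294494, 2, 18364758544443774240, 18364758544473153840),
   (3406912538675448629050239418462, 2, 18364758544443778320, 18364758544473154320),
   (3090004724247869250305200554078, 2, 18364758544427005200, 18364758544473142800),
   (4674547423384527370887747928186, 2, 18364758544493064720, 18364758544493064720),
   (4833003748413056046349709541498, 3, 18364758544493064720, 18364758544493064720),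
   (4912231910927320383943257686074, 3, 18364758544493064705, 18364758544493064705),
   (623086002076676160048308565520679032, 5, 18364758544493064720, 18364758544493064720),
   (591932696294442279844855275327127666, 4, 18364758542832133890, 18364758543100567665),
   (602317290011511935101916817732993138, 6, 18364758544493064720, 18364758544493064720),
   (586740478664069966480380897560428730, 4, 18364758542563698450, 18364758543100567575),
   (602317369239674449365972936303902778, 6, 18364758543100569360, 18364758543100569360),
   (550394955251462573911243135410307178, 4, 18364758542848845570, 18364758543100690545),
   (560779548968532229168304677816172650, 6, 18364758544493003280, 18364758544493003280),
   (545202737621090242100306158910243002, 4, 18364758542580410130, 18364758543100690455),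
   (560779628196694724985898197653717050, 6, 18364758543117281040, 18364758543100692240),
   (467319473086926580847570585610944602, 4, 18364758542864574210, 18364758543101673585),
   (477704066803996236104632128016810074, 6, 18364758544491958800, 18364758544491037200),
   (462127255455345341663763053644677306, 4, 18364758542596138770, 18364758543101673495),
   (477704146030949824549355092388151354, 6, 18364758543133009680, 18364758543101675280),
   (612701883728581590358977810399756400, 4, 18364758544493064720, 18364758544493064720),
   (607509666098209276994503432633057464, 4, 18364758544493064705, 18364758544493064705),
   (597125230837464650265554367876169912, 4, 18364758544493064450, 18364758544493064225),
   (571164142685601884425365670482935912, 4, 18364758544493003280, 18364758544493003280),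
   (565971925055229552614428693982871736, 4, 18364758544493003265, 18364758544493003265),
   (555587489794484888992554397401088184, 4, 18364758544493003010, 18364758544493002785),
   (488088660521065891361693120683573336, 4, 18364758544491958800, 18364758544491037200),
   (482896442889484652177885588717306040, 4, 18364758544491958785, 18364758544491037185),
   (472512007626322173810270112486785208, 4, 18364758544491958530, 18364758544491036705),
   (77585802368308989228643672626591233998960, 7, 18364758544493064720, 18364758544493064720),
   (9990920326430750454895222530989243065134743664, 8, 18364758544493064720, 18364758544493064720),
   (76905248019060829371335286983954471059568, 7, 18364758544493064480, 18364758544493064480),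
   (9990919645876401206737783074242829824158072944, 8, 18364758540465549840, 18364758540465549840),
   (72141367574323553212513262223413738995824, 7, 18364758544492081680, 18364758544492081680),
   (9990914881995956469464042030070322178219835504, 8, 18364758544492081680, 18364758544492081680),
   (71460813225075390937390130839597327319152, 7, 18364758544492081440, 18364758544492081440),
   (9990914201441607221301766943832426577945690224, 8, 18364758540466532880, 18364758540466532880),
   (77585797176091358856348754896287177900200, 7, 18364758544241345040, 18364758544241345040),
   (9990920326425558237264850236071512761078644904, 8, 18364758544241345040, 18364758544241345040),
   (76564965652219119070386176432641256980792, 7, 18364758544493064225, 18364758544493064450),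
   (9990919305594034365028691050951893140120797464, 8, 18364758539962110480, 18364758536186315280),
   (72141362382105924049125717363665149100184, 7, 18364758544240300560, 18364758544239378960),
   (9990914881990764251834878642525462429629939864, 8, 18364758544240300560, 18364758544239378960),
   (71120530858233680636441020288284113240376, 7, 18364758544492081185, 18364758544492081410),
   (9990913861159240379591466013168619338442211624, 8, 18364758539963154960, 18364758536188281360),
   (76905232442407938254450533792801795604648, 7, 18364758544241344800, 18364758544241344800),
   (9990919645860824553846666189489638671482618024, 8, 18364758536186315280, 18364758539962110480),
   (76564955267783858325796340971792637624632, 7, 18364758544241344545, 18364758544241344770),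
   (9990919305583649929767946461116432291501441304, 8, 18364758535934595600, 18364758535934595600),
   (71460797648422503447227496260179766804632, 7, 18364758544240300320, 18364758544239378720),
   (9990914201426030568414276781197847160385175704, 8, 18364758536186253840, 18364758539961127440),
   (71120520473798422309665930568615142621496, 7, 18364758544240300065, 18364758544239378690),
   (9990913861148855944333139238078899669471592744, 8, 18364758535934657040, 18364758535935578640),
   (77585760830567946248974631939648783384680, 7, 18364758544493003280, 18364758544493003280),
   (9990920326389212713852242861948556122684129384, 8, 18364758544493003280, 18364758544493003280),
   (76905206481319786391703139222243845341288, 7, 18364758544493003040, 18364758544493003040),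
   (9990919645834863465694803442095068113532354664, 8, 18364758540464505360, 18364758540465426960),
   (69419108639589870801360212783152506601576, 7, 18364758544491037200, 18364758544491958800),
   (9990912159737021735781630950806732346278543464, 8, 18364758544491037200, 18364758544491958800),
   (68738554290341708526237081399336094924904, 7, 18364758544491036960, 18364758544491958560),
   (9990911479182672487619355827675911514179502184, 8, 18364758540466471440, 18364758540466471440),
   (77585755638350315876642821284147260555440, 7, 18364758544241406480, 18364758544241406480),
   (9990920326384020496221870530137900621161300144, 8, 18364758544241406480, 18364758544241406480),
   (76564924114478076090735582208331897897272, 7, 18364758544493002785, 18364758544493003010),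
   (9990919305552496623985711400357668830761713944, 8, 18364758539961127440, 18364758536186253840),
   (69419103447372241637954221460805183340696, 7, 18364758544239317520, 18364758544239317520),
   (9990912159731829518152467544815409998955282584, 8, 18364758544239317520, 18364758544239317520),
   (68398271923499998225269524385424147480888, 7, 18364758544491036705, 18364758544491958530),
   (9990911138900305645909054860119179077209293104, 8, 18364758539963216400, 18364758536188342800),
   (76905190904666895274707707255430053363888, 7, 18364758544241406240, 18364758544241406240),
   (9990919645819286812803686446663101299740377264, 8, 18364758536187359760, 18364758539962233360),
   (76564913730042815346071960897019628749112, 7, 18364758544241405985, 18364758544241406210),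
   (9990919305542112188724966736736357518492565784, 8, 18364758535935578640, 18364758535934657040),
   (68738538713688821036019107432087976149144, 7, 18364758544239317280, 18364758544239317280),
   (9990911479167095834731865609701944266060726424, 8, 18364758536187236880, 18364758539961188880),
   (68398261539064739898457541740523351966008, 7, 18364758544239317025, 18364758544239317250),
   (9990911138889921210650728048136534176413778224, 8, 18364758535935701520, 18364758535935701520),
   (72141242961100348114665903605032420376664, 7, 18364758544491958800, 18364758544491037200),
   (9990914881871343246258944182711703796901216344, 8, 18364758544491958800, 18364758544491037200),
   (71460688611852188257394410887627482333272, 7, 18364758544491958560, 18364758544491036960),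
   (9990914201316993998099086948112474608100704344, 8, 18364758540464443920, 18364758540464443920),
   (69419025564107708683181894851713638596696, 7, 18364758544490975760, 18364758544490975760),
   (9990912159653946253619512772488800907410538584, 8, 18364758544490975760, 18364758544490975760),
   (68738471214859548825873509209076875657304, 7, 18364758544490975520, 18364758544490975520),
   (9990911479099597005459655464103721254960234584, 8, 18364758540465426960, 18364758540464505360),
   (72141237768882716533426720078975431344304, 7, 18364758544240423440, 18364758544240423440),
   (9990914881866151028627362943528177739912183984, 8, 18364758544240423440, 18364758544240423440),
   (71120406245010476747519481003160068686136, 7, 18364758544491958305, 18364758544491036930),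
   (9990913861034627156387577091629334214397657384, 8, 18364758539961188880, 18364758536187236880),
   (69419020371890077101961157788255382929576, 7, 18364758544239378960, 18364758544240300560),
   (9990912159648754035987931551751737449154871464, 8, 18364758544239378960, 18364758544240300560),
   (68398188848017837315998579324609462010168, 7, 18364758544490975265, 18364758544490975490),
   (9990911138817230163748145589174118262523822384, 8, 18364758539962233360, 18364758536187359760),
   (71460673035199293513676860309078575415472, 7, 18364758544240423200, 18364758544240423200),
   (9990914201301417345204343230561896059193786544, 8, 18364758536188342800, 18364758539963216400),
   (71120395860575213585041113950668150800696, 7, 18364758544240422945, 18364758544240423170),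
   (9990913861024242721124414613262281722479771944, 8, 18364758535936623120, 18364758535936623120),
   (68738455638206654082211298018358527000744, 7, 18364758544239378720, 18364758544240300320),
   (9990911479084020352564911801892530536611578024, 8, 18364758536188281360, 18364758539963154960),
   (68398178463582574153557105197349369020728, 7, 18364758544239378465, 18364758544240300290),
   (9990911138806845728484983147699991002430832944, 8, 18364758535936684560, 18364758535936684560)]

def okc (m n : ℕ) : Prop :=
  (∀ i < 16, ∀ j < 16, b m i j = true → b m j i = true ∧ i ≠ j) ∧
    (∀ i < 16, i < n ↔ row m i ≠ 0) ∧ n ≤ 16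

instance (m n : ℕ) : Decidable (okc m n) := by unfold okc; infer_instance

theorem okc.wf {m n : ℕ} (h : okc m n) : WF m := fun i j hi hj hb => h.1 i hi j hj hb

theorem okc.lab {m n : ℕ} (h : okc m n) (i : ℕ) : i < n ↔ ∃ j, (toG m).Adj i j := by
  constructor
  · intro hi
    have h16 : i < 16 := by have := h.2.2; omega
    obtain ⟨j, hj⟩ := Nat.exists_testBit_of_ne_zero ((h.2.1 i h16).1 hi)
    exact ⟨j, (adj_row h.wf h16 j).2 hj⟩
  · rintro ⟨j, hj⟩
    refine (h.2.1 i hj.1).2 (fun h0 => ?_)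
    have := (adj_row h.wf hj.1 j).1 hj
    rw [h0] at this
    simp at this

theorem cores_ok : ∀ c ∈ cores, okc c.1 c.2 := by decide +kernel
theorem reps_ok : ∀ c ∈ reps, okc c.1 c.2 := by decide +kernel

theorem ex_rb {W : Type} {H : SimpleGraph W} {G : SimpleGraph ℕ} {p : W → ℕ} (h : Ex H G p)
    {n m : ℕ} (e : Fin n ≃ W) (hm : okc m n)
    (hadj : ∀ i j : Fin n, H.Adj (e i) (e j) ↔ b m i j = true) : ∃ φ, RB G m n φ := by
  obtain ⟨φ, hφ⟩ := exists_perm n (fun i => if hi : i < n then p (e ⟨i, hi⟩) else 0) (by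
    intro i hi j hj hh
    simp only [hi, hj, dif_pos] at hh
    have := e.injective (h.1 hh)
    simpa using this)
  have hφ' : ∀ i (hi : i < n), φ i = p (e ⟨i, hi⟩) := fun i hi => by
    rw [hφ i hi, dif_pos hi]
  refine ⟨φ, RB.of hm.wf hm.lab ?_ ?_⟩
  · intro i hi j hj
    rw [hm.wf.adj, h.2, hφ' i hi, hφ' j hj]
    have h16 := hm.2.2
    constructor
    · rintro ⟨w, w', hw, e1, e2⟩
      rw [← h.1 e1, ← h.1 e2] at hw
      exact ⟨by omega, by omega, (hadj ⟨i, hi⟩ ⟨j, hj⟩).1 hw⟩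
    · rintro ⟨-, -, hb⟩
      exact ⟨_, _, (hadj ⟨i, hi⟩ ⟨j, hj⟩).2 hb, rfl, rfl⟩
  · intro u v huv
    obtain ⟨w, w', -, rfl, -⟩ := (h.2 u v).1 huv
    refine ⟨e.symm w, (e.symm w).2, ?_⟩
    rw [hφ' _ (e.symm w).2]
    simp

def e33 : Fin 6 ≃ Fin 3 ⊕ Fin 3 := (finSumFinEquiv (m := 3) (n := 3)).symm

theorem core10_rb {G : SimpleGraph ℕ} (h : EB G 10) (h3 : R3 G) (hn : ¬ G.IsPlanar) :
    ∃ c ∈ cores, ∃ φ, RB G c.1 c.2 φ := by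
  rcases core10 h h3 hn with ⟨p, hp⟩ | ⟨p, hp⟩ | ⟨p, hp⟩
  · exact ⟨(mK33, 6), by simp [cores], ex_rb hp (m := mK33) (n := 6) e33
      (cores_ok (mK33, 6) (by simp [cores])) (by decide +kernel)⟩
  · exact ⟨(mK5, 5), by simp [cores], ex_rb hp (m := mK5) (n := 5) (Equiv.refl _)
      (cores_ok (mK5, 5) (by simp [cores])) (by decide +kernel)⟩
  · exact ⟨(mK33e, 6), by simp [cores], ex_rb hp (m := mK33e) (n := 6) e33
      (cores_ok (mK33e, 6) (by simp [cores])) (by decide +kernel)⟩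

theorem core9_rb {G : SimpleGraph ℕ} (h : EB G 9) (hn : ¬ G.IsPlanar) :
    ∃ φ, RB G mK33 6 φ := by
  obtain ⟨p, hp⟩ := core9 h hn
  exact ex_rb hp (m := mK33) (n := 6) e33
      (cores_ok (mK33, 6) (by simp [cores])) (by decide +kernel)

def Rep9 (G : SimpleGraph ℕ) : Prop := ∃ c ∈ reps, ∃ φ, RB G c.1 c.2 φ

/-! Edge counts. -/

def sumR (f : ℕ → ℕ) (n : ℕ) : ℕ := Nat.rec 0 (fun i ih => Nat.add ih (f i)) n

theorem sumR_eq (f : ℕ → ℕ) (n : ℕ) : sumR f n = ∑ i ∈ Finset.range n, f i := by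
  induction n with
  | zero => rfl
  | succ n ih =>
    rw [Finset.sum_range_succ, ← ih]
    rfl

def dsum (m : ℕ) : ℕ := sumR (fun i => pc 16 (row m i)) 16

theorem dsum_eq {m e : ℕ} (h : WF m) (he : EB (toG m) e) :
    dsum m = ∑ i ∈ Finset.range 16, deg (toG m) i := by
  rw [dsum, sumR_eq]
  apply Finset.sum_congr rfl
  intro i hi
  rw [deg_eq h he (Finset.mem_range.1 hi)]

theorem eb_esum {m e : ℕ} (h : WF m) (he : EB (toG m) e) : EB (toG m) (Nat.div (dsum m) 2) := by
  have := eb_sum he (Finset.range 16) (fun u v huv => Finset.mem_range.2 huv.1)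
  rw [← dsum_eq h he] at this
  exact this

theorem reps_dsum : ∀ c ∈ reps, dsum c.1 = 30 := by decide +kernel

theorem Rep9.not_eb {G : SimpleGraph ℕ} (h : Rep9 G) : ¬ EB G 14 := by
  intro he
  obtain ⟨c, hc, φ, hφ⟩ := h
  have h1 := handshake_sum (hφ.eb he) (Finset.range 16)
  rw [← dsum_eq hφ.wf (hφ.eb he), reps_dsum c hc] at h1
  omega

/-! The test for one vertex. -/

def order : List ℕ := [0,1,2,3,4,5,6,7,8,9,10,11,0,1,2,3,4,5,6,7,8,9,10,11,0,1,2,3,4,5]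

theorem order_sound : Snd (red fin order) := red_sound fin_sound order (by decide)

def surv (m : ℕ) (l : List (ℕ × ℕ × ℕ × ℕ)) : Bool :=
  List.rec false (fun c _ ih => cnd (Nat.beq c.1 m) true ih) l

theorem surv_true {m : ℕ} {l : List (ℕ × ℕ × ℕ × ℕ)} (h : surv m l = true) :
    ∃ c ∈ l, c.1 = m := by
  induction l with
  | nil => exact absurd h (by simp [surv])
  | cons c l ih =>
    change cnd (Nat.beq c.1 m) true (surv m l) = true at h
    rcases cnd_true h with ⟨h1, -⟩ | ⟨-, h1⟩
    · exact ⟨c, List.mem_cons_self, Nat.eq_of_beq_eq_true h1⟩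
    · obtain ⟨w, hw, hf⟩ := ih h1
      exact ⟨w, List.mem_cons_of_mem _ hw, hf⟩

def pf (P i : ℕ) : ℕ := if i < 16 then (P >>> (4 * i)) &&& 15 else i

def certOK (c : ℕ × ℕ × ℕ × ℕ) : Prop :=
  ((∀ i < 16, pf c.2.2.1 (pf c.2.2.2 i) = i ∧ pf c.2.2.2 (pf c.2.2.1 i) = i) ∧ c.2.1 < 9) ∧
  ∀ i < 16, ∀ j < 16, b c.1 (pf c.2.2.1 i) (pf c.2.2.1 j) = b (reps.getD c.2.1 (0, 0)).1 i j

instance (c : ℕ × ℕ × ℕ × ℕ) : Decidable (certOK c) := by unfold certOK; infer_instance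

theorem certs_ok : ∀ c ∈ certs, certOK c := by decide +kernel

theorem pf_lt (P : ℕ) {i : ℕ} (hi : i < 16) : pf P i < 16 := by
  rw [pf, if_pos hi]
  exact lt_of_le_of_lt Nat.and_le_right (by norm_num)

theorem pf_ge (P : ℕ) {i : ℕ} (hi : ¬ i < 16) : pf P i = i := by
  rw [pf, if_neg hi]

theorem cert_rep {G : SimpleGraph ℕ} {c : ℕ × ℕ × ℕ × ℕ} (hc : c ∈ certs) {n : ℕ}
    {φ : Equiv.Perm ℕ} (h : RB G c.1 n φ) : Rep9 G := by
  obtain ⟨⟨h1, h2⟩, h3⟩ := certs_ok c hc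
  have hmem : reps.getD c.2.1 (0, 0) ∈ reps := by
    rw [List.getD_eq_getElem _ _ (by exact h2)]
    exact List.getElem_mem _
  generalize reps.getD c.2.1 (0, 0) = q at hmem h3
  have hok := reps_ok q hmem
  let σ : Equiv.Perm ℕ := ⟨pf c.2.2.1, pf c.2.2.2, fun i => by
    by_cases hi : i < 16
    · exact (h1 i hi).2
    · rw [pf_ge _ hi, pf_ge _ hi], fun i => by
    by_cases hi : i < 16
    · exact (h1 i hi).1
    · rw [pf_ge _ hi, pf_ge _ hi]⟩
  refine ⟨q, hmem, σ.trans φ, hok.wf, fun i j => ?_, hok.lab⟩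
  change G.Adj (φ (pf c.2.2.1 i)) (φ (pf c.2.2.1 j)) ↔ _
  rw [h.adj, h.wf.adj, hok.wf.adj]
  have key : ∀ i, pf c.2.2.1 i < 16 ↔ i < 16 := by
    intro i
    by_cases hi : i < 16
    · simp [hi, pf_lt]
    · rw [pf_ge _ hi]
  rw [key, key]
  constructor
  · rintro ⟨hi, hj, hb⟩
    exact ⟨hi, hj, by rw [← h3 i hi j hj]; exact hb⟩
  · rintro ⟨hi, hj, hb⟩
    exact ⟨hi, hj, by rw [h3 i hi j hj]; exact hb⟩

def l1ok (m : ℕ) : Bool :=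
  frc (Nat.div (dsum m) 2) fun e =>
    cnd (anyL (fun v => test1 (red fin order) m e v) [0, 3, 1, 4, 5]) true (surv m certs)

theorem l1ok_sound {G : SimpleGraph ℕ} {m n e : ℕ} {φ : Equiv.Perm ℕ} (h : RB G m n φ)
    (he : EB G e) (hG : ¬ Good 1 G) (hl : l1ok m = true) : Rep9 G := by
  unfold l1ok at hl
  rw [frc_eq] at hl
  rcases cnd_true hl with ⟨h1, -⟩ | ⟨-, h1⟩
  · obtain ⟨v, hv, hf⟩ := anyL_true h1
    exfalso
    refine hG (h.good (test1_sound (n := 0) order_sound ?_ h.wf (eb_esum h.wf (h.eb he)) hf))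
    simp at hv
    omega
  · obtain ⟨c, hc, rfl⟩ := surv_true h1
    exact cert_rep hc h

/-! The test for two vertices. -/

def anyP (f : ℕ → ℕ → Bool) (l : List (ℕ × ℕ)) : Bool :=
  List.rec false (fun v _ ih => cnd (f v.1 v.2) true ih) l

theorem anyP_true {f : ℕ → ℕ → Bool} {l : List (ℕ × ℕ)} (h : anyP f l = true) :
    ∃ v ∈ l, f v.1 v.2 = true := by
  induction l with
  | nil => exact absurd h (by simp [anyP])
  | cons v l ih =>
    change cnd (f v.1 v.2) true (anyP f l) = true at h
    rcases cnd_true h with ⟨h1, -⟩ | ⟨-, h1⟩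
    · exact ⟨v, List.mem_cons_self, h1⟩
    · obtain ⟨w, hw, hf⟩ := ih h1
      exact ⟨w, List.mem_cons_of_mem _ hw, hf⟩

def l2ok (l : List (ℕ × ℕ)) (m : ℕ) : Bool :=
  anyP (fun v w => test1 (fun m' e' => test1 (red fin order) m' e' w) m 20 v) l

theorem l2ok_sound {G : SimpleGraph ℕ} {m n : ℕ} {φ : Equiv.Perm ℕ} (h : RB G m n φ)
    (he : EB G 20) {l : List (ℕ × ℕ)} (hl16 : ∀ p ∈ l, p.1 < 16 ∧ p.2 < 16)
    (hl : l2ok l m = true) : Good 2 G := by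
  obtain ⟨p, hp, hf⟩ := anyP_true hl
  refine h.good (test1_sound (n := 1) ?_ (hl16 p hp).1 h.wf (h.eb he) hf)
  intro m e hm he hk
  exact test1_sound (n := 0) order_sound (hl16 p hp).2 hm he hk

def tt (_ : ℕ) : Bool := true
def ltn (n i : ℕ) : Bool := Nat.blt i n
def le3 (m i : ℕ) : Bool := Nat.ble (pc 16 (row m i)) 3
def ge4 (m i : ℕ) : Bool := Nat.ble 4 (pc 16 (row m i))

/-! The computations for one vertex. -/

theorem c1_33_6 : allS tt tt 6 l1ok 6 6 mK33 = true := by decide +kernel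

def star (k : ℕ) (f : ℕ → Bool) (c : ℕ × ℕ) : Bool := allS tt tt c.2 f c.2 k c.1
def starF (k n : ℕ) (f : ℕ → Bool) (n' m : ℕ) : Bool := allS tt (ltn n) n' f n' k m
def u1 (n : ℕ) (f : ℕ → Bool) (m : ℕ) : Bool := forE m n fun i j => frc (un1 m n i j) f
def u2 (n : ℕ) (f : ℕ → Bool) (m : ℕ) : Bool := forE m n fun i j => frc (un2 m n i j) f

theorem c1_5 : ∀ c ∈ cores, star 5 l1ok c = true := by decide +kernel
theorem c1_4 : ∀ c ∈ cores, star 4 l1ok c = true := by decide +kernel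
theorem c1_u4 : ∀ c ∈ cores, u1 c.2 (starF 4 c.2 l1ok (c.2 + 1)) c.1 = true := by decide +kernel
theorem c1_u5 : u1 6 (starF 5 6 l1ok 7) mK33 = true := by decide +kernel
theorem c1_v4 : u2 6 (starF 4 6 l1ok 7) mK33 = true := by decide +kernel
theorem c1_uu4 : u1 6 (u1 7 (starF 4 6 l1ok 8)) mK33 = true := by decide +kernel
theorem c1_uuu3 : u1 6 (u1 7 (u1 8 (starF 3 6 l1ok 9))) mK33 = true := by decide +kernel

/-! The computations for two vertices. -/

def pA : List (ℕ × ℕ) := [(4, 5), (1, 2), (6, 7), (1, 4), (0, 3)]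
def pB : List (ℕ × ℕ) := [(0, 2), (3, 5), (2, 5), (8, 10), (0, 3), (1, 4)]
def pC : List (ℕ × ℕ) := [(3, 4), (6, 7)]

def star3 (k n : ℕ) (f : ℕ → Bool) (n' m : ℕ) : Bool := allS (le3 m) (ltn n) n' f n' k m
def star34 (f : ℕ → Bool) (n' m : ℕ) : Bool := allS (le3 m) (ge4 m) n' f n' 4 m
def starC (n : ℕ) (m : ℕ) : Bool :=
  star3 4 n (star34 (l2ok pC) (n + 3)) (n + 2) m

theorem c2_A : ∀ c ∈ reps, star 5 (l2ok pA) c = true := by decide +kernel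
theorem c2_B : ∀ c ∈ reps, u1 c.2 (star3 4 c.2 (l2ok pB) (c.2 + 1)) c.1 = true := by
  decide +kernel
theorem c2_uu : ∀ c ∈ cores, u1 c.2 (u1 (c.2 + 1) (starC c.2)) c.1 = true := by decide +kernel
theorem c2_vu : u2 6 (u1 7 (starC 6)) mK33 = true := by decide +kernel
theorem c2_uv : u1 6 (u2 7 (starC 6)) mK33 = true := by decide +kernel

end TA

namespace TA

theorem cores_lt : ∀ c ∈ cores, c.2 < 10 := by decide
theorem reps_lt : ∀ c ∈ reps, c.2 < 11 := by decide

theorem ltn_true {n i : ℕ} (h : i < n) : ltn n i = true := by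
  unfold ltn
  simpa using h

structure St (H : SimpleGraph ℕ) (t x y : ℕ) : Prop where
  ne : x ≠ y
  ax : H.Adj t x
  ay : H.Adj t y
  nb : ∀ u, H.Adj t u → u = x ∨ u = y

theorem sup_step {H : SimpleGraph ℕ} {k t : ℕ} (h : EB H k) (hd : deg H t = 2)
    (hp : ¬ H.IsPlanar) : ∃ x y, St H t x y ∧ ¬ (sup H t x y).IsPlanar ∧
      ((¬ H.Adj x y ∧ EB (sup H t x y) (k - 1) ∧ ∀ v, v ≠ t → deg (sup H t x y) v = deg H v) ∨
       (H.Adj x y ∧ EB (sup H t x y) (k - 2) ∧ ∀ v, v ≠ t → deg (sup H t x y) v ≤ deg H v ∧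
        deg H v ≤ deg (sup H t x y) v + 1 ∧ (¬ H.Adj v t → deg (sup H t x y) v = deg H v))) := by
  obtain ⟨x, y, hxy, hx, hy, hm⟩ := nb_of_two h hd
  refine ⟨x, y, ⟨hxy, hx, hy, hm⟩, fun hh => hp (good_sup' (k := 0) hm hh), ?_⟩
  by_cases hH : H.Adj x y
  · refine Or.inr ⟨hH, (eb_dup h hH hx hy).2, fun v hv => ?_⟩
    rw [deg_sup_dup hH hx.ne.symm hy.ne.symm v]
    by_cases hvt : H.Adj v t
    · have := deg_del_of_adj h hvt
      exact ⟨by omega, by omega, fun hh => absurd hvt hh⟩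
    · have := deg_del_of_not h hv hvt
      exact ⟨by omega, by omega, fun _ => this⟩
  · exact Or.inl ⟨hH, (eb_sup h hxy hx hy).2, fun v hv => deg_sup h hxy hx hy hm hH hv⟩

theorem r3_9 {H : SimpleGraph ℕ} (h : EB H 9) (hp : ¬ H.IsPlanar) : R3 H :=
  reduced (k := 0) (m := 8) (fun _ hG => planar8 hG) h hp

theorem no2 {H : SimpleGraph ℕ} (h : EB H 9) (hp : ¬ H.IsPlanar) {t : ℕ} (h1 : 1 ≤ deg H t)
    (h2 : deg H t ≤ 2) : False := by
  obtain ⟨u, hu⟩ := Finset.card_pos.1 h1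
  have := r3_9 h hp t u (h.mem.1 hu)
  omega

theorem St.u1 {H : SimpleGraph ℕ} {t x y m n : ℕ} (s : St H t x y) (hH : ¬ H.Adj x y)
    {φ : Equiv.Perm ℕ} (h : RB (sup H t x y) m n φ) (hn : n < 16) {f : ℕ → Bool}
    (hf : TA.u1 n f m = true) : ∃ m' φ', f m' = true ∧ RB H m' (n + 1) φ' ∧
      (∀ i < n, φ' i = φ i) ∧ φ' n = t := by
  obtain ⟨φ', h1, h2, i, j, hji, hi, hb, h3, -⟩ := h.un s.ne s.ax s.ay s.nb hn
  have := forE_true hf hji hi hb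
  rw [frc_eq] at this
  exact ⟨_, φ', this, h3 hH, h1, h2⟩

theorem St.u2 {H : SimpleGraph ℕ} {t x y m n : ℕ} (s : St H t x y) (hH : H.Adj x y)
    {φ : Equiv.Perm ℕ} (h : RB (sup H t x y) m n φ) (hn : n < 16) {f : ℕ → Bool}
    (hf : TA.u2 n f m = true) : ∃ m' φ', f m' = true ∧ RB H m' (n + 1) φ' ∧
      (∀ i < n, φ' i = φ i) ∧ φ' n = t := by
  obtain ⟨φ', h1, h2, i, j, hji, hi, hb, -, h3⟩ := h.un s.ne s.ax s.ay s.nb hn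
  have := forE_true hf hji hi hb
  rw [frc_eq] at this
  exact ⟨_, φ', this, h3 hH, h1, h2⟩

theorem cov_of {G : SimpleGraph ℕ} {e a : ℕ} (h : EB G e) (h3 : R3 G) (u : ℕ) (hu : G.Adj a u) :
    ∃ w, (del G a).Adj u w := by
  have h1 := h3 u a hu.symm
  have h2 := deg_del_of_adj h hu.symm
  obtain ⟨w, hw⟩ := Finset.card_pos.1 (by change 0 < deg (del G a) u; omega :
    0 < (N (del G a) u).card)
  exact ⟨w, (eb_del_le h a).mem.1 hw⟩

/-- final star step with no filter -/
theorem RB.star_tt {G : SimpleGraph ℕ} {a m n k e : ℕ} {φ : Equiv.Perm ℕ} (h : RB (del G a) m n φ)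
    (he : EB G e) (h3 : R3 G) (hk : TA.deg G a = k) (hk0 : 0 < k) (hn : n < 16) {f : ℕ → Bool}
    (hf : TA.allS tt tt n f n k m = true) :
    ∃ (m' : ℕ) (φ' : Equiv.Perm ℕ), f m' = true ∧ RB G m' (n + 1) φ' := by
  obtain ⟨m', φ', h1, h2, -⟩ := h.allS he hk hk0 (cov_of he h3) hn (mi := tt) (mo := tt)
    (fun _ _ _ => rfl) (fun _ _ _ => rfl) hf
  exact ⟨m', φ', h1, h2⟩

/-- final star step where the labels from `n0` on are forced -/
theorem RB.star_f {G : SimpleGraph ℕ} {a m n n0 k e : ℕ} {φ : Equiv.Perm ℕ}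
    (h : RB (del G a) m n φ)
    (he : EB G e) (h3 : R3 G) (hk : TA.deg G a = k) (hk0 : 0 < k) (hn : n < 16) {f : ℕ → Bool}
    (hforce : ∀ i < n, n0 ≤ i → G.Adj a (φ i))
    (hf : starF k n0 f n m = true) :
    ∃ (m' : ℕ) (φ' : Equiv.Perm ℕ), f m' = true ∧ RB G m' (n + 1) φ' := by
  obtain ⟨m', φ', h1, h2, -⟩ := h.allS he hk hk0 (cov_of he h3) hn (mi := tt) (mo := ltn n0)
    (fun _ _ _ => rfl) (fun i hi hna => ltn_true (by
      by_contra hh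
      exact hna (hforce i hi (by omega)))) hf
  exact ⟨m', φ', h1, h2⟩


theorem np {G : SimpleGraph ℕ} (h : EB G 15) (h3 : R3 G)
    (hG : ¬ Good 1 G) (a : ℕ) : ¬ (del G a).IsPlanar := fun hh => hG ⟨a, hh⟩

theorem l1_le6 {G : SimpleGraph ℕ} (h : EB G 15) (h3 : R3 G)
    (hG : ¬ Good 1 G) (a : ℕ) : deg G a ≤ 6 := by
  by_contra hh
  exact np h h3 hG a (planar8 ((eb_del h a).2.mono (by omega)))

theorem l1_6 {G : SimpleGraph ℕ} (h : EB G 15) (h3 : R3 G)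
    (hG : ¬ Good 1 G) {a : ℕ} (ha : deg G a = 6) : Rep9 G := by
  obtain ⟨φ, hφ⟩ := core9_rb ((eb_del h a).2.mono (by omega)) (np h h3 hG a)
  obtain ⟨m', φ', h1, h2⟩ := hφ.star_tt h h3 ha (by omega) (by omega) c1_33_6
  exact l1ok_sound h2 h hG h1

theorem r3_del {G : SimpleGraph ℕ} (h : EB G 15) (h3 : R3 G)
    (hG : ¬ Good 1 G) {a : ℕ} (hno : ∀ t, G.Adj a t → deg G t ≠ 3) : R3 (del G a) := by
  intro v u hvu
  have hv := hvu.2.1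
  have h1 := h3 v u hvu.1
  by_cases hva : G.Adj v a
  · have := deg_del_of_adj h hva
    have := hno v hva.symm
    omega
  · rw [deg_del_of_not h hv hva]
    exact h1

theorem l1_5 {G : SimpleGraph ℕ} (h : EB G 15) (h3 : R3 G)
    (hG : ¬ Good 1 G) {a : ℕ} (ha : deg G a = 5) : Rep9 G := by
  have hE : EB (del G a) 10 := (eb_del h a).2.mono (by omega)
  by_cases ht : ∃ t, G.Adj a t ∧ deg G t = 3
  · obtain ⟨t, hat, ht⟩ := ht
    have hd := deg_del_of_adj h hat.symm
    obtain ⟨x, y, s, hpl, ⟨hH, hE', -⟩ | ⟨hH, hE', -⟩⟩ :=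
      sup_step hE (t := t) (by omega) (np h h3 hG a)
    · obtain ⟨φ, hφ⟩ := core9_rb hE' hpl
      obtain ⟨m1, φ1, f1, r1, -, e1⟩ := s.u1 hH hφ (by omega) c1_u5
      obtain ⟨m', φ', h1, h2⟩ := r1.star_f h h3 ha (by omega) (by omega) (fun i hi hi' => by
        have : i = 6 := by omega
        rw [this, e1]; exact hat) f1
      exact l1ok_sound h2 h hG h1
    · exact absurd (planar8 hE') hpl
  · push Not at ht
    obtain ⟨c, hc, φ, hφ⟩ := core10_rb hE (r3_del h h3 hG ht) (np h h3 hG a)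
    have := cores_lt c hc
    obtain ⟨m', φ', h1, h2⟩ := hφ.star_tt h h3 ha (by omega) (by omega) (c1_5 c hc)
    exact l1ok_sound h2 h hG h1

/-- a vertex of degree four with a cubic neighbour -/
theorem l1_4 {G : SimpleGraph ℕ} (h : EB G 15) (h3 : R3 G)
    (hG : ¬ Good 1 G) {a t : ℕ} (ha : deg G a = 4) (hat : G.Adj a t) (ht : deg G t = 3) : Rep9 G := by
  have hE : EB (del G a) 11 := (eb_del h a).2.mono (by omega)
  have hd := deg_del_of_adj h hat.symm
  obtain ⟨x, y, s, hpl, hcase⟩ := sup_step hE (t := t) (by omega) (np h h3 hG a)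
  by_cases ht2 : ∃ t2, t2 ≠ t ∧ G.Adj a t2 ∧ deg G t2 = 3
  · obtain ⟨t2, htt, hat2, ht2⟩ := ht2
    have hd2 := deg_del_of_adj h hat2.symm
    rcases hcase with ⟨hH, hE', hdeg⟩ | ⟨hH, hE', hdeg⟩
    · have hd3 := hdeg t2 htt
      obtain ⟨x2, y2, s2, hpl2, ⟨hH2, hE2, -⟩ | ⟨hH2, hE2, -⟩⟩ :=
        sup_step hE' (t := t2) (by omega) hpl
      · obtain ⟨φ, hφ⟩ := core9_rb hE2 hpl2
        obtain ⟨m1, φ1, f1, r1, -, e1⟩ := s2.u1 hH2 hφ (by omega) c1_uu4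
        obtain ⟨m2, φ2, f2, r2, e20, e2⟩ := s.u1 hH r1 (by omega) f1
        obtain ⟨m', φ', h1, h2⟩ := r2.star_f h h3 ha (by omega) (by omega) (fun i hi hi' => by
          by_cases h6 : i = 6
          · rw [h6, e20 6 (by omega), e1]; exact hat2
          · have : i = 7 := by omega
            rw [this, e2]; exact hat) f2
        exact l1ok_sound h2 h hG h1
      · exact absurd (planar8 hE2) hpl2
    · obtain ⟨g1, g2, -⟩ := hdeg t2 htt
      exact (no2 hE' hpl (t := t2) (by omega) (by omega)).elim
  · push Not at ht2
    rcases hcase with ⟨hH, hE', hdeg⟩ | ⟨hH, hE', hdeg⟩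
    · have hR : R3 (sup (del G a) t x y) := by
        intro v u hvu
        have hvt : v ≠ t := by
          rintro rfl
          rcases hvu with hvu | ⟨-, hvu | hvu⟩
          · exact hvu.2.1 rfl
          · exact s.ax.ne hvu.1
          · exact s.ay.ne hvu.1
        have hva : v ≠ a := by
          rintro rfl
          rcases hvu with hvu | ⟨-, hvu | hvu⟩
          · exact hvu.1.2.1 rfl
          · exact s.ax.2.2 hvu.1.symm
          · exact s.ay.2.2 hvu.1.symm
        rw [hdeg v hvt]
        have hnz : 0 < deg (del G a) v := by
          rw [← hdeg v hvt]
          exact deg_pos hE' hvu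
        by_cases hav : G.Adj v a
        · have := deg_del_of_adj h hav
          have := ht2 v hvt hav.symm
          have := h3 v a hav
          omega
        · rw [deg_del_of_not h hva hav] at hnz ⊢
          obtain ⟨w, hw⟩ := Finset.card_pos.1 hnz
          exact h3 v w (h.mem.1 hw)
      obtain ⟨c, hc, φ, hφ⟩ := core10_rb hE' hR hpl
      have := cores_lt c hc
      obtain ⟨m1, φ1, f1, r1, -, e1⟩ := s.u1 hH hφ (by omega) (c1_u4 c hc)
      obtain ⟨m', φ', h1, h2⟩ := r1.star_f h h3 ha (by omega) (by omega) (fun i hi hi' => by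
        have : i = c.2 := by omega
        rw [this, e1]; exact hat) f1
      exact l1ok_sound h2 h hG h1
    · obtain ⟨φ, hφ⟩ := core9_rb hE' hpl
      obtain ⟨m1, φ1, f1, r1, -, e1⟩ := s.u2 hH hφ (by omega) c1_v4
      obtain ⟨m', φ', h1, h2⟩ := r1.star_f h h3 ha (by omega) (by omega) (fun i hi hi' => by
        have : i = 6 := by omega
        rw [this, e1]; exact hat) f1
      exact l1ok_sound h2 h hG h1

theorem good1_9 {G : SimpleGraph ℕ} (h : EB G 9) : Good 1 G := by
  by_cases hp : G.IsPlanar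
  · exact ⟨0, good_mono (k := 0) (fun u v huv => huv.1) hp⟩
  · obtain ⟨φ, hφ⟩ := core9_rb h hp
    obtain ⟨v, hv⟩ := hφ.noniso (i := 0) (by omega)
    have := deg_pos h hv
    exact ⟨φ 0, planar8 ((eb_del h _).2.mono (by omega))⟩

/-- a cubic vertex with three cubic neighbours, two of them not adjacent -/
theorem l1_3 {G : SimpleGraph ℕ} (h : EB G 15) (h3 : R3 G)
    (hG : ¬ Good 1 G) {v t1 t2 t3 : ℕ} (hv : deg G v = 3) (a1 : G.Adj v t1) (a2 : G.Adj v t2)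
    (a3 : G.Adj v t3) (d1 : deg G t1 = 3) (d2 : deg G t2 = 3) (d3 : deg G t3 = 3)
    (n12 : t1 ≠ t2) (n13 : t1 ≠ t3) (n23 : t2 ≠ t3) (hna : ¬ G.Adj t1 t2) : Rep9 G := by
  have hE : EB (del G v) 12 := (eb_del h v).2.mono (by omega)
  have e1 := deg_del_of_adj h a1.symm
  have e2 := deg_del_of_adj h a2.symm
  have e3 := deg_del_of_adj h a3.symm
  have hna' : ¬ (del G v).Adj t2 t1 := fun hh => hna hh.1.symm
  obtain ⟨x, y, s, hpl, hc⟩ := sup_step hE (t := t1) (by omega) (np h h3 hG v)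
  have hd2 : deg (sup (del G v) t1 x y) t2 = 2 := by
    rcases hc with ⟨-, -, hdeg⟩ | ⟨-, -, hdeg⟩
    · have := hdeg t2 n12.symm
      omega
    · have := (hdeg t2 n12.symm).2.2 hna'
      omega
  rcases hc with ⟨hH, hE1, hdeg⟩ | ⟨hH, hE1, hdeg⟩
  · have g3 := hdeg t3 n13.symm
    obtain ⟨x2, y2, s2, hpl2, ⟨hH2, hE2, hdeg2⟩ | ⟨hH2, hE2, hdeg2⟩⟩ := sup_step hE1 hd2 hpl
    · have g3' := hdeg2 t3 n23.symm
      obtain ⟨x3, y3, s3, hpl3, ⟨hH3, hE3, -⟩ | ⟨hH3, hE3, -⟩⟩ :=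
        sup_step hE2 (t := t3) (by omega) hpl2
      · obtain ⟨φ, hφ⟩ := core9_rb hE3 hpl3
        obtain ⟨m1, φ1, f1, r1, -, b1⟩ := s3.u1 hH3 hφ (by omega) c1_uuu3
        obtain ⟨m2, φ2, f2, r2, b20, b2⟩ := s2.u1 hH2 r1 (by omega) f1
        obtain ⟨m3, φ3, f3, r3, b30, b3⟩ := s.u1 hH r2 (by omega) f2
        obtain ⟨m', φ', h1, h2⟩ := r3.star_f h h3 hv (by omega) (by omega) (fun i hi hi' => by
          by_cases h6 : i = 6
          · rw [h6, b30 6 (by omega), b20 6 (by omega), b1]; exact a3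
          · by_cases h7 : i = 7
            · rw [h7, b30 7 (by omega), b2]; exact a2
            · have : i = 8 := by omega
              rw [this, b3]; exact a1) f3
        exact l1ok_sound h2 h hG h1
      · exact absurd (planar8 hE3) hpl3
    · obtain ⟨g, g', -⟩ := hdeg2 t3 n23.symm
      exact (no2 hE2 hpl2 (t := t3) (by omega) (by omega)).elim
  · obtain ⟨g3, g3', -⟩ := hdeg t3 n13.symm
    obtain ⟨x2, y2, s2, hpl2, ⟨hH2, hE2, hdeg2⟩ | ⟨hH2, hE2, hdeg2⟩⟩ := sup_step hE1 hd2 hpl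
    · have := hdeg2 t3 n23.symm
      exact (no2 hE2 hpl2 (t := t3) (by omega) (by omega)).elim
    · exact absurd (planar8 hE2) hpl2

/-- a component that is a complete graph on four vertices -/
theorem l1_K4 {G : SimpleGraph ℕ} (h : EB G 15) (h3 : R3 G)
    (hG : ¬ Good 1 G) {v t1 t2 t3 : ℕ} (hv : deg G v = 3) (a1 : G.Adj v t1) (a2 : G.Adj v t2)
    (a3 : G.Adj v t3) (d1 : deg G t1 = 3) (d2 : deg G t2 = 3) (d3 : deg G t3 = 3)
    (n12 : G.Adj t1 t2) (n13 : G.Adj t1 t3) (n23 : G.Adj t2 t3) : False := by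
  classical
  have key : ∀ p q r s : ℕ, deg G p = 3 → G.Adj p q → G.Adj p r → G.Adj p s → q ≠ r → q ≠ s →
      r ≠ s → ∀ u, G.Adj p u → u = q ∨ u = r ∨ u = s := by
    intro p q r s hp hq hr hs hqr hqs hrs u hu
    have hsub : ({q, r, s} : Finset ℕ) ⊆ N G p := by
      intro w hw
      simp only [Finset.mem_insert, Finset.mem_singleton] at hw
      rw [h.mem]
      rcases hw with rfl | rfl | rfl <;> assumption
    have hc : ({q, r, s} : Finset ℕ).card = 3 := Finset.card_eq_three.2 ⟨q, r, s, hqr, hqs, hrs, rfl⟩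
    have := Finset.eq_of_subset_of_card_le hsub (by rw [hc]; exact hp.le)
    have hu' := h.mem.2 hu
    rw [← this] at hu'
    simpa using hu'
  have hE : EB (del G v) 12 := (eb_del h v).2.mono (by omega)
  have e1 := deg_del_of_adj h a1.symm
  have hE2 : EB (del (del G v) t1) 10 := (eb_del hE t1).2.mono (by omega)
  have e2 : 0 < deg (del (del G v) t1) t2 :=
    deg_pos hE2 (a := t3) ⟨⟨n23, a2.ne.symm, a3.ne.symm⟩, n12.ne.symm, n13.ne.symm⟩
  have hE3 : EB (del (del (del G v) t1) t2) 9 := (eb_del hE2 t2).2.mono (by omega)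
  refine hG (good_closed {v, t1, t2, t3} Finset.card_le_four ?_ ?_ (good1_9 hE3))
  · intro u hu w huw
    simp only [Finset.mem_insert, Finset.mem_singleton] at hu ⊢
    rcases hu with rfl | rfl | rfl | rfl
    · have := key _ _ _ _ hv a1 a2 a3 n12.ne n13.ne n23.ne w huw
      tauto
    · have := key _ _ _ _ d1 a1.symm n12 n13 a2.ne a3.ne n23.ne w huw
      tauto
    · have := key _ _ _ _ d2 a2.symm n12.symm n23 a1.ne a3.ne n13.ne w huw
      tauto
    · have := key _ _ _ _ d3 a3.symm n13.symm n23.symm a1.ne a2.ne n12.ne w huw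
      tauto
  · intro u w hu hw huw
    simp only [Finset.mem_insert, Finset.mem_singleton, not_or] at hu hw
    exact ⟨⟨⟨huw, hu.1, hw.1⟩, hu.2.1, hw.2.1⟩, hu.2.2.1, hw.2.2.1⟩

theorem l1_reg {G : SimpleGraph ℕ} (h : EB G 15) (h3 : R3 G)
    (hG : ¬ Good 1 G) (hall : ∀ v u, G.Adj v u → deg G v = 4) : Rep9 G := by
  obtain ⟨S, hS⟩ := support h
  have hcard := support_card (d := 4) h (fun v u hvu => (hall v u hvu).ge) hS
  have hE := eb_of_deg h S 4 (fun u v huv => (hS u).2 ⟨v, huv⟩) (fun v hv => by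
    obtain ⟨u, hu⟩ := (hS v).1 hv
    exact (hall v u hu).le)
  rcases S.eq_empty_or_nonempty with rfl | ⟨a, ha⟩
  · exact absurd (planar8 ((eb_del_le hE 0).mono (by simp))) (np h h3 hG 0)
  · obtain ⟨u, hu⟩ := (hS a).1 ha
    have hda := hall a u hu
    have hE' : EB (del G a) 10 := (eb_del hE a).2.mono (by omega)
    obtain ⟨c, hc, φ, hφ⟩ := core10_rb hE' (r3_del h h3 hG (fun t ht => by
      have := hall t a ht.symm
      omega)) (np h h3 hG a)
    have := cores_lt c hc
    obtain ⟨m', φ', h1, h2⟩ := hφ.star_tt h h3 hda (by omega) (by omega) (c1_4 c hc)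
    exact l1ok_sound h2 h hG h1

theorem l1_main {G : SimpleGraph ℕ} (h : EB G 15) (h3 : R3 G)
    (hG : ¬ Good 1 G) : Rep9 G := by
  by_cases h6 : ∃ a, deg G a = 6
  · obtain ⟨a, ha⟩ := h6
    exact l1_6 h h3 hG ha
  by_cases h5 : ∃ a, deg G a = 5
  · obtain ⟨a, ha⟩ := h5
    exact l1_5 h h3 hG ha
  have h4 : ∀ a, deg G a ≤ 4 := fun a => by
    have := l1_le6 h h3 hG a
    have h6' : deg G a ≠ 6 := fun hh => h6 ⟨a, hh⟩
    have h5' : deg G a ≠ 5 := fun hh => h5 ⟨a, hh⟩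
    omega
  by_cases hc : ∃ v, deg G v = 3
  · obtain ⟨v, hv⟩ := hc
    by_cases hvt : ∃ a, G.Adj v a ∧ deg G a ≠ 3
    · obtain ⟨a, hva, ha⟩ := hvt
      have := h3 a v hva.symm
      have := h4 a
      exact l1_4 h h3 hG (by omega) hva.symm hv
    · push Not at hvt
      obtain ⟨t1, t2, t3, n12, n13, n23, hN⟩ := Finset.card_eq_three.1 hv
      have hm : ∀ t, t = t1 ∨ t = t2 ∨ t = t3 → G.Adj v t := by
        intro t ht
        rw [← h.mem, hN]
        simpa using ht
      have a1 := hm t1 (by simp)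
      have a2 := hm t2 (by simp)
      have a3 := hm t3 (by simp)
      have d1 := hvt t1 a1
      have d2 := hvt t2 a2
      have d3 := hvt t3 a3
      by_cases m12 : G.Adj t1 t2
      · by_cases m13 : G.Adj t1 t3
        · by_cases m23 : G.Adj t2 t3
          · exact (l1_K4 h h3 hG hv a1 a2 a3 d1 d2 d3 m12 m13 m23).elim
          · exact l1_3 h h3 hG hv a2 a3 a1 d2 d3 d1 n23 n12.symm n13.symm m23
        · exact l1_3 h h3 hG hv a1 a3 a2 d1 d3 d2 n13 n12 n23.symm m13
      · exact l1_3 h h3 hG hv a1 a2 a3 d1 d2 d3 n12 n13 n23 m12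
  · refine l1_reg h h3 hG (fun v u hvu => ?_)
    have := h3 v u hvu
    have := h4 v
    have h3' : deg G v ≠ 3 := fun hh => hc ⟨v, hh⟩
    omega



theorem lvl1 : ∀ m ≤ 14, ∀ G, EB G m → Good 1 G := by
  intro m
  induction m with
  | zero => exact fun _ G hG => good1_9 (hG.mono (by omega))
  | succ m ih =>
    intro hm G hG
    by_contra hn
    exact (l1_main (hG.mono (by omega)) (reduced (ih (by omega)) hG hn) hn).not_eb
      (hG.mono (by omega))

theorem lvl1_rep {G : SimpleGraph ℕ} (h : EB G 15) (hn : ¬ Good 1 G) : Rep9 G :=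
  l1_main h (reduced (lvl1 14 le_rfl) h hn) hn

end TA

namespace TA

theorem lvl1_r3 {H : SimpleGraph ℕ} (h : EB H 15) (hn : ¬ Good 1 H) : R3 H :=
  reduced (lvl1 14 le_rfl) h hn

theorem ng1 {G : SimpleGraph ℕ} (hG : ¬ Good 2 G) (a : ℕ) : ¬ Good 1 (del G a) :=
  fun hh => hG ⟨a, hh⟩

theorem sup_step1 {H : SimpleGraph ℕ} {k t : ℕ} (h : EB H k) (hd : deg H t = 2)
    (hp : ¬ Good 1 H) : ∃ x y, St H t x y ∧ ¬ Good 1 (sup H t x y) ∧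
      ((¬ H.Adj x y ∧ EB (sup H t x y) (k - 1) ∧ ∀ v, v ≠ t → deg (sup H t x y) v = deg H v) ∨
       (H.Adj x y ∧ EB (sup H t x y) (k - 2) ∧ ∀ v, v ≠ t → deg (sup H t x y) v ≤ deg H v ∧
        deg H v ≤ deg (sup H t x y) v + 1)) := by
  obtain ⟨x, y, hxy, hx, hy, hm⟩ := nb_of_two h hd
  refine ⟨x, y, ⟨hxy, hx, hy, hm⟩, fun hh => hp (good_sup' (k := 1) hm hh), ?_⟩
  by_cases hH : H.Adj x y
  · refine Or.inr ⟨hH, (eb_dup h hH hx hy).2, fun v hv => ?_⟩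
    rw [deg_sup_dup hH hx.ne.symm hy.ne.symm v]
    by_cases hvt : H.Adj v t
    · have := deg_del_of_adj h hvt
      exact ⟨by omega, by omega⟩
    · have := deg_del_of_not h hv hvt
      exact ⟨by omega, by omega⟩
  · exact Or.inl ⟨hH, (eb_sup h hxy hx hy).2, fun v hv => deg_sup h hxy hx hy hm hH hv⟩

theorem no1 {H : SimpleGraph ℕ} (h : EB H 15) (hp : ¬ Good 1 H) {t : ℕ} (h1 : 1 ≤ deg H t)
    (h2 : deg H t ≤ 2) : False := by
  obtain ⟨u, hu⟩ := Finset.card_pos.1 h1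
  have := lvl1_r3 h hp t u (h.mem.1 hu)
  omega

/-- a non-planar graph with at most nine edges needs six vertices of degree three -/
theorem no5 {H : SimpleGraph ℕ} (h : EB H 9) (hp : ¬ H.IsPlanar) {S : Finset ℕ}
    (hS : ∀ u v, H.Adj u v → u ∈ S) (hc : S.card ≤ 6) {x : ℕ} (hx : x ∈ S)
    (hd : deg H x ≤ 2) : False := by
  by_cases h0 : deg H x = 0
  · obtain ⟨φ, hφ⟩ := core9_rb h hp
    have hsub : (Finset.range 6).image φ ⊆ S.erase x := by
      intro u hu
      obtain ⟨i, hi, rfl⟩ := Finset.mem_image.1 hu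
      obtain ⟨v, hv⟩ := hφ.noniso (Finset.mem_range.1 hi)
      refine Finset.mem_erase.2 ⟨?_, hS _ _ hv⟩
      intro hh
      rw [hh] at hv
      exact deg_zero h h0 _ hv
    have h1 := Finset.card_le_card hsub
    rw [Finset.card_image_of_injective _ φ.injective, Finset.card_range,
      Finset.card_erase_of_mem hx] at h1
    omega
  · exact no2 h hp (t := x) (by omega) hd

/-- ten edges on six vertices, non-planar: minimum degree three -/
theorem r3_six {H : SimpleGraph ℕ} (h : EB H 10) (hp : ¬ H.IsPlanar) {S : Finset ℕ}
    (hS : ∀ u v, H.Adj u v → u ∈ S) (hc : S.card ≤ 6) : R3 H := by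
  intro v u hvu
  by_contra hlt
  have hpos := deg_pos h hvu
  by_cases h2 : deg H v = 2
  · obtain ⟨x, y, s, hpl, hcase⟩ := sup_step h h2 hp
    have hE : EB (sup H v x y) 9 := by
      rcases hcase with ⟨-, hE, -⟩ | ⟨-, hE, -⟩
      · exact hE
      · exact hE.mono (by omega)
    refine no5 hE hpl (S := S) ?_ hc (hS _ _ hvu) (x := v) ?_
    · intro p q hpq
      rcases hpq with hpq | ⟨-, hpq | hpq⟩
      · exact hS _ _ hpq.1
      · rw [hpq.1]; exact hS _ _ s.ax.symm
      · rw [hpq.1]; exact hS _ _ s.ay.symm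
    · by_contra hh
      obtain ⟨w, hw⟩ := Finset.card_pos.1 (by change 0 < deg (sup H v x y) v; omega :
        0 < (N (sup H v x y) v).card)
      rcases hE.mem.1 hw with hw | ⟨-, hw | hw⟩
      · exact hw.2.1 rfl
      · exact s.ax.ne hw.1
      · exact s.ay.ne hw.1
  · have h1 : deg H v = 1 := by omega
    obtain ⟨x, hx⟩ := Finset.card_eq_one.1 h1
    have hm : ∀ w, H.Adj v w → w = x := by
      intro w hw
      have := h.mem.2 hw
      rw [hx] at this
      simpa using this
    have hE : EB (del H v) 9 := (eb_del h v).2.mono (by omega)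
    refine no5 hE (fun hh => hp (good_pend (k := 0) hm hh)) (S := S)
      (fun p q hpq => hS _ _ hpq.1) hc (hS _ _ hvu) (x := v) ?_
    by_contra hh
    obtain ⟨w, hw⟩ := Finset.card_pos.1 (by change 0 < deg (del H v) v; omega :
      0 < (N (del H v) v).card)
    exact (hE.mem.1 hw).2.1 rfl

theorem le3_of {G : SimpleGraph ℕ} {m n k : ℕ} {φ : Equiv.Perm ℕ} (h : RB G m n φ) (he : EB G k)
    {i : ℕ} (hi : i < n) (hd : deg G (φ i) ≤ 3) : le3 m i = true := by
  rw [h.deg he hi] at hd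
  unfold le3
  simpa using hd

theorem ge4_of {G : SimpleGraph ℕ} {m n k : ℕ} {φ : Equiv.Perm ℕ} (h : RB G m n φ) (he : EB G k)
    {i : ℕ} (hi : i < n) (hd : 4 ≤ deg G (φ i)) : ge4 m i = true := by
  rw [h.deg he hi] at hd
  unfold ge4
  simpa using hd

theorem pA_lt : ∀ p ∈ pA, p.1 < 16 ∧ p.2 < 16 := by decide
theorem pB_lt : ∀ p ∈ pB, p.1 < 16 ∧ p.2 < 16 := by decide
theorem pC_lt : ∀ p ∈ pC, p.1 < 16 ∧ p.2 < 16 := by decide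

/-- a vertex of degree five -/
theorem l2_5 {G : SimpleGraph ℕ} (h : EB G 20) (h3 : R3 G) (hG : ¬ Good 2 G) {a : ℕ}
    (ha : deg G a = 5) : False := by
  obtain ⟨c, hc, φ, hφ⟩ := lvl1_rep ((eb_del h a).2.mono (by omega)) (ng1 hG a)
  have := reps_lt c hc
  obtain ⟨m', φ', h1, h2⟩ := hφ.star_tt h h3 ha (by omega) (by omega) (c2_A c hc)
  exact hG (l2ok_sound h2 h pA_lt h1)

/-- a vertex of degree four with a cubic neighbour -/
theorem l2_4 {G : SimpleGraph ℕ} (h : EB G 20) (h3 : R3 G) (hG : ¬ Good 2 G)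
    (h4 : ∀ v, deg G v ≤ 4) {a t : ℕ}
    (ha : deg G a = 4) (hat : G.Adj a t) (ht : deg G t = 3) : False := by
  have hE : EB (del G a) 16 := (eb_del h a).2.mono (by omega)
  have hd := deg_del_of_adj h hat.symm
  obtain ⟨x, y, s, hpl, ⟨hH, hE', -⟩ | ⟨hH, hE', -⟩⟩ :=
    sup_step1 hE (t := t) (by omega) (ng1 hG a)
  · obtain ⟨c, hc, φ, hφ⟩ := lvl1_rep hE' hpl
    have := reps_lt c hc
    obtain ⟨m1, φ1, f1, r1, -, e1⟩ := s.u1 hH hφ (by omega) (c2_B c hc)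
    obtain ⟨m', φ', h1, h2, -⟩ := r1.allS h ha (by omega) (cov_of h h3) (by omega)
      (mi := le3 m1) (mo := ltn c.2) (fun i hi hai => by
        have g1 := deg_del_of_adj h hai.symm
        have g2 := h4 (φ1 i)
        exact le3_of r1 hE hi (by omega)) (fun i hi hai => ltn_true (by
        by_contra hh
        have : i = c.2 := by omega
        rw [this, e1] at hai
        exact hai hat)) f1
    exact hG (l2ok_sound h2 h pB_lt h1)
  · exact hpl (lvl1 14 le_rfl _ hE')

/-- a cubic vertex with three cubic neighbours -/
theorem l2_3 {G : SimpleGraph ℕ} (h : EB G 20) (hG : ¬ Good 2 G) {v : ℕ} (hv : deg G v = 3)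
    (hN : ∀ t, G.Adj v t → deg G t = 3) : False := by
  obtain ⟨t1, t2, t3, n12, n13, n23, hN'⟩ := Finset.card_eq_three.1 hv
  have hm : ∀ t, t = t1 ∨ t = t2 ∨ t = t3 → deg (del G v) t = 2 := by
    intro t ht
    have ha : G.Adj v t := by
      rw [← h.mem, hN']
      simpa using ht
    have g1 := hN t ha
    have g2 := deg_del_of_adj h ha.symm
    omega
  have hE : EB (del G v) 17 := (eb_del h v).2.mono (by omega)
  have d1 := hm t1 (by simp)
  have d2 := hm t2 (by simp)
  have d3 := hm t3 (by simp)
  obtain ⟨x, y, s, hpl, ⟨hH, hE', hdeg⟩ | ⟨hH, hE', hdeg⟩⟩ := sup_step1 hE d1 (ng1 hG v)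
  · have g2 := hdeg t2 n12.symm
    have g3 := hdeg t3 n13.symm
    obtain ⟨x2, y2, s2, hpl2, ⟨hH2, hE2, hdeg2⟩ | ⟨hH2, hE2, hdeg2⟩⟩ :=
      sup_step1 hE' (t := t2) (by omega) hpl
    · have g4 := hdeg2 t3 n23.symm
      exact no1 hE2 hpl2 (t := t3) (by omega) (by omega)
    · exact hpl2 (lvl1 14 le_rfl _ hE2)
  · obtain ⟨g2, g3⟩ := hdeg t2 n12.symm
    exact no1 hE' hpl (t := t2) (by omega) (by omega)

/-- last step of the regular case: put back the two deleted vertices -/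
theorem l2_fin {G : SimpleGraph ℕ} (h : EB G 20) (hall : ∀ v u, G.Adj v u → deg G v = 4)
    {a b : ℕ} (ha : deg G a = 4) (hb : deg G b = 4) (hab : a ≠ b) (hna : ¬ G.Adj a b)
    {m n : ℕ} {φ : Equiv.Perm ℕ} (hφ : RB (del (del G a) b) m (n + 2) φ) (hn : n < 10)
    (e1 : G.Adj b (φ n)) (e2 : G.Adj b (φ (n + 1))) (e1' : φ n ≠ a) (e2' : φ (n + 1) ≠ a)
    (hf : starC n m = true) : Good 2 G := by
  have hE : EB (del G a) 16 := (eb_del h a).2.mono (by omega)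
  have hdb : deg (del G a) b = 4 := by
    rw [deg_del_of_not h hab.symm (fun hh => hna hh.symm)]
    exact hb
  have hE2 : EB (del (del G a) b) 12 := (eb_del hE b).2.mono (by omega)
  have hle : ∀ v u, G.Adj v u → v ≠ a → 3 ≤ deg (del G a) v ∧ deg (del G a) v ≤ 4 ∧
      (G.Adj v a → deg (del G a) v = 3) ∧ (¬ G.Adj v a → deg (del G a) v = 4) := by
    intro v u hvu hva
    have g1 := hall v u hvu
    by_cases hh : G.Adj v a
    · have := deg_del_of_adj h hh
      exact ⟨by omega, by omega, fun _ => by omega, fun h' => absurd hh h'⟩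
    · have := deg_del_of_not h hva hh
      exact ⟨by omega, by omega, fun h' => absurd h' hh, fun _ => by omega⟩
  obtain ⟨m1, φ1, f1, r1, -, -⟩ := hφ.allS hE hdb (by omega) (fun u hu => by
      have g1 := hle u b hu.1.symm hu.2.2
      have g2 := deg_del_of_adj hE hu.symm
      obtain ⟨w, hw⟩ := Finset.card_pos.1 (by change 0 < deg (del (del G a) b) u; omega :
        0 < (N (del (del G a) b) u).card)
      exact ⟨w, hE2.mem.1 hw⟩) (by omega)
    (mi := le3 m) (mo := ltn n) (fun i hi hu => by
      have g1 := hle _ b hu.1.symm hu.2.2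
      have g2 := deg_del_of_adj hE hu.symm
      exact le3_of hφ hE2 hi (by omega)) (fun i hi hu => ltn_true (by
      by_contra hh
      by_cases hi' : i = n
      · rw [hi'] at hu
        exact hu ⟨e1, hab.symm, e1'⟩
      · have : i = n + 1 := by omega
        rw [this] at hu
        exact hu ⟨e2, hab.symm, e2'⟩)) hf
  obtain ⟨m2, φ2, f2, r2, -, -⟩ := r1.allS h ha (by omega) (fun u hu => by
      have g1 := hle u a hu.symm hu.ne.symm
      obtain ⟨w, hw⟩ := Finset.card_pos.1 (by change 0 < deg (del G a) u; omega :
        0 < (N (del G a) u).card)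
      exact ⟨w, hE.mem.1 hw⟩) (by omega)
    (mi := le3 m1) (mo := ge4 m1) (fun i hi hu => by
      have g1 := hle _ a hu.symm hu.ne.symm
      exact le3_of r1 hE hi (g1.2.2.1 hu.symm).le) (fun i hi hu => by
      obtain ⟨w, hw⟩ := r1.noniso hi
      have g1 := hle _ w hw.1 hw.2.1
      exact ge4_of r1 hE hi (g1.2.2.2 (fun hh => hu hh.symm)).ge) f1
  exact l2ok_sound r2 h pC_lt f2

/-- the regular case: two non-adjacent vertices with two common neighbours -/
theorem l2_pair {G : SimpleGraph ℕ} (h : EB G 20) (hG : ¬ Good 2 G)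
    (hall : ∀ v u, G.Adj v u → deg G v = 4) {S : Finset ℕ} (hS : ∀ u v, G.Adj u v → u ∈ S)
    (hc : S.card = 10)
    {a b t1 t2 : ℕ} (hab : a ≠ b) (hna : ¬ G.Adj a b) (ht : t1 ≠ t2)
    (a1 : G.Adj a t1) (a2 : G.Adj a t2) (b1 : G.Adj b t1) (b2 : G.Adj b t2) : False := by
  have ha := hall a t1 a1
  have hb := hall b t1 b1
  have hE : EB (del G a) 16 := (eb_del h a).2.mono (by omega)
  have hdb : deg (del G a) b = 4 := by
    rw [deg_del_of_not h hab.symm (fun hh => hna hh.symm)]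
    exact hb
  have hE2 : EB (del (del G a) b) 12 := (eb_del hE b).2.mono (by omega)
  have hdt : ∀ t, G.Adj a t → G.Adj b t → deg (del (del G a) b) t = 2 := by
    intro t ha' hb'
    have g1 := deg_del_of_adj h ha'.symm
    have hadj : (del G a).Adj t b := ⟨hb'.symm, ha'.ne.symm, hab.symm⟩
    have g2 := deg_del_of_adj hE hadj
    have g3 := hall t a ha'.symm
    omega
  have d1 := hdt t1 a1 b1
  have d2 := hdt t2 a2 b2
  have hp : ¬ (del (del G a) b).IsPlanar := fun hh => hG ⟨a, b, hh⟩
  have hS6 : (S \ {a, b, t1, t2}).card ≤ 6 := by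
    have hsub : ({a, b, t1, t2} : Finset ℕ) ⊆ S := by
      intro w hw
      simp only [Finset.mem_insert, Finset.mem_singleton] at hw
      rcases hw with rfl | rfl | rfl | rfl
      · exact hS _ _ a1
      · exact hS _ _ b1
      · exact hS _ _ a1.symm
      · exact hS _ _ a2.symm
    rw [Finset.card_sdiff_of_subset hsub, Finset.card_insert_of_notMem,
      Finset.card_insert_of_notMem, Finset.card_pair ht, hc]
    · simp only [Finset.mem_insert, Finset.mem_singleton, not_or]
      exact ⟨b1.ne, b2.ne⟩
    · simp only [Finset.mem_insert, Finset.mem_singleton, not_or]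
      exact ⟨hab, a1.ne, a2.ne⟩
  have fin : ∀ (m n : ℕ) (φ : Equiv.Perm ℕ), RB (del (del G a) b) m (n + 2) φ → n < 10 →
      (φ n = t1 ∧ φ (n + 1) = t2 ∨ φ n = t2 ∧ φ (n + 1) = t1) → starC n m = true → False := by
    intro m n φ hφ hn hlab hf
    refine hG (l2_fin h hall ha hb hab hna hφ hn ?_ ?_ ?_ ?_ hf)
    all_goals
      rcases hlab with ⟨q1, q2⟩ | ⟨q1, q2⟩
      all_goals
        simp only [q1, q2]
        first
          | assumption
          | exact a1.ne.symm
          | exact a2.ne.symm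
  obtain ⟨x, y, s, hpl, ⟨hH, hE3, hdeg⟩ | ⟨hH, hE3, hdeg⟩⟩ := sup_step hE2 d1 hp
  · have g2 := hdeg t2 ht.symm
    obtain ⟨x2, y2, s2, hpl2, ⟨hH2, hE4, hdeg2⟩ | ⟨hH2, hE4, hdeg2⟩⟩ :=
      sup_step hE3 (t := t2) (by omega) hpl
    · have hR := r3_six hE4 hpl2 (S := S \ {a, b, t1, t2}) (by
        have base : ∀ u v, (del (del G a) b).Adj u v → u ∈ S ∧ u ≠ a ∧ u ≠ b :=
          fun u v huv => ⟨hS _ _ huv.1.1, huv.1.2.1, huv.2.1⟩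
        have base2 : ∀ u v, (sup (del (del G a) b) t1 x y).Adj u v →
            u ∈ S ∧ u ≠ a ∧ u ≠ b ∧ u ≠ t1 := by
          intro u v huv
          rcases huv with huv | ⟨-, huv | huv⟩
          · have := base _ _ huv.1
            exact ⟨this.1, this.2.1, this.2.2, huv.2.1⟩
          · rw [huv.1]
            have := base _ _ s.ax.symm
            exact ⟨this.1, this.2.1, this.2.2, s.ax.ne.symm⟩
          · rw [huv.1]
            have := base _ _ s.ay.symm
            exact ⟨this.1, this.2.1, this.2.2, s.ay.ne.symm⟩
        intro u v huv
        simp only [Finset.mem_sdiff, Finset.mem_insert, Finset.mem_singleton, not_or]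
        rcases huv with huv | ⟨-, huv | huv⟩
        · have := base2 _ _ huv.1
          exact ⟨this.1, this.2.1, this.2.2.1, this.2.2.2, huv.2.1⟩
        · rw [huv.1]
          have := base2 _ _ s2.ax.symm
          exact ⟨this.1, this.2.1, this.2.2.1, this.2.2.2, s2.ax.ne.symm⟩
        · rw [huv.1]
          have := base2 _ _ s2.ay.symm
          exact ⟨this.1, this.2.1, this.2.2.1, this.2.2.2, s2.ay.ne.symm⟩) hS6
      obtain ⟨c, hcc, φ, hφ⟩ := core10_rb hE4 hR hpl2
      have := cores_lt c hcc
      obtain ⟨m1, φ1, f1, r1, -, q1⟩ := s2.u1 hH2 hφ (by omega) (c2_uu c hcc)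
      obtain ⟨m2, φ2, f2, r2, q20, q2⟩ := s.u1 hH r1 (by omega) f1
      exact fin _ _ _ r2 (by omega) (Or.inr ⟨by rw [q20 _ (by omega), q1], q2⟩) f2
    · obtain ⟨φ, hφ⟩ := core9_rb hE4 hpl2
      obtain ⟨m1, φ1, f1, r1, -, q1⟩ := s2.u2 hH2 hφ (by omega) c2_vu
      obtain ⟨m2, φ2, f2, r2, q20, q2⟩ := s.u1 hH r1 (by omega) f1
      exact fin _ _ _ r2 (by omega) (Or.inr ⟨by rw [q20 _ (by omega), q1], q2⟩) f2
  · obtain ⟨g1, g2, g3⟩ := hdeg t2 ht.symm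
    by_cases g4 : deg (sup (del (del G a) b) t1 x y) t2 = 2
    · obtain ⟨x2, y2, s2, hpl2, ⟨hH2, hE4, hdeg2⟩ | ⟨hH2, hE4, hdeg2⟩⟩ :=
        sup_step hE3 g4 hpl
      · obtain ⟨φ, hφ⟩ := core9_rb hE4 hpl2
        obtain ⟨m1, φ1, f1, r1, -, q1⟩ := s2.u1 hH2 hφ (by omega) c2_uv
        obtain ⟨m2, φ2, f2, r2, q20, q2⟩ := s.u2 hH r1 (by omega) f1
        exact fin _ _ _ r2 (by omega) (Or.inr ⟨by rw [q20 _ (by omega), q1], q2⟩) f2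
      · exact hpl2 (planar8 hE4)
    · have g5 : (del (del G a) b).Adj t2 t1 := by
        by_contra hh
        have := g3 hh
        omega
      -- the other neighbour of t1
      obtain ⟨z, hz1, hz2⟩ : ∃ z, (del (del G a) b).Adj t1 z ∧ (del (del G a) b).Adj z t2 := by
        rcases s.nb t2 g5.symm with hh | hh
        · exact ⟨y, s.ay, by rw [hh]; exact hH.symm⟩
        · exact ⟨x, s.ax, by rw [hh]; exact hH⟩
      have hz3 : (sup (del (del G a) b) t1 x y).Adj z t2 :=
        Or.inl ⟨hz2, hz1.ne.symm, ht.symm⟩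
      have k1 := deg_sup_dup hH s.ax.ne.symm s.ay.ne.symm z
      have k2 := deg_del_of_adj hE2 hz1.symm
      have k3 := deg_del_of_adj hE3 hz3
      have k4 : deg (del (del G a) b) z ≤ 4 := by
        have l1 := (hall z t1 hz1.1.1.symm).le
        have hza : z ≠ a := hz1.1.2.2
        have hzb : z ≠ b := hz1.2.2
        have l2 : deg (del G a) z ≤ deg G z := by
          unfold deg
          rw [N_del h hza]
          exact Finset.card_erase_le
        have l3 : deg (del (del G a) b) z ≤ deg (del G a) z := by
          unfold deg
          rw [N_del hE hzb]
          exact Finset.card_erase_le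
        omega
      have h1 : deg (sup (del (del G a) b) t1 x y) t2 = 1 := by omega
      obtain ⟨w, hw⟩ := Finset.card_eq_one.1 h1
      have hE5 : EB (del (sup (del (del G a) b) t1 x y) t2) 9 := (eb_del hE3 t2).2.mono (by omega)
      refine no5 hE5 (fun hh => hpl (good_pend (k := 0) (x := w) (fun q hq => ?_) hh))
        (S := S \ {a, b, t1, t2}) ?_ hS6 (x := z) ?_ (by omega)
      · have := hE3.mem.2 hq
        rw [hw] at this
        simpa using this
      · intro u v huv
        simp only [Finset.mem_sdiff, Finset.mem_insert, Finset.mem_singleton, not_or]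
        obtain ⟨huv, hu2, -⟩ := huv
        rcases huv with huv | ⟨-, huv | huv⟩
        · exact ⟨hS _ _ huv.1.1.1, huv.1.1.2.1, huv.1.2.1, huv.2.1, hu2⟩
        · rw [huv.1] at hu2 ⊢
          exact ⟨hS _ _ s.ax.1.1.symm, s.ax.1.2.2, s.ax.2.2, s.ax.ne.symm, hu2⟩
        · rw [huv.1] at hu2 ⊢
          exact ⟨hS _ _ s.ay.1.1.symm, s.ay.1.2.2, s.ay.2.2, s.ay.ne.symm, hu2⟩
      · simp only [Finset.mem_sdiff, Finset.mem_insert, Finset.mem_singleton, not_or]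
        exact ⟨hS _ _ hz1.1.1.symm, hz1.1.2.2, hz1.2.2, hz1.ne.symm, hz2.ne⟩

/-- the neighbourhood of `x` is a clique -/
theorem l2_clique {G : SimpleGraph ℕ} (h : EB G 20) (hG : ¬ Good 2 G)
    (hall : ∀ v u, G.Adj v u → deg G v = 4) {x : ℕ} (hx : deg G x = 4)
    (hcl : ∀ u v, G.Adj x u → G.Adj x v → u ≠ v → G.Adj u v) : False := by
  have hE : EB (del G x) 16 := (eb_del h x).2.mono (by omega)
  obtain ⟨t, ht⟩ := Finset.card_pos.1 (by change 0 < deg G x; omega : 0 < (N G x).card)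
  have ht := h.mem.1 ht
  have g1 := hall t x ht.symm
  have g2 := deg_del_of_adj h ht.symm
  have hE2 : EB (del (del G x) t) 13 := (eb_del hE t).2.mono (by omega)
  refine ng1 hG x (good_closed (N G x) hx.le ?_ ?_ (lvl1 13 (by omega) _ hE2))
  · intro u hu v huv
    have hxu := h.mem.1 hu
    have hsub : insert x ((N G x).erase u) ⊆ N G u := by
      intro w hw
      rw [h.mem]
      rcases Finset.mem_insert.1 hw with rfl | hw
      · exact hxu.symm
      · obtain ⟨hwu, hw⟩ := Finset.mem_erase.1 hw
        exact hcl u w hxu (h.mem.1 hw) hwu.symm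
    have hc1 : (insert x ((N G x).erase u)).card = 4 := by
      rw [Finset.card_insert_of_notMem, Finset.card_erase_of_mem hu]
      · change deg G x - 1 + 1 = 4
        omega
      · intro hh
        exact (h.mem.1 (Finset.mem_of_mem_erase hh)).ne rfl
    have := Finset.eq_of_subset_of_card_le hsub (by
      rw [hc1]
      exact (hall u x hxu.symm).le)
    have hv := h.mem.2 huv.1
    rw [← this] at hv
    rcases Finset.mem_insert.1 hv with hv | hv
    · exact absurd hv huv.2.2
    · exact Finset.mem_of_mem_erase hv
  · intro u v hu hv huv
    refine ⟨huv, ?_, ?_⟩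
    · rintro rfl
      exact hu (h.mem.2 ht)
    · rintro rfl
      exact hv (h.mem.2 ht)

end TA

namespace TA

/-- some two non-adjacent vertices have two common neighbours -/
theorem exists_pair {G : SimpleGraph ℕ} (h : EB G 20)
    (hall : ∀ v u, G.Adj v u → deg G v = 4) {S : Finset ℕ} (hS : ∀ u v, G.Adj u v → u ∈ S)
    (hc : S.card = 10) {x u v : ℕ} (hxu : G.Adj x u) (hxv : G.Adj x v) (huv : u ≠ v)
    (hnuv : ¬ G.Adj u v) :
    ∃ a b t1 t2, a ≠ b ∧ ¬ G.Adj a b ∧ t1 ≠ t2 ∧ G.Adj a t1 ∧ G.Adj a t2 ∧ G.Adj b t1 ∧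
      G.Adj b t2 := by
  classical
  by_contra hcon
  push Not at hcon
  have hx := hall x u hxu
  -- the other two neighbours of x
  obtain ⟨w, z, hwz, hNwz⟩ : ∃ w z, w ≠ z ∧ ((N G x).erase u).erase v = {w, z} := by
    rw [← Finset.card_eq_two, Finset.card_erase_of_mem, Finset.card_erase_of_mem (h.mem.2 hxu)]
    · change deg G x - 1 - 1 = 2
      omega
    · exact Finset.mem_erase.2 ⟨huv.symm, h.mem.2 hxv⟩
  have hmem : ∀ q, (q ≠ v ∧ q ≠ u ∧ G.Adj x q) ↔ (q = w ∨ q = z) := by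
    intro q
    have : q ∈ ((N G x).erase u).erase v ↔ q ∈ ({w, z} : Finset ℕ) := by rw [hNwz]
    simpa [h.mem] using this
  obtain ⟨hwv, hwu, hxw⟩ := (hmem w).2 (Or.inl rfl)
  obtain ⟨hzv, hzu, hxz⟩ := (hmem z).2 (Or.inr rfl)
  have hNx : ∀ q, G.Adj x q ↔ q = u ∨ q = v ∨ q = w ∨ q = z := by
    intro q
    constructor
    · intro hq
      by_cases h1 : q = u
      · exact Or.inl h1
      by_cases h2 : q = v
      · exact Or.inr (Or.inl h2)
      exact Or.inr (Or.inr ((hmem q).1 ⟨h2, h1, hq⟩))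
    · rintro (rfl | rfl | rfl | rfl) <;> assumption
  set A : Finset ℕ := {u, v, w, z} with hA
  have hmA : ∀ q, q ∈ A ↔ G.Adj x q := by
    intro q
    rw [hNx, hA]
    simp only [Finset.mem_insert, Finset.mem_singleton]
  set T : Finset ℕ := S \ insert x A with hT
  have hAcard : A.card = 4 := by
    have : A = N G x := by
      ext q
      rw [hmA, h.mem]
    rw [this]
    exact hx
  have hxA : x ∉ A := fun hh => ((hmA x).1 hh).ne rfl
  have hTcard : T.card = 5 := by
    have hsub : insert x A ⊆ S := by
      intro q hq
      rcases Finset.mem_insert.1 hq with rfl | hq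
      · exact hS _ _ hxu
      · exact hS _ _ ((hmA q).1 hq).symm
    rw [hT, Finset.card_sdiff_of_subset hsub, Finset.card_insert_of_notMem hxA, hAcard, hc]
  have hdisj : ∑ q ∈ A, (N G q ∩ T).card ≤ 5 := by
    rw [← Finset.card_biUnion, ← hTcard]
    · refine Finset.card_le_card (fun p hp => ?_)
      obtain ⟨q, -, hq⟩ := Finset.mem_biUnion.1 hp
      exact Finset.mem_of_mem_inter_right hq
    · intro q hq q' hq' hne
      rw [Function.onFun, Finset.disjoint_left]
      intro p hp hp'
      have hpT := Finset.mem_of_mem_inter_right hp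
      rw [hT, Finset.mem_sdiff, Finset.mem_insert, not_or] at hpT
      have p1 := h.mem.1 (Finset.mem_of_mem_inter_left hp)
      have p2 := h.mem.1 (Finset.mem_of_mem_inter_left hp')
      exact hcon x p q q' (fun hh => hpT.2.1 hh.symm) (fun hh => hpT.2.2 ((hmA p).2 hh)) hne
        ((hmA q).1 hq) ((hmA q').1 hq') p1.symm p2.symm
  have hsplit : ∀ q ∈ A, 4 ≤ (N G q ∩ T).card + 1 + (N G q ∩ A).card := by
    intro q hq
    have hxq := (hmA q).1 hq
    have hsub : N G q ⊆ ((N G q ∩ T) ∪ {x}) ∪ (N G q ∩ A) := by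
      intro p hp
      have hpS := hS _ _ (h.mem.1 hp).symm
      simp only [hT, Finset.mem_union, Finset.mem_inter, Finset.mem_sdiff, Finset.mem_insert,
        Finset.mem_singleton]
      tauto
    have c1 := Finset.card_le_card hsub
    have c2 := Finset.card_union_le ((N G q ∩ T) ∪ {x}) (N G q ∩ A)
    have c3 := Finset.card_union_le (N G q ∩ T) {x}
    have c4 : (N G q).card = 4 := hall q x hxq.symm
    rw [Finset.card_singleton] at c3
    omega
  have hcnt : ∀ q, (N G q ∩ A).card = (if G.Adj q u then 1 else 0) + (if G.Adj q v then 1 else 0)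
      + (if G.Adj q w then 1 else 0) + (if G.Adj q z then 1 else 0) := by
    intro q
    have e1 : N G q ∩ A = A.filter (fun p => G.Adj q p) := by
      ext p
      simp only [Finset.mem_inter, Finset.mem_filter, h.mem]
      tauto
    rw [e1, Finset.card_filter, hA, Finset.sum_insert, Finset.sum_insert, Finset.sum_pair hwz]
    · ring
    · simp only [Finset.mem_insert, Finset.mem_singleton, not_or]
      exact ⟨hwv.symm, hzv.symm⟩
    · simp only [Finset.mem_insert, Finset.mem_singleton, not_or]
      exact ⟨huv, hwu.symm, hzu.symm⟩
  have hsum : ∑ q ∈ A, (N G q ∩ T).card = (N G u ∩ T).card + (N G v ∩ T).card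
      + (N G w ∩ T).card + (N G z ∩ T).card := by
    rw [hA, Finset.sum_insert, Finset.sum_insert, Finset.sum_pair hwz]
    · ring
    · simp only [Finset.mem_insert, Finset.mem_singleton, not_or]
      exact ⟨hwv.symm, hzv.symm⟩
    · simp only [Finset.mem_insert, Finset.mem_singleton, not_or]
      exact ⟨huv, hwu.symm, hzu.symm⟩
  have s1 := hsplit u ((hmA u).2 hxu)
  have s2 := hsplit v ((hmA v).2 hxv)
  have s3 := hsplit w ((hmA w).2 hxw)
  have s4 := hsplit z ((hmA z).2 hxz)
  rw [hsum] at hdisj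
  have hw' : ¬ (G.Adj u w ∧ G.Adj v w) := fun hh =>
    hcon u v x w huv hnuv hxw.ne hxu.symm hh.1 hxv.symm hh.2
  have hz' : ¬ (G.Adj u z ∧ G.Adj v z) := fun hh =>
    hcon u v x z huv hnuv hxz.ne hxu.symm hh.1 hxv.symm hh.2
  rw [hcnt] at s1 s2 s3 s4
  have i1 : ¬ G.Adj u u := G.loopless.irrefl u
  have i2 : ¬ G.Adj v v := G.loopless.irrefl v
  have i3 : ¬ G.Adj w w := G.loopless.irrefl w
  have i4 : ¬ G.Adj z z := G.loopless.irrefl z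
  simp only [G.adj_comm w u, G.adj_comm w v, G.adj_comm z u, G.adj_comm z v, G.adj_comm z w,
    G.adj_comm v u, i1, i2, i3, i4, hnuv, if_false] at s1 s2 s3 s4
  by_cases b1 : G.Adj u w <;> by_cases b2 : G.Adj v w <;> by_cases b3 : G.Adj u z <;>
    by_cases b4 : G.Adj v z <;> simp only [b1, b2, b3, b4, if_true, if_false] at s1 s2 s3 s4 <;>
    first
      | exact hw' ⟨b1, b2⟩
      | exact hz' ⟨b3, b4⟩
      | (split_ifs at s3 s4 <;> omega)

theorem l2_reg {G : SimpleGraph ℕ} (h : EB G 20) (hG : ¬ Good 2 G)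
    (hall : ∀ v u, G.Adj v u → deg G v = 4) : False := by
  obtain ⟨S, hS⟩ := support h
  have hcard := support_card (d := 4) h (fun v u hvu => (hall v u hvu).ge) hS
  have hS' : ∀ u v, G.Adj u v → u ∈ S := fun u v huv => (hS u).2 ⟨v, huv⟩
  have hE := eb_of_deg h S 4 hS' (fun v hv => by
    obtain ⟨u, hu⟩ := (hS v).1 hv
    exact (hall v u hu).le)
  rcases S.eq_empty_or_nonempty with rfl | ⟨x, hx⟩
  · exact ng1 hG 0 (lvl1 14 le_rfl _ ((eb_del_le hE 0).mono (by simp)))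
  · obtain ⟨u, hu⟩ := (hS x).1 hx
    have hdx := hall x u hu
    by_cases hc : S.card = 10
    · by_cases hcl : ∀ u v, G.Adj x u → G.Adj x v → u ≠ v → G.Adj u v
      · exact l2_clique h hG hall hdx hcl
      · push Not at hcl
        obtain ⟨p, q, hp, hq, hpq, hn⟩ := hcl
        obtain ⟨a, b, t1, t2, k1, k2, k3, k4, k5, k6, k7⟩ :=
          exists_pair h hall hS' hc hp hq hpq hn
        exact l2_pair h hG hall hS' hc k1 k2 k3 k4 k5 k6 k7
    · exact ng1 hG x (lvl1 14 le_rfl _ ((eb_del hE x).2.mono (by omega)))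

theorem l2_main {G : SimpleGraph ℕ} (h : EB G 20) (h3 : R3 G) (hG : ¬ Good 2 G) : False := by
  have h6 : ∀ a, deg G a ≤ 5 := by
    intro a
    by_contra hh
    exact ng1 hG a (lvl1 14 le_rfl _ ((eb_del h a).2.mono (by omega)))
  have h4 : ∀ a, deg G a ≤ 4 := by
    intro a
    by_contra hh
    have := h6 a
    exact l2_5 h h3 hG (a := a) (by omega)
  by_cases hc : ∃ v, deg G v = 3
  · obtain ⟨v, hv⟩ := hc
    by_cases hvt : ∃ a, G.Adj v a ∧ deg G a ≠ 3
    · obtain ⟨a, hva, ha⟩ := hvt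
      have := h3 a v hva.symm
      have := h4 a
      exact l2_4 h h3 hG h4 (by omega) hva.symm hv
    · push Not at hvt
      exact l2_3 h hG hv hvt
  · refine l2_reg h hG (fun v u hvu => ?_)
    have := h3 v u hvu
    have := h4 v
    have h3' : deg G v ≠ 3 := fun hh => hc ⟨v, hh⟩
    omega

theorem lvl2 : ∀ m ≤ 20, ∀ G, EB G m → Good 2 G := by
  intro m
  induction m with
  | zero => exact fun _ G hG => ⟨0, lvl1 0 (by omega) _ (eb_del_le hG 0)⟩
  | succ m ih =>
    intro hm G hG
    by_contra hn
    exact l2_main (hG.mono (by omega)) (reduced (ih (by omega)) hG hn) hn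

end TA

theorem stmt6 {V : Type*} [Fintype V] (G : SimpleGraph V)
    (hV : 13 ≤ Fintype.card V) (hE : G.edgeSet.ncard ≤ 20) : G.TwoApex := by
  classical
  let e : V ↪ ℕ := (Fintype.equivFin V).toEmbedding.trans Fin.valEmbedding
  have hmap : (G.map e).edgeSet = Set.image e.sym2Map G.edgeSet := SimpleGraph.edgeSet_map e G
  have hfin : G.edgeSet.Finite := Set.toFinite _
  have hEB : TA.EB (G.map e) 20 := by
    refine ⟨?_, ?_⟩
    · rw [hmap]
      exact hfin.image _
    · rw [hmap]
      exact (Set.ncard_image_le hfin).trans hE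
  obtain ⟨a, b, hab⟩ := TA.lvl2 20 le_rfl _ hEB
  refine ⟨e ⁻¹' {a, b}, ?_, ?_⟩
  · have h1 : (e ⁻¹' {a, b}).ncard ≤ ({a, b} : Set ℕ).ncard := by
      rw [← Set.ncard_image_of_injective _ e.injective]
      exact Set.ncard_le_ncard (Set.image_preimage_subset _ _) (Set.toFinite _)
    exact h1.trans ((Set.ncard_insert_le a {b}).trans (by rw [Set.ncard_singleton]))
  · have hg : Function.Injective (fun v : ↥(e ⁻¹' {a, b})ᶜ => e v.1) :=
      fun p q hpq => Subtype.ext (e.injective hpq)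
    have hadj : ∀ p q : ↥(e ⁻¹' {a, b})ᶜ, (G.induce (e ⁻¹' {a, b})ᶜ).Adj p q →
        (TA.del (TA.del (G.map e) a) b).Adj (e p.1) (e q.1) := by
      intro p q hpq
      have hp := p.2
      have hq := q.2
      simp only [Set.mem_compl_iff, Set.mem_preimage, Set.mem_insert_iff, Set.mem_singleton_iff,
        not_or] at hp hq
      have : (G.map e).Adj (e p.1) (e q.1) := by
        rw [SimpleGraph.map_adj_apply]
        exact hpq
      exact ⟨⟨this, hp.1, hq.1⟩, hp.2, hq.2⟩
    exact ⟨fun hm => hab.1 (TA.minor_map _ hg hadj hm), fun hm => hab.2 (TA.minor_map _ hg hadj hm)⟩
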